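/- Fix an odd integer p ≥ 5, let R > 0 and C₀ > 0, and let ε₀ > 0 be sufficiently small depending on p, R, C₀. Let u be an exterior solution on {r > R + |t|} with data (u₀, u₁) such that: ‖(u₀,u₁)‖_{H(R)} ≤ ε₀; for every ρ ≥ R one has ‖u‖_{L²L⁸(ρ)} + ‖u‖_{L³L⁶(ρ)} + sup_{t∈ℝ} ‖(u(t,·), ∂_t u(t,·))‖_{H(ρ+|t|)} ≤ C₀‖(u₀,u₁)‖_{H(ρ)}; and the exterior energy of u vanishes. Assume moreover that for every t ∈ ℝ the function r ↦ u(t,r) is not identically 0 on (R+|t|, ∞). Then u never vanishes on the region {(t,r) : r > R+|t|} and has a constant sign there (either u(t,r) > 0 for all such (t,r), or u(t,r) < 0 for all such (t,r)); furthermore, there is a constant C > 0 (depending on p, R, C₀, ε₀) such that for every t ∈ ℝ there exists ℓ(t) ≠ 0 with |r²·u(t,r) − ℓ(t)| ≤ C·r⁴·|u(t,r)|³ for all r > R + |t|. -/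

import Mathlib

open MeasureTheory Filter Set
open scoped ENNReal

/-- The exterior energy norm `‖(v,w)‖_{H(R)} = (∫_R^∞ (|v'|² + |w|²) r³ dr)^{1/2}`. -/
noncomputable def eH (R : ℝ) (v w : ℝ → ℝ) : ℝ≥0∞ :=
  ((∫⁻ r in Ioi R, ENNReal.ofReal ((deriv v r) ^ 2 * r ^ 3)) +
      ∫⁻ r in Ioi R, ENNReal.ofReal ((w r) ^ 2 * r ^ 3)) ^ (1 / 2 : ℝ)

/-- The exterior spacetime norm `‖u‖_{L^aL^b(R)}` over the region `{r > R + |t|}`. -/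
noncomputable def eLL (a b R : ℝ) (u : ℝ → ℝ → ℝ) : ℝ≥0∞ :=
  (∫⁻ t : ℝ,
      (∫⁻ r in Ioi (R + |t|), ENNReal.ofReal (|u t r| ^ b * r ^ 3)) ^ (a / b)) ^ (1 / a)

/-- The time derivative `∂_t u` of a function of `(t,r)`. -/
noncomputable def dtu (u : ℝ → ℝ → ℝ) (t r : ℝ) : ℝ := deriv (fun s => u s r) t

/-- `u` is an exterior solution of `∂_t²u - ∂_r²u - (3/r)∂_r u = |u|^{p-1}u`
on `{r > R + |t|}`, of smoothness class `C^n`. -/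
def IsExtSol (p : ℕ) (n : ℕ∞) (R : ℝ) (u : ℝ → ℝ → ℝ) : Prop :=
  ContDiffOn ℝ n (fun q : ℝ × ℝ => u q.1 q.2) {q : ℝ × ℝ | R + |q.1| < q.2} ∧
  ∀ t r : ℝ, R + |t| < r →
    deriv (fun s => dtu u s r) t - deriv (deriv (u t)) r - (3 / r) * deriv (u t) r
      = |u t r| ^ (p - 1) * u t r

/-- The exterior energy of `u` outside `{r > R + |t|}` vanishes as `t → ±∞`. -/
def ExtEnergyVanishes (R : ℝ) (u : ℝ → ℝ → ℝ) : Prop :=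
  Tendsto (fun t : ℝ => ∫ r in Ioi (R + |t|),
      ((dtu u t r) ^ 2 + (deriv (u t) r) ^ 2) * r ^ 3) atTop (nhds 0) ∧
  Tendsto (fun t : ℝ => ∫ r in Ioi (R + |t|),
      ((dtu u t r) ^ 2 + (deriv (u t) r) ^ 2) * r ^ 3) atBot (nhds 0)

/-- `sup_{t∈ℝ} ‖(u(t,·), ∂_t u(t,·))‖_{H(R+|t|)}`. -/
noncomputable def supH (R : ℝ) (u : ℝ → ℝ → ℝ) : ℝ≥0∞ :=
  ⨆ t : ℝ, eH (R + |t|) (u t) (fun r => dtu u t r)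

noncomputable def LL (x y : ℝ) : ℝ × ℝ →L[ℝ] ℝ :=
  x • ContinuousLinearMap.fst ℝ ℝ ℝ + y • ContinuousLinearMap.snd ℝ ℝ ℝ

lemma LL_apply (x y : ℝ) (v : ℝ × ℝ) : LL x y v = x * v.1 + y * v.2 := by simp [LL]

lemma LL_cont (f g : ℝ → ℝ) (hf : Continuous f) (hg : Continuous g) :
    Continuous (fun x => LL (f x) (g x)) := by
  unfold LL
  exact (hf.smul continuous_const).add (hg.smul continuous_const)

lemma param_fderiv (k k' w α : ℝ → ℝ) (b : ℝ) (hk : ∀ x, HasDerivAt k (k' x) x)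
    (hk' : Continuous k') (hw : Continuous w) (hα : Continuous α) (q : ℝ × ℝ) :
    HasFDerivAt (fun q : ℝ × ℝ => ∫ θ in (0:ℝ)..b, k (q.2 * α θ - q.1) * w θ)
      (LL (-∫ θ in (0:ℝ)..b, k' (q.2 * α θ - q.1) * w θ)
        (∫ θ in (0:ℝ)..b, k' (q.2 * α θ - q.1) * (α θ * w θ))) q := by
  have hkc : Continuous k := continuous_iff_continuousAt.2 fun x => (hk x).continuousAt
  set F' : ℝ × ℝ → ℝ → ℝ × ℝ →L[ℝ] ℝ := fun q θ =>
    LL (-(k' (q.2 * α θ - q.1) * w θ)) (k' (q.2 * α θ - q.1) * (α θ * w θ)) with hF'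
  have hF'c : Continuous (fun z : (ℝ × ℝ) × ℝ => F' z.1 z.2) := by
    simp only [hF', LL]
    fun_prop
  have hK : IsCompact (Metric.closedBall q 1 ×ˢ uIcc 0 b) :=
    (isCompact_closedBall q 1).prod isCompact_uIcc
  obtain ⟨C, hC⟩ := hK.exists_bound_of_continuousOn hF'c.continuousOn
  have main := intervalIntegral.hasFDerivAt_integral_of_dominated_of_fderiv_le
    (μ := volume) (a := 0) (b := b) (𝕜 := ℝ) (bound := fun _ => C)
    (F := fun (q : ℝ × ℝ) θ => k (q.2 * α θ - q.1) * w θ) (F' := F') (x₀ := q)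
    (Metric.closedBall_mem_nhds q one_pos)
    (Eventually.of_forall fun x => (by fun_prop : Continuous _).aestronglyMeasurable)
    ((by fun_prop : Continuous _).intervalIntegrable _ _)
    ((hF'c.comp (Continuous.prodMk_right q)).aestronglyMeasurable)
    (Eventually.of_forall fun t ht x hx => hC (x, t) ⟨hx, uIoc_subset_uIcc ht⟩)
    (by simp)
    (Eventually.of_forall fun t ht x hx => by
      have h1 : HasFDerivAt (fun q : ℝ × ℝ => q.2 * α t - q.1)
          (α t • ContinuousLinearMap.snd ℝ ℝ ℝ - ContinuousLinearMap.fst ℝ ℝ ℝ) x :=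
        (hasFDerivAt_snd.mul_const (α t)).sub hasFDerivAt_fst
      have h2 := ((hk (x.2 * α t - x.1)).comp_hasFDerivAt x h1).mul_const (w t)
      refine h2.congr_fderiv ?_
      ext <;> simp [hF', LL] <;> ring)
  refine main.congr_fderiv ?_
  have hint : IntervalIntegrable (F' q) volume 0 b :=
    (hF'c.comp (Continuous.prodMk_right q)).intervalIntegrable _ _
  ext
  · rw [ContinuousLinearMap.comp_apply, ContinuousLinearMap.intervalIntegral_apply hint]
    simp [hF', LL]
  · rw [ContinuousLinearMap.comp_apply, ContinuousLinearMap.intervalIntegral_apply hint]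
    simp [hF', LL]

lemma param_deriv (k k' w α : ℝ → ℝ) (b : ℝ) (hk : ∀ x, HasDerivAt k (k' x) x)
    (hk' : Continuous k') (hw : Continuous w) (hα : Continuous α) (s : ℝ) :
    HasDerivAt (fun s : ℝ => ∫ θ in (0:ℝ)..b, k (s * α θ) * w θ)
      (∫ θ in (0:ℝ)..b, k' (s * α θ) * (α θ * w θ)) s := by
  have h := (param_fderiv k k' w α b hk hk' hw hα (0, s)).comp_hasDerivAt s
    ((hasDerivAt_const s (0:ℝ)).prodMk (hasDerivAt_id s))
  simpa [LL, Function.comp_def] using h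

lemma param_cont (k w α : ℝ → ℝ) (b : ℝ) (hk : Continuous k) (hw : Continuous w)
    (hα : Continuous α) :
    Continuous (fun q : ℝ × ℝ => ∫ θ in (0:ℝ)..b, k (q.2 * α θ - q.1) * w θ) := by
  apply intervalIntegral.continuous_parametric_intervalIntegral_of_continuous'
  simp only [Function.uncurry_def]
  fun_prop

lemma param_cont1 (k w α : ℝ → ℝ) (b : ℝ) (hk : Continuous k) (hw : Continuous w)
    (hα : Continuous α) :
    Continuous (fun s : ℝ => ∫ θ in (0:ℝ)..b, k (s * α θ) * w θ) := by
  apply intervalIntegral.continuous_parametric_intervalIntegral_of_continuous'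
  simp only [Function.uncurry_def]
  fun_prop

/- Archimedes identity -/
lemma cos_pow_eq_sin_pow (k : ℕ) :
    ∫ x in (0:ℝ)..(Real.pi/2), Real.cos x ^ k = ∫ x in (0:ℝ)..(Real.pi/2), Real.sin x ^ k := by
  have := intervalIntegral.integral_comp_sub_left (a := 0) (b := Real.pi/2)
    (fun x => Real.sin x ^ k) (Real.pi/2)
  simpa [Real.sin_pi_div_two_sub] using this

lemma S_rec (k : ℕ) : ∫ x in (0:ℝ)..(Real.pi/2), Real.sin x ^ (k+2)
    = (k+1)/(k+2) * ∫ x in (0:ℝ)..(Real.pi/2), Real.sin x ^ k := by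
  rw [integral_sin_pow]; simp

lemma S_prod (k : ℕ) : (∫ x in (0:ℝ)..(Real.pi/2), Real.sin x ^ k) *
    (∫ x in (0:ℝ)..(Real.pi/2), Real.sin x ^ (k+1)) = Real.pi / (2 * (k+1)) := by
  induction k with
  | zero => simp
  | succ k ih =>
    rw [S_rec]
    have h2 : ((k:ℝ)+2) ≠ 0 := by positivity
    have h1 : ((k:ℝ)+1) ≠ 0 := by positivity
    calc _ = (k+1)/(k+2) * ((∫ x in (0:ℝ)..(Real.pi/2), Real.sin x ^ k) *
    (∫ x in (0:ℝ)..(Real.pi/2), Real.sin x ^ (k+1))) := by ring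
      _ = _ := by rw [ih]; push_cast; field_simp; ring

noncomputable def lhsA (g : ℝ → ℝ) : ℝ := (2/Real.pi) * ∫ θ in (0:ℝ)..(Real.pi/2),
  (∫ φ in (0:ℝ)..(Real.pi/2), g (Real.cos θ * Real.sin φ)) * (Real.cos θ * Real.sin θ ^ 2)
noncomputable def rhsA (g : ℝ → ℝ) : ℝ := (1/2) * ∫ y in (0:ℝ)..1, g y * (1 - y^2)

lemma inner_cont (g : ℝ → ℝ) (hg : Continuous g) :
    Continuous fun θ => (∫ φ in (0:ℝ)..(Real.pi/2), g (Real.cos θ * Real.sin φ)) *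
      (Real.cos θ * Real.sin θ ^ 2) := by
  have : Continuous fun θ => (∫ φ in (0:ℝ)..(Real.pi/2), g (Real.cos θ * Real.sin φ)) := by
    apply intervalIntegral.continuous_parametric_intervalIntegral_of_continuous'
    simp only [Function.uncurry_def]
    fun_prop
  fun_prop

lemma lhsA_add (g h : ℝ → ℝ) (hg : Continuous g) (hh : Continuous h) :
    lhsA (fun x => g x + h x) = lhsA g + lhsA h := by
  unfold lhsA
  rw [← mul_add, ← intervalIntegral.integral_add ((inner_cont g hg).intervalIntegrable _ _)
    ((inner_cont h hh).intervalIntegrable _ _)]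
  congr 2; ext θ
  rw [intervalIntegral.integral_add]
  · ring
  · exact (by fun_prop : Continuous _).intervalIntegrable _ _
  · exact (by fun_prop : Continuous _).intervalIntegrable _ _

lemma rhsA_add (g h : ℝ → ℝ) (hg : Continuous g) (hh : Continuous h) :
    rhsA (fun x => g x + h x) = rhsA g + rhsA h := by
  unfold rhsA
  rw [← mul_add, ← intervalIntegral.integral_add]
  · congr 2; ext; ring
  · exact (by fun_prop : Continuous _).intervalIntegrable _ _
  · exact (by fun_prop : Continuous _).intervalIntegrable _ _

lemma A_monomial (a : ℝ) (k : ℕ) : lhsA (fun x => a * x^k) = rhsA (fun x => a * x^k) := by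
  have hS := S_prod k
  have hS' := S_rec (k+1)
  set S := fun k : ℕ => ∫ x in (0:ℝ)..(Real.pi/2), Real.sin x ^ k with hSd
  have hpi := Real.pi_ne_zero
  have h1 : ((k:ℝ)+1) ≠ 0 := by positivity
  have h3 : ((k:ℝ)+3) ≠ 0 := by positivity
  have e1 : lhsA (fun x => a * x^k) = (2/Real.pi) * (a * S k * (S (k+1) - S (k+3))) := by
    unfold lhsA
    congr 1
    have : ∀ θ, (∫ φ in (0:ℝ)..(Real.pi/2), a * (Real.cos θ * Real.sin φ)^k) *
      (Real.cos θ * Real.sin θ ^ 2) = (a * S k) * (Real.cos θ ^ (k+1) - Real.cos θ ^ (k+3)) := by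
      intro θ
      simp only [mul_pow, hSd]
      rw [intervalIntegral.integral_const_mul, intervalIntegral.integral_const_mul,
        Real.sin_sq]
      ring
    simp only [this]
    rw [intervalIntegral.integral_const_mul, intervalIntegral.integral_sub]
    · simp only [hSd, cos_pow_eq_sin_pow]
    · exact (by fun_prop : Continuous _).intervalIntegrable _ _
    · exact (by fun_prop : Continuous _).intervalIntegrable _ _
  have e2 : rhsA (fun x => a * x^k) = (1/2) * (a * (1/(k+1) - 1/(k+3))) := by
    unfold rhsA
    congr 1
    have : ∀ y : ℝ, a * y^k * (1 - y^2) = a * (y^k - y^(k+2)) := by intro y; ring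
    simp only [this]
    rw [intervalIntegral.integral_const_mul, intervalIntegral.integral_sub]
    · rw [integral_pow, integral_pow]; push_cast; simp; left; ring
    · exact (by fun_prop : Continuous _).intervalIntegrable _ _
    · exact (by fun_prop : Continuous _).intervalIntegrable _ _
  have e3 : S (k+3) = ((k:ℝ)+2)/(k+3) * S (k+1) := by
    have := hS'
    simp only [hSd]
    rw [show k + 3 = k+1+2 from rfl, this]; push_cast; congr 1; ring
  rw [e1, e2, e3]
  have : S k * S (k+1) = Real.pi / (2 * (k+1)) := hS
  have e4 : 2 / Real.pi * (a * S k * (S (k+1) - ((k:ℝ)+2)/(k+3) * S (k+1)))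
    = 2 / Real.pi * (a * (S k * S (k+1)) * (1 - ((k:ℝ)+2)/(k+3))) := by ring
  rw [e4, this]
  field_simp
  ring

lemma A_poly (P : Polynomial ℝ) : lhsA (fun x => P.eval x) = rhsA (fun x => P.eval x) := by
  induction P using Polynomial.induction_on' with
  | add p q hp hq =>
    simp only [Polynomial.eval_add]
    rw [lhsA_add _ _ p.continuous q.continuous, rhsA_add _ _ p.continuous q.continuous, hp, hq]
  | monomial n a => simpa using A_monomial a n

lemma lhsA_bound (g : ℝ → ℝ) (ε : ℝ) (hg : ∀ x ∈ Icc (0:ℝ) 1, |g x| ≤ ε) :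
    |lhsA g| ≤ 2 * ε := by
  have hε : 0 ≤ ε := (abs_nonneg _).trans (hg 0 (by simp))
  have hpi := Real.pi_pos
  have hin : ∀ θ ∈ uIoc 0 (Real.pi/2), ‖(∫ φ in (0:ℝ)..(Real.pi/2), g (Real.cos θ * Real.sin φ)) *
      (Real.cos θ * Real.sin θ ^ 2)‖ ≤ ε * (Real.pi/2) := by
    intro θ hθ
    rw [uIoc_of_le (by positivity)] at hθ
    have c0 : 0 ≤ Real.cos θ := Real.cos_nonneg_of_mem_Icc ⟨by linarith [hθ.1], by linarith [hθ.2]⟩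
    have h1 : ‖∫ φ in (0:ℝ)..(Real.pi/2), g (Real.cos θ * Real.sin φ)‖ ≤ ε * |Real.pi/2 - 0| := by
      apply intervalIntegral.norm_integral_le_of_norm_le_const
      intro φ hφ
      rw [uIoc_of_le (by positivity)] at hφ
      have s0 : 0 ≤ Real.sin φ := Real.sin_nonneg_of_mem_Icc ⟨by linarith [hφ.1], by linarith [hφ.2]⟩
      apply hg
      refine ⟨by positivity, ?_⟩
      exact mul_le_one₀ (Real.cos_le_one _) s0 (Real.sin_le_one _)
    rw [sub_zero, abs_of_pos (by positivity)] at h1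
    rw [norm_mul]
    have h2 : ‖Real.cos θ * Real.sin θ ^ 2‖ ≤ 1 := by
      rw [norm_mul, norm_pow, Real.norm_eq_abs, Real.norm_eq_abs]
      exact mul_le_one₀ (Real.abs_cos_le_one _) (by positivity)
        (pow_le_one₀ (abs_nonneg _) (Real.abs_sin_le_one _))
    calc _ ≤ ε * (Real.pi/2) * 1 := mul_le_mul h1 h2 (norm_nonneg _) (by positivity)
      _ = _ := by ring
  have := intervalIntegral.norm_integral_le_of_norm_le_const hin
  rw [sub_zero, abs_of_pos (by positivity), Real.norm_eq_abs] at this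
  unfold lhsA
  rw [abs_mul, abs_of_pos (by positivity)]
  calc _ ≤ 2/Real.pi * (ε * (Real.pi/2) * (Real.pi/2)) := by gcongr
    _ = ε * (Real.pi / 2) := by field_simp
    _ ≤ _ := by nlinarith [Real.pi_lt_four]

lemma rhsA_bound (g : ℝ → ℝ) (ε : ℝ) (hg : ∀ x ∈ Icc (0:ℝ) 1, |g x| ≤ ε) :
    |rhsA g| ≤ ε := by
  have hε : 0 ≤ ε := (abs_nonneg _).trans (hg 0 (by simp))
  have : ‖∫ y in (0:ℝ)..1, g y * (1 - y^2)‖ ≤ ε * |1 - 0| := by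
    apply intervalIntegral.norm_integral_le_of_norm_le_const
    intro y hy
    rw [uIoc_of_le zero_le_one] at hy
    rw [norm_mul]
    have h2 : ‖1 - y^2‖ ≤ 1 := by
      rw [Real.norm_eq_abs, abs_le]; constructor <;> nlinarith [hy.1, hy.2]
    calc _ ≤ ε * 1 := mul_le_mul (hg y ⟨hy.1.le, hy.2⟩) h2 (norm_nonneg _) hε
      _ = _ := by ring
  unfold rhsA
  rw [Real.norm_eq_abs] at this
  rw [abs_mul, abs_of_pos (by norm_num)]
  norm_num at this
  linarith

lemma A_id (g : ℝ → ℝ) (hg : Continuous g) : lhsA g = rhsA g := by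
  by_contra hne
  have hpos : 0 < |lhsA g - rhsA g| := abs_pos.2 (sub_ne_zero.2 hne)
  obtain ⟨P, hP⟩ := exists_polynomial_near_of_continuousOn 0 1 g hg.continuousOn
    (|lhsA g - rhsA g| / 4) (by positivity)
  set h := fun x => g x - P.eval x
  have hh : Continuous h := hg.sub P.continuous
  have e : g = fun x => P.eval x + h x := by ext x; simp [h]
  have hb : ∀ x ∈ Icc (0:ℝ) 1, |h x| ≤ |lhsA g - rhsA g| / 4 := by
    intro x hx; have := (hP x hx).le; rw [abs_sub_comm] at this; exact this
  have e1 : lhsA g - rhsA g = lhsA h - rhsA h := by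
    conv_lhs => rw [e]
    rw [lhsA_add _ _ P.continuous hh, rhsA_add _ _ P.continuous hh, A_poly]; ring
  have b1 := lhsA_bound h _ hb
  have b2 := rhsA_bound h _ hb
  have : |lhsA h - rhsA h| ≤ |lhsA h| + |rhsA h| := abs_sub _ _
  rw [← e1] at this
  linarith

structure IsBump (α β : ℝ) (g : ℝ → ℝ) : Prop where
  smooth : ContDiff ℝ 2 g
  nonneg : ∀ x, 0 ≤ g x
  left : ∀ x, x ≤ α → g x = 0
  right : ∀ x, β ≤ x → g x = 0
  int_one : ∫ x in α..β, g x = 1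

noncomputable def psi (m : ℝ → ℝ) (s : ℝ) : ℝ :=
  (2/Real.pi) * s * ∫ φ in (0:ℝ)..(Real.pi/2), m (s * Real.sin φ)

lemma trig_half {φ : ℝ} (h : φ ∈ uIcc 0 (Real.pi/2)) :
    0 ≤ Real.sin φ ∧ Real.sin φ ≤ 1 ∧ 0 ≤ Real.cos φ := by
  have hpi := Real.pi_pos
  rw [uIcc_of_le (by positivity)] at h
  exact ⟨Real.sin_nonneg_of_mem_Icc ⟨h.1, by linarith [h.2]⟩, Real.sin_le_one _,
    Real.cos_nonneg_of_mem_Icc ⟨by linarith [h.1], h.2⟩⟩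

section
variable {α β : ℝ} {g : ℝ → ℝ}

lemma IsBump.deriv1 (hg : IsBump α β g) (x : ℝ) : HasDerivAt g (deriv g x) x :=
  ((hg.smooth.differentiable (by norm_num)) x).hasDerivAt

lemma IsBump.contD (hg : IsBump α β g) : ContDiff ℝ 1 (deriv g) := by
  have h := hg.smooth
  rw [show (2 : WithTop ℕ∞) = 1 + 1 by norm_num, contDiff_succ_iff_deriv] at h
  exact h.2.2

lemma IsBump.deriv2 (hg : IsBump α β g) (x : ℝ) : HasDerivAt (deriv g) (deriv (deriv g) x) x :=
  ((hg.contD.differentiable (by norm_num)) x).hasDerivAt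

lemma IsBump.cont (hg : IsBump α β g) : Continuous g := hg.smooth.continuous
lemma IsBump.cont1 (hg : IsBump α β g) : Continuous (deriv g) := hg.contD.continuous
lemma IsBump.cont2 (hg : IsBump α β g) : Continuous (deriv (deriv g)) :=
  hg.contD.continuous_deriv (by norm_num)

lemma psi_zero (hα : 0 < α) (hg : IsBump α β g) {s : ℝ} (hs : s ≤ α) : psi g s = 0 := by
  have : ∫ φ in (0:ℝ)..(Real.pi/2), g (s * Real.sin φ) = 0 := by
    rw [intervalIntegral.integral_congr (g := fun _ => (0:ℝ))]
    · simp
    · intro φ hφ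
      obtain ⟨h0, h1, _⟩ := trig_half hφ
      apply hg.left
      rcases le_total s 0 with h | h
      · nlinarith
      · nlinarith
  simp [psi, this]

lemma psi_nonneg (hα : 0 < α) (hg : IsBump α β g) (s : ℝ) : 0 ≤ psi g s := by
  rcases le_total s α with h | h
  · rw [psi_zero hα hg h]
  · have hpi := Real.pi_pos
    have : 0 ≤ ∫ φ in (0:ℝ)..(Real.pi/2), g (s * Real.sin φ) :=
      intervalIntegral.integral_nonneg (by positivity) fun _ _ => hg.nonneg _
    have hs : 0 ≤ s := hα.le.trans h
    unfold psi; positivity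

lemma psi_derivs (hg : IsBump α β g) : ∃ f1 f2 : ℝ → ℝ,
    (∀ s, HasDerivAt (psi g) (f1 s) s) ∧ (∀ s, HasDerivAt f1 (f2 s) s) ∧ Continuous f2 := by
  set I1 := fun s : ℝ => ∫ φ in (0:ℝ)..(Real.pi/2), deriv g (s * Real.sin φ) * (Real.sin φ * 1)
  set I2 := fun s : ℝ => ∫ φ in (0:ℝ)..(Real.pi/2),
    deriv (deriv g) (s * Real.sin φ) * (Real.sin φ * (Real.sin φ * 1))
  set I0 := fun s : ℝ => ∫ φ in (0:ℝ)..(Real.pi/2), g (s * Real.sin φ) * 1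
  have h0 : ∀ s, HasDerivAt I0 (I1 s) s := fun s => param_deriv g (deriv g) (fun _ => 1) Real.sin _
    hg.deriv1 hg.cont1 continuous_const Real.continuous_sin s
  have h1 : ∀ s, HasDerivAt I1 (I2 s) s := fun s => param_deriv (deriv g) (deriv (deriv g))
    (fun x => Real.sin x * 1) Real.sin _
    hg.deriv2 hg.cont2 (by fun_prop) Real.continuous_sin s
  have c1 : Continuous I1 := continuous_iff_continuousAt.2 fun s => (h1 s).continuousAt
  have c2 : Continuous I2 := param_cont1 _ _ _ _ hg.cont2 (by fun_prop) Real.continuous_sin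
  have e : psi g = fun s => (2/Real.pi) * s * I0 s := by
    ext s; simp [psi, I0]
  refine ⟨fun s => (2/Real.pi) * (I0 s + s * I1 s), fun s => (2/Real.pi) * (I1 s + (I1 s + s * I2 s)),
    fun s => ?_, fun s => ?_, by fun_prop⟩
  · rw [e]
    have := ((hasDerivAt_id s).const_mul (2/Real.pi)).mul (h0 s)
    refine this.congr_deriv ?_
    simp; ring
  · have := ((h0 s).add ((hasDerivAt_id s).mul (h1 s))).const_mul (2/Real.pi)
    refine this.congr_deriv ?_
    simp

lemma psi_cont (hg : IsBump α β g) : Continuous (psi g) := by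
  obtain ⟨f1, f2, h, _⟩ := psi_derivs hg
  exact continuous_iff_continuousAt.2 fun s => (h s).continuousAt

lemma bump_int_full (hα : 0 < α) (hαβ : α < β) (hg : IsBump α β g) {S : ℝ} (hS : β ≤ S) :
    ∫ x in (0:ℝ)..S, g x = 1 := by
  have i : ∀ a b, IntervalIntegrable g volume a b := fun a b => hg.cont.intervalIntegrable a b
  rw [← intervalIntegral.integral_add_adjacent_intervals (i 0 α) (i α S),
    ← intervalIntegral.integral_add_adjacent_intervals (i α β) (i β S), hg.int_one]
  have h1 : ∫ x in (0:ℝ)..α, g x = 0 := by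
    rw [intervalIntegral.integral_congr (g := fun _ => (0:ℝ))]
    · simp
    · intro x hx; rw [uIcc_of_le hα.le] at hx; exact hg.left x hx.2
  have h2 : ∫ x in β..S, g x = 0 := by
    rw [intervalIntegral.integral_congr (g := fun _ => (0:ℝ))]
    · simp
    · intro x hx; rw [uIcc_of_le hS] at hx; exact hg.right x hx.1
  rw [h1, h2]; norm_num

lemma bump_int_le (hα : 0 < α) (hαβ : α < β) (hg : IsBump α β g) {S : ℝ} (hS : 0 ≤ S) :
    ∫ x in (0:ℝ)..S, g x ≤ 1 := by
  have i : ∀ a b, IntervalIntegrable g volume a b := fun a b => hg.cont.intervalIntegrable a b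
  have h := bump_int_full hα hαβ hg (le_max_right S β)
  rw [← intervalIntegral.integral_add_adjacent_intervals (i 0 S) (i S _)] at h
  have := intervalIntegral.integral_nonneg (μ := volume) (le_max_left S β) fun x _ => hg.nonneg x
  linarith

lemma bump_subst (hg : IsBump α β g) (S : ℝ) :
    ∫ φ in (0:ℝ)..(Real.pi/2), g (S * Real.sin φ) * (S * Real.cos φ) = ∫ x in (0:ℝ)..S, g x := by
  have := intervalIntegral.integral_comp_mul_deriv (a := 0) (b := Real.pi/2)
    (f := fun φ => S * Real.sin φ) (f' := fun φ => S * Real.cos φ) (g := g)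
    (fun x _ => (Real.hasDerivAt_sin x).const_mul S) (by fun_prop) hg.cont
  simpa using this

lemma psi_int (hα : 0 < α) (hαβ : α < β) (hg : IsBump α β g) {S : ℝ} (hS : 0 ≤ S) :
    ∫ s in (0:ℝ)..S, psi g s ≤ (2/Real.pi) * S := by
  have hpi := Real.pi_pos
  have hgc := hg.cont
  have hgc1 := hg.cont1
  set J := fun s : ℝ => ∫ φ in (0:ℝ)..(Real.pi/2), g (s * Real.sin φ) * Real.cos φ ^ 2
  set J' := fun s : ℝ => ∫ φ in (0:ℝ)..(Real.pi/2),
    deriv g (s * Real.sin φ) * (Real.sin φ * Real.cos φ ^ 2)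
  have hJ : ∀ s, HasDerivAt J (J' s) s := fun s => param_deriv g (deriv g) (fun x => Real.cos x ^ 2)
    Real.sin _ hg.deriv1 hg.cont1 (by fun_prop) Real.continuous_sin s
  have hparts : ∀ s, s * J' s = - ∫ φ in (0:ℝ)..(Real.pi/2),
      g (s * Real.sin φ) * (Real.cos φ ^ 2 - Real.sin φ ^ 2) := by
    intro s
    have := intervalIntegral.integral_mul_deriv_eq_deriv_mul (a := 0) (b := Real.pi/2)
      (u := fun φ => Real.sin φ * Real.cos φ) (u' := fun φ => Real.cos φ ^ 2 - Real.sin φ ^ 2)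
      (v := fun φ => g (s * Real.sin φ)) (v' := fun φ => deriv g (s * Real.sin φ) * (s * Real.cos φ))
      (fun x _ => by
        refine ((Real.hasDerivAt_sin x).mul (Real.hasDerivAt_cos x)).congr_deriv ?_; ring)
      (fun x _ => (hg.deriv1 _).comp x ((Real.hasDerivAt_sin x).const_mul s))
      ((by fun_prop : Continuous _).intervalIntegrable _ _)
      ((by fun_prop : Continuous _).intervalIntegrable _ _)
    simp only [J']
    rw [← intervalIntegral.integral_const_mul]
    simp only [Real.sin_zero, Real.cos_pi_div_two, mul_zero, zero_mul, sub_zero, zero_sub] at this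
    rw [show (∫ φ in (0:ℝ)..(Real.pi/2), g (s * Real.sin φ) * (Real.cos φ ^ 2 - Real.sin φ ^ 2))
      = ∫ φ in (0:ℝ)..(Real.pi/2), (Real.cos φ ^ 2 - Real.sin φ ^ 2) * g (s * Real.sin φ) by
        congr 1; ext; ring]
    rw [← this]
    congr 1; ext; ring
  have hP : ∀ s, HasDerivAt (fun s => (2/Real.pi) * (s^2 * J s)) (psi g s) s := by
    intro s
    refine ((((hasDerivAt_pow 2 s)).mul (hJ s)).const_mul (2/Real.pi)).congr_deriv ?_
    have e1 : ∫ φ in (0:ℝ)..(Real.pi/2), g (s * Real.sin φ) = J s + J s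
        - ∫ φ in (0:ℝ)..(Real.pi/2), g (s * Real.sin φ) * (Real.cos φ ^ 2 - Real.sin φ ^ 2) := by
      simp only [J]
      rw [← intervalIntegral.integral_add, ← intervalIntegral.integral_sub]
      · congr 1; ext φ
        have := Real.sin_sq_add_cos_sq φ
        linear_combination (-(g (s * Real.sin φ))) * this
      all_goals exact (by fun_prop : Continuous _).intervalIntegrable _ _
    unfold psi
    rw [e1, sub_eq_add_neg, ← hparts s]
    simp; ring
  rw [intervalIntegral.integral_eq_sub_of_hasDerivAt (fun x _ => hP x)
    ((psi_cont hg).intervalIntegrable _ _)]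
  have hle : S^2 * J S ≤ S * 1 := by
    calc S^2 * J S = S * (S * J S) := by ring
      _ ≤ S * ∫ x in (0:ℝ)..S, g x := by
        gcongr
        rw [← bump_subst hg S]
        simp only [J]
        rw [← intervalIntegral.integral_const_mul]
        apply intervalIntegral.integral_mono_on (by positivity)
          ((by fun_prop : Continuous _).intervalIntegrable _ _)
          ((by fun_prop : Continuous _).intervalIntegrable _ _)
        intro φ hφ
        obtain ⟨_, _, h⟩ := trig_half (by rwa [uIcc_of_le (by positivity)])
        have h1 := Real.cos_le_one φ
        have := hg.nonneg (S * Real.sin φ)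
        have h2 : Real.cos φ ^ 2 ≤ Real.cos φ := by nlinarith
        calc S * (g (S * Real.sin φ) * Real.cos φ ^ 2)
            ≤ S * (g (S * Real.sin φ) * Real.cos φ) := by gcongr
          _ = _ := by ring
      _ ≤ S * 1 := by gcongr; exact bump_int_le hα hαβ hg hS
  calc _ = (2/Real.pi) * (S^2 * J S) := by simp
    _ ≤ (2/Real.pi) * (S * 1) := by gcongr
    _ = _ := by ring

lemma psi_tail (hα : 0 < α) (hαβ : α < β) (hg : IsBump α β g) {s : ℝ} (hs : 2 * β ≤ s) :
    2/Real.pi ≤ psi g s ∧ psi g s ≤ 2/Real.pi + (4/Real.pi) * (β^2/s^2) := by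
  have hpi := Real.pi_pos
  have hgc := hg.cont
  have hβ : 0 < β := hα.trans hαβ
  have hs0 : 0 < s := by linarith
  have h1 := bump_subst hg s
  rw [bump_int_full hα hαβ hg (by linarith : β ≤ s)] at h1
  have e : psi g s = 2/Real.pi * ∫ φ in (0:ℝ)..(Real.pi/2), s * g (s * Real.sin φ) := by
    unfold psi; rw [intervalIntegral.integral_const_mul]; ring
  have i1 : IntervalIntegrable (fun φ => s * g (s * Real.sin φ)) volume 0 (Real.pi/2) :=
    (by fun_prop : Continuous _).intervalIntegrable _ _
  have i2 : IntervalIntegrable (fun φ => g (s * Real.sin φ) * (s * Real.cos φ)) volume 0 (Real.pi/2) :=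
    (by fun_prop : Continuous _).intervalIntegrable _ _
  have lo : ∫ φ in (0:ℝ)..(Real.pi/2), g (s * Real.sin φ) * (s * Real.cos φ) ≤
      ∫ φ in (0:ℝ)..(Real.pi/2), s * g (s * Real.sin φ) := by
    apply intervalIntegral.integral_mono_on (by positivity) i2 i1
    intro φ hφ
    have := hg.nonneg (s * Real.sin φ)
    have h1 := Real.cos_le_one φ
    calc _ = s * g (s * Real.sin φ) * Real.cos φ := by ring
      _ ≤ s * g (s * Real.sin φ) * 1 := by gcongr
      _ = _ := by ring
  have hi : ∫ φ in (0:ℝ)..(Real.pi/2), s * g (s * Real.sin φ) ≤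
      ∫ φ in (0:ℝ)..(Real.pi/2), (1 + 2 * (β^2/s^2)) * (g (s * Real.sin φ) * (s * Real.cos φ)) := by
    apply intervalIntegral.integral_mono_on (by positivity) i1 (i2.const_mul _)
    intro φ hφ
    obtain ⟨a1, a2, a3⟩ := trig_half (by rwa [uIcc_of_le (by positivity)])
    rcases le_total β (s * Real.sin φ) with h | h
    · simp [hg.right _ h]
    · have hg0 := hg.nonneg (s * Real.sin φ)
      have b1 : Real.sin φ ≤ β / s := by rw [le_div_iff₀ hs0]; linarith
      have b2 : β / s ≤ 1/2 := by rw [div_le_iff₀ hs0]; linarith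
      have b3 := Real.sin_sq_add_cos_sq φ
      have b4 : Real.sin φ ^ 2 ≤ β^2/s^2 := by rw [← div_pow]; gcongr
      have b6 : Real.sin φ ^ 2 ≤ (1/2)^2 := by gcongr; linarith
      have b5 : 1/2 ≤ Real.cos φ := by
        by_contra hc; push Not at hc; nlinarith
      have b7 : 1 ≤ (1 + 2 * (β^2/s^2)) * Real.cos φ := by
        have : 1 - Real.cos φ ≤ β^2/s^2 := by nlinarith [Real.cos_le_one φ]
        nlinarith
      calc s * g (s * Real.sin φ) = s * g (s * Real.sin φ) * 1 := by ring
        _ ≤ s * g (s * Real.sin φ) * ((1 + 2 * (β^2/s^2)) * Real.cos φ) := by gcongr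
        _ = _ := by ring
  have hi2 : ∫ φ in (0:ℝ)..(Real.pi/2), (1 + 2 * (β^2/s^2)) * (g (s * Real.sin φ) * (s * Real.cos φ))
      = (1 + 2 * (β^2/s^2)) * 1 := by rw [intervalIntegral.integral_const_mul, h1]
  rw [hi2] at hi
  rw [h1] at lo
  rw [e]
  constructor
  · calc 2/Real.pi = 2/Real.pi * 1 := by ring
      _ ≤ _ := by gcongr
  · calc _ ≤ 2/Real.pi * ((1 + 2 * (β^2/s^2)) * 1) := by gcongr
      _ = _ := by ring

end

section
variable {α β : ℝ} {g h : ℝ → ℝ}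

lemma psi_diff_tail (hα : 0 < α) (hαβ : α < β) (hg : IsBump α β g) (hh : IsBump α β h) {s : ℝ}
    (hs : 2 * β ≤ s) : |psi g s - psi h s| ≤ (4/Real.pi) * (β^2/s^2) := by
  obtain ⟨a, b⟩ := psi_tail hα hαβ hg hs
  obtain ⟨c, d⟩ := psi_tail hα hαβ hh hs
  rw [abs_le]; constructor <;> linarith

lemma psi_diff_int0 (hα : 0 < α) (hαβ : α < β) (hg : IsBump α β g) (hh : IsBump α β h) (y : ℝ)
    (hy : 2 * β ≤ y) : ∫ s in (0:ℝ)..y, |psi g s - psi h s| ≤ 4 * β := by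
  have hpi := Real.pi_pos
  have hpi3 := Real.pi_gt_three
  have hβ : 0 < β := hα.trans hαβ
  have cg := psi_cont hg
  have ch := psi_cont hh
  have cc : Continuous fun s => |psi g s - psi h s| := by fun_prop
  rw [← intervalIntegral.integral_add_adjacent_intervals (cc.intervalIntegrable 0 (2*β))
    (cc.intervalIntegrable _ _)]
  have h1 : ∫ s in (0:ℝ)..(2*β), |psi g s - psi h s| ≤ (2/Real.pi) * (2*β) + (2/Real.pi) * (2*β) := by
    refine le_trans ?_ (add_le_add (psi_int hα hαβ hg (by linarith : 0 ≤ 2*β))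
      (psi_int hα hαβ hh (by linarith : 0 ≤ 2*β)))
    rw [← intervalIntegral.integral_add (cg.intervalIntegrable _ _) (ch.intervalIntegrable _ _)]
    apply intervalIntegral.integral_mono_on (by linarith) (cc.intervalIntegrable _ _)
      ((cg.add ch).intervalIntegrable _ _)
    intro s _
    have := psi_nonneg hα hg s
    have := psi_nonneg hα hh s
    show _ ≤ psi g s + psi h s
    rw [abs_le]; constructor <;> linarith
  have h2 : ∫ s in (2*β)..y, |psi g s - psi h s| ≤ (4/Real.pi) * β^2 * (1/(2*β)) := by
    have hd : ∀ x ∈ uIcc (2*β) y, HasDerivAt (fun s : ℝ => -((4/Real.pi) * β^2 * s⁻¹))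
        ((4/Real.pi) * (β^2/x^2)) x := by
      intro x hx
      rw [uIcc_of_le hy] at hx
      have hx0 : x ≠ 0 := by linarith [hx.1]
      refine ((hasDerivAt_inv hx0).const_mul _).neg.congr_deriv ?_
      field_simp
    have ii : IntervalIntegrable (fun x => (4/Real.pi) * (β^2/x^2)) volume (2*β) y := by
      apply ContinuousOn.intervalIntegrable
      intro x hx
      rw [uIcc_of_le hy] at hx
      have hx0 : x ≠ 0 := by linarith [hx.1]
      exact ContinuousAt.continuousWithinAt (by fun_prop (disch := positivity))
    have := intervalIntegral.integral_eq_sub_of_hasDerivAt hd ii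
    calc _ ≤ ∫ s in (2*β)..y, (4/Real.pi) * (β^2/s^2) := by
          apply intervalIntegral.integral_mono_on hy (cc.intervalIntegrable _ _) ii
          intro s hs; exact psi_diff_tail hα hαβ hg hh hs.1
      _ ≤ _ := by
        rw [this]
        have : 0 ≤ (4/Real.pi) * β^2 * y⁻¹ := by
          have : 0 < y := by linarith
          positivity
        simp only [one_div]
        linarith
  have h3 : (2/Real.pi) * (2*β) + (2/Real.pi) * (2*β) + (4/Real.pi) * β^2 * (1/(2*β))
      = 10 / Real.pi * β := by field_simp; ring
  have h4 : 10 / Real.pi ≤ 4 := by rw [div_le_iff₀ hpi]; linarith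
  nlinarith

lemma psi_diff_int (hα : 0 < α) (hαβ : α < β) (hg : IsBump α β g) (hh : IsBump α β h) (x y : ℝ)
    (hxy : x ≤ y) : ∫ s in x..y, |psi g s - psi h s| ≤ 4 * β := by
  have hβ : 0 < β := hα.trans hαβ
  have cg := psi_cont hg
  have ch := psi_cont hh
  have cc : Continuous fun s => |psi g s - psi h s| := by fun_prop
  have i : ∀ a b, IntervalIntegrable (fun s => |psi g s - psi h s|) volume a b :=
    fun a b => cc.intervalIntegrable a b
  have hneg : ∫ s in (min x 0)..0, |psi g s - psi h s| = 0 := by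
    rw [intervalIntegral.integral_congr (g := fun _ => (0:ℝ))]
    · simp
    · intro s hs
      rw [uIcc_of_le (min_le_right _ _)] at hs
      simp [psi_zero hα hg (hs.2.trans hα.le), psi_zero hα hh (hs.2.trans hα.le)]
  have hbig := psi_diff_int0 hα hαβ hg hh (max y (2*β)) (le_max_right _ _)
  have hmono : ∫ s in x..y, |psi g s - psi h s| ≤
      ∫ s in (min x 0)..(max y (2*β)), |psi g s - psi h s| := by
    apply intervalIntegral.integral_mono_interval (min_le_left _ _) hxy (le_max_left _ _)
    · exact Eventually.of_forall fun s => abs_nonneg _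
    · exact i _ _
  rw [← intervalIntegral.integral_add_adjacent_intervals (i (min x 0) 0) (i 0 (max y (2*β))), hneg] at hmono
  linarith

lemma psi_diff_decay (hα : 0 < α) (hαβ : α < β) (hg : IsBump α β g) (hh : IsBump α β h) :
    ∃ C, 0 ≤ C ∧ ∀ s, |psi g s - psi h s| ≤ C / (1 + s^2) := by
  have hpi := Real.pi_pos
  have hβ : 0 < β := hα.trans hαβ
  have cg := psi_cont hg
  have ch := psi_cont hh
  have cc : Continuous fun s => psi g s - psi h s := by fun_prop
  obtain ⟨C, hC⟩ := (isCompact_Icc (a := (0:ℝ)) (b := 2*β)).exists_bound_of_continuousOn cc.continuousOn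
  have hC0 : 0 ≤ C := (norm_nonneg _).trans (hC 0 ⟨le_rfl, by linarith⟩)
  refine ⟨C * (1 + (2*β)^2) + (4/Real.pi) * β^2 * (1/(2*β)^2 + 1), by positivity, fun s => ?_⟩
  rw [le_div_iff₀ (by positivity)]
  rcases le_total s 0 with h0 | h0
  · simp [psi_zero hα hg (h0.trans hα.le), psi_zero hα hh (h0.trans hα.le)]
    positivity
  rcases le_total s (2*β) with h1 | h1
  · have := hC s ⟨h0, h1⟩
    rw [Real.norm_eq_abs] at this
    have e : |psi g s - psi h s| * (1 + s^2) ≤ C * (1 + (2*β)^2) := by gcongr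
    have : 0 ≤ (4/Real.pi) * β^2 * (1/(2*β)^2 + 1) := by positivity
    linarith
  · have hs : 0 < s := by linarith
    have e : |psi g s - psi h s| * (1 + s^2) ≤ (4/Real.pi) * (β^2/s^2) * (1 + s^2) := by
      gcongr; exact psi_diff_tail hα hαβ hg hh h1
    have e2 : (4/Real.pi) * (β^2/s^2) * (1 + s^2) = (4/Real.pi) * β^2 * (1/s^2 + 1) := by
      field_simp
    have e3 : (4/Real.pi) * β^2 * (1/s^2 + 1) ≤ (4/Real.pi) * β^2 * (1/(2*β)^2 + 1) := by
      gcongr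
    have : 0 ≤ C * (1 + (2*β)^2) := by positivity
    linarith

end

lemma ftc_cont (f F : ℝ → ℝ) (a b : ℝ) (h : ∀ x ∈ uIcc a b, HasDerivAt F (f x) x)
    (hc : ContinuousOn f (uIcc a b)) : ∫ x in a..b, f x = F b - F a :=
  intervalIntegral.integral_eq_sub_of_hasDerivAt h hc.intervalIntegrable

lemma swap_cont (f : ℝ → ℝ → ℝ) (a b c d : ℝ) (hf : Continuous fun q : ℝ × ℝ => f q.1 q.2) :
    ∫ x in a..b, ∫ y in c..d, f x y = ∫ y in c..d, ∫ x in a..b, f x y := by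
  apply MeasureTheory.intervalIntegral_intervalIntegral_swap
  have h : IntegrableOn (fun q : ℝ × ℝ => f q.1 q.2) (uIcc a b ×ˢ uIcc c d) volume :=
    ContinuousOn.integrableOn_compact (isCompact_uIcc.prod isCompact_uIcc) hf.continuousOn
  exact h.mono_set (prod_mono uIoc_subset_uIcc uIoc_subset_uIcc)

section
variable {ψ ψ1 ψ2 : ℝ → ℝ}

lemma wave_id (h1 : ∀ x, HasDerivAt ψ1 (ψ2 x) x) (h2 : Continuous ψ2) (t r : ℝ) :
    3 * (∫ θ in (0:ℝ)..Real.pi, ψ1 (r * Real.cos θ - t) * (Real.cos θ * Real.sin θ ^ 2))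
      = r * ∫ θ in (0:ℝ)..Real.pi, ψ2 (r * Real.cos θ - t) * (Real.sin θ ^ 4) := by
  have hc1 : Continuous ψ1 := continuous_iff_continuousAt.2 fun x => (h1 x).continuousAt
  have hF : ∀ θ, HasDerivAt (fun θ => ψ1 (r * Real.cos θ - t) * Real.sin θ ^ 3)
      (3 * (ψ1 (r * Real.cos θ - t) * (Real.cos θ * Real.sin θ ^ 2)) -
        r * (ψ2 (r * Real.cos θ - t) * (Real.sin θ ^ 4))) θ := by
    intro θ
    have a : HasDerivAt (fun θ => r * Real.cos θ - t) (r * (-Real.sin θ)) θ :=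
      ((Real.hasDerivAt_cos θ).const_mul r).sub_const t
    refine (((h1 _).comp θ a).mul ((Real.hasDerivAt_sin θ).pow 3)).congr_deriv ?_
    simp; ring
  have := ftc_cont _ _ 0 Real.pi (fun x _ => hF x) (by fun_prop)
  rw [intervalIntegral.integral_sub, intervalIntegral.integral_const_mul,
    intervalIntegral.integral_const_mul] at this
  · simp at this; linarith
  all_goals exact (by fun_prop : Continuous _).intervalIntegrable _ _

lemma c_parts (h0 : ∀ x, HasDerivAt ψ (ψ1 x) x) (h1 : Continuous ψ1) (t r : ℝ) :
    r * (∫ θ in (0:ℝ)..Real.pi, ψ1 (r * Real.cos θ - t) * (Real.sin θ ^ 2))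
      = ∫ θ in (0:ℝ)..Real.pi, ψ (r * Real.cos θ - t) * Real.cos θ := by
  have hc1 : Continuous ψ := continuous_iff_continuousAt.2 fun x => (h0 x).continuousAt
  have hF : ∀ θ, HasDerivAt (fun θ => ψ (r * Real.cos θ - t) * Real.sin θ)
      (ψ (r * Real.cos θ - t) * Real.cos θ -
        r * (ψ1 (r * Real.cos θ - t) * (Real.sin θ ^ 2))) θ := by
    intro θ
    have a : HasDerivAt (fun θ => r * Real.cos θ - t) (r * (-Real.sin θ)) θ :=
      ((Real.hasDerivAt_cos θ).const_mul r).sub_const t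
    refine (((h0 _).comp θ a).mul ((Real.hasDerivAt_sin θ))).congr_deriv ?_
    simp; ring
  have := ftc_cont _ _ 0 Real.pi (fun x _ => hF x) (by fun_prop)
  rw [intervalIntegral.integral_sub, 
    intervalIntegral.integral_const_mul] at this
  · simp at this; linarith
  all_goals exact (by fun_prop : Continuous _).intervalIntegrable _ _

lemma c_bd (h0 : ∀ x, HasDerivAt ψ (ψ1 x) x) (h1 : Continuous ψ1) (B : ℝ)
    (hB : ∀ x y, x ≤ y → ∫ s in x..y, |ψ s| ≤ B) (T r : ℝ) (hT : 0 ≤ T) (hr : 0 < r) :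
    ∫ t in (0:ℝ)..T, |-∫ θ in (0:ℝ)..Real.pi, ψ1 (r * Real.cos θ - t) * (Real.sin θ ^ 2)| ≤
      Real.pi * B / r := by
  have hpi := Real.pi_pos
  have hc0 : Continuous ψ := continuous_iff_continuousAt.2 fun x => (h0 x).continuousAt
  have hpt : ∀ t, |-∫ θ in (0:ℝ)..Real.pi, ψ1 (r * Real.cos θ - t) * (Real.sin θ ^ 2)| ≤
      (1/r) * ∫ θ in (0:ℝ)..Real.pi, |ψ (r * Real.cos θ - t)| := by
    intro t
    have e : (∫ θ in (0:ℝ)..Real.pi, ψ1 (r * Real.cos θ - t) * (Real.sin θ ^ 2)) =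
        (1/r) * ∫ θ in (0:ℝ)..Real.pi, ψ (r * Real.cos θ - t) * Real.cos θ := by
      rw [← c_parts h0 h1]; field_simp
    rw [e, abs_neg, abs_mul, abs_of_pos (by positivity : 0 < 1/r)]
    gcongr
    refine (intervalIntegral.abs_integral_le_integral_abs hpi.le).trans ?_
    apply intervalIntegral.integral_mono_on hpi.le
      ((by fun_prop : Continuous _).intervalIntegrable _ _)
      ((by fun_prop : Continuous _).intervalIntegrable _ _)
    intro θ _
    rw [abs_mul]
    exact mul_le_of_le_one_right (abs_nonneg _) (Real.abs_cos_le_one θ)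
  have cI : Continuous fun t : ℝ => ∫ θ in (0:ℝ)..Real.pi, |ψ (r * Real.cos θ - t)| := by
    apply intervalIntegral.continuous_parametric_intervalIntegral_of_continuous'
    simp only [Function.uncurry_def]; fun_prop
  have cJ : Continuous fun t : ℝ => ∫ θ in (0:ℝ)..Real.pi, ψ1 (r * Real.cos θ - t) * (Real.sin θ ^ 2) := by
    apply intervalIntegral.continuous_parametric_intervalIntegral_of_continuous'
    simp only [Function.uncurry_def]; fun_prop
  calc _ ≤ ∫ t in (0:ℝ)..T, (1/r) * ∫ θ in (0:ℝ)..Real.pi, |ψ (r * Real.cos θ - t)| := by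
        apply intervalIntegral.integral_mono_on hT
          ((by fun_prop : Continuous _).intervalIntegrable _ _)
          ((by fun_prop : Continuous _).intervalIntegrable _ _)
        intro t _; exact hpt t
    _ = (1/r) * ∫ θ in (0:ℝ)..Real.pi, ∫ t in (0:ℝ)..T, |ψ (r * Real.cos θ - t)| := by
        rw [intervalIntegral.integral_const_mul]
        congr 1
        apply swap_cont
        fun_prop
    _ ≤ (1/r) * ∫ θ in (0:ℝ)..Real.pi, B := by
        gcongr
        have : Continuous fun θ : ℝ => ∫ t in (0:ℝ)..T, |ψ (r * Real.cos θ - t)| := by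
          apply intervalIntegral.continuous_parametric_intervalIntegral_of_continuous'
          simp only [Function.uncurry_def]; fun_prop
        apply intervalIntegral.integral_mono_on hpi.le (this.intervalIntegrable _ _)
          (continuous_const.intervalIntegrable _ _)
        intro θ _
        rw [intervalIntegral.integral_comp_sub_left (fun s => |ψ s|)]
        apply hB; linarith
    _ = _ := by simp; ring

lemma c0_decay (h0 : ∀ x, HasDerivAt ψ (ψ1 x) x) (h1 : Continuous ψ1) (C : ℝ) (hC : 0 ≤ C)
    (hz : ∀ s ≤ 0, ψ s = 0) (hd : ∀ s, |ψ s| ≤ C / (1 + s^2)) (r : ℝ) (hr : 0 < r) :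
    (-∫ θ in (0:ℝ)..Real.pi, ψ1 (r * Real.cos θ) * (Real.sin θ ^ 2))^2 * r^3 ≤
      16 * C^2 * (1 + r) / r^3 := by
  have hpi := Real.pi_pos
  have hc0 : Continuous ψ := continuous_iff_continuousAt.2 fun x => (h0 x).continuousAt
  have e : (∫ θ in (0:ℝ)..Real.pi, ψ1 (r * Real.cos θ) * (Real.sin θ ^ 2)) =
      (1/r) * ∫ θ in (0:ℝ)..Real.pi, ψ (r * Real.cos θ) * Real.cos θ := by
    have := c_parts h0 h1 0 r
    simp only [sub_zero] at this
    rw [← this]; field_simp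
  have hz2 : ∫ θ in (Real.pi/2)..Real.pi, ψ (r * Real.cos θ) * Real.cos θ = 0 := by
    rw [intervalIntegral.integral_congr (g := fun _ => (0:ℝ))]
    · simp
    · intro θ hθ
      rw [uIcc_of_le (by linarith)] at hθ
      have : Real.cos θ ≤ 0 := Real.cos_nonpos_of_pi_div_two_le_of_le hθ.1 (by linarith [hθ.2])
      simp [hz (r * Real.cos θ) (by nlinarith)]
  have e2 : ∫ θ in (0:ℝ)..Real.pi, ψ (r * Real.cos θ) * Real.cos θ =
      ∫ θ in (0:ℝ)..(Real.pi/2), ψ (r * Real.cos θ) * Real.cos θ := by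
    have cc : Continuous fun θ => ψ (r * Real.cos θ) * Real.cos θ := by fun_prop
    rw [← intervalIntegral.integral_add_adjacent_intervals (cc.intervalIntegrable 0 (Real.pi/2))
      (cc.intervalIntegrable _ _), hz2, add_zero]
  have hpos : ∀ θ, 0 < 1 + r^2 * (1 - Real.sin θ) := fun θ => by
    have := Real.sin_le_one θ
    nlinarith [sq_nonneg r, mul_nonneg (sq_nonneg r) (sub_nonneg.2 this)]
  have cg : Continuous fun θ => C * (Real.cos θ / (1 + r^2 * (1 - Real.sin θ))) :=
    continuous_const.mul (Continuous.div (by fun_prop) (by fun_prop) fun θ => (hpos θ).ne')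
  have b : |∫ θ in (0:ℝ)..(Real.pi/2), ψ (r * Real.cos θ) * Real.cos θ| ≤
      C * (Real.log (1 + r^2) / r^2) := by
    have hI : ∫ θ in (0:ℝ)..(Real.pi/2), C * (Real.cos θ / (1 + r^2 * (1 - Real.sin θ))) =
        C * (Real.log (1 + r^2) / r^2) := by
      rw [ftc_cont _ (fun θ => -(C * (Real.log (1 + r^2 * (1 - Real.sin θ)) / r^2))) _ _ _
        cg.continuousOn]
      · simp
      · intro θ _
        have a : HasDerivAt (fun θ => 1 + r^2 * (1 - Real.sin θ)) (r^2 * (-Real.cos θ)) θ :=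
          (((Real.hasDerivAt_sin θ).const_sub 1).const_mul (r^2)).const_add 1
        refine (((a.log (hpos θ).ne').div_const (r^2)).const_mul C).neg.congr_deriv ?_
        have := (hpos θ).ne'
        field_simp
    rw [← hI]
    refine (intervalIntegral.abs_integral_le_integral_abs (by positivity)).trans ?_
    apply intervalIntegral.integral_mono_on (by positivity)
      ((by fun_prop : Continuous _).intervalIntegrable _ _)
      (cg.intervalIntegrable _ _)
    intro θ hθ
    obtain ⟨a1, a2, a3⟩ := trig_half (by rwa [uIcc_of_le (by positivity)])
    rw [abs_mul, abs_of_nonneg a3]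
    have : C / (1 + (r * Real.cos θ)^2) ≤ C / (1 + r^2 * (1 - Real.sin θ)) := by
      apply div_le_div_of_nonneg_left hC (hpos θ)
      have := Real.sin_sq_add_cos_sq θ
      have : 1 - Real.sin θ ≤ Real.cos θ ^ 2 := by nlinarith
      rw [mul_pow]; gcongr
    calc _ ≤ C / (1 + r^2 * (1 - Real.sin θ)) * Real.cos θ := by
          gcongr; exact (hd _).trans this
      _ = _ := by ring
  rw [e, e2]
  set I := ∫ θ in (0:ℝ)..(Real.pi/2), ψ (r * Real.cos θ) * Real.cos θ
  have hlog0 : 0 ≤ Real.log (1 + r^2) := Real.log_nonneg (by nlinarith)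
  have hlog : Real.log (1 + r^2) ^ 2 ≤ 16 * (1 + r) := by
    set y := Real.sqrt (Real.sqrt (1 + r^2)) with hy
    have hy0 : 0 < y := by positivity
    have hy2 : y ^ 2 = Real.sqrt (1 + r^2) := Real.sq_sqrt (by positivity)
    have hy4 : y ^ 4 = 1 + r^2 := by
      rw [show y^4 = (y^2)^2 by ring, hy2, Real.sq_sqrt (by positivity)]
    have hy2b : y^2 ≤ 1 + r := by
      rw [hy2]; apply Real.sqrt_le_iff.2; constructor <;> nlinarith
    have : Real.log (1 + r^2) ≤ 4 * y := by
      rw [← hy4, Real.log_pow]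
      have := Real.log_le_sub_one_of_pos hy0
      push_cast; linarith
    calc _ ≤ (4 * y)^2 := by gcongr
      _ = 16 * y^2 := by ring
      _ ≤ _ := by gcongr
  have hI2 : I^2 ≤ (C * (Real.log (1 + r^2) / r^2))^2 := by
    rw [← sq_abs]; gcongr
  calc (-(1/r * I))^2 * r^3 = I^2 * r := by field_simp
    _ ≤ (C * (Real.log (1 + r^2) / r^2))^2 * r := by gcongr
    _ = C^2 * (Real.log (1+r^2))^2 / r^3 := by field_simp
    _ ≤ C^2 * (16 * (1 + r)) / r^3 := by gcongr
    _ = _ := by ring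

end

section
variable {α β : ℝ} {m : ℝ → ℝ}

/- value at time zero -/
lemma V0 (hα : 0 < α) (hg : IsBump α β m) (r : ℝ) (hr : 0 < r) :
    ∫ θ in (0:ℝ)..Real.pi, psi m (r * Real.cos θ) * Real.sin θ ^ 2 =
      (1/2) * ((∫ x in (0:ℝ)..r, m x) - (∫ x in (0:ℝ)..r, x^2 * m x) / r^2) := by
  have hpi := Real.pi_pos
  have hc := psi_cont hg
  have hm := hg.cont
  have hz2 : ∫ θ in (Real.pi/2)..Real.pi, psi m (r * Real.cos θ) * Real.sin θ ^ 2 = 0 := by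
    rw [intervalIntegral.integral_congr (g := fun _ => (0:ℝ))]
    · simp
    · intro θ hθ
      rw [uIcc_of_le (by linarith)] at hθ
      have : Real.cos θ ≤ 0 := Real.cos_nonpos_of_pi_div_two_le_of_le hθ.1 (by linarith [hθ.2])
      simp [psi_zero hα hg (s := r * Real.cos θ) (by nlinarith)]
  have cc : Continuous fun θ => psi m (r * Real.cos θ) * Real.sin θ ^ 2 := by fun_prop
  rw [← intervalIntegral.integral_add_adjacent_intervals (cc.intervalIntegrable 0 (Real.pi/2))
      (cc.intervalIntegrable _ _), hz2, add_zero]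
  have e1 : ∫ θ in (0:ℝ)..(Real.pi/2), psi m (r * Real.cos θ) * Real.sin θ ^ 2 =
      r * lhsA (fun y => m (r * y)) := by
    unfold lhsA psi
    rw [← mul_assoc, ← intervalIntegral.integral_const_mul]
    congr 1; ext θ
    simp only [mul_assoc]; ring
  rw [e1, A_id _ (by fun_prop)]
  unfold rhsA
  have e2 : ∫ y in (0:ℝ)..1, m (r * y) * (1 - y^2) = (1/r) * ∫ x in (0:ℝ)..r, m x * (1 - x^2/r^2) := by
    have := intervalIntegral.mul_integral_comp_mul_left (a := 0) (b := 1) (f := fun x => m x * (1 - x^2/r^2)) r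
    simp only [mul_zero, mul_one] at this
    rw [← this, ← mul_assoc, one_div, inv_mul_cancel₀ hr.ne', one_mul]
    congr 1; ext y; field_simp
  rw [e2]
  have e3 : ∫ x in (0:ℝ)..r, m x * (1 - x^2/r^2) =
      (∫ x in (0:ℝ)..r, m x) - (∫ x in (0:ℝ)..r, x^2 * m x) / r^2 := by
    rw [← intervalIntegral.integral_div, ← intervalIntegral.integral_sub]
    · congr 1; ext x; ring
    all_goals exact (by fun_prop : Continuous _).intervalIntegrable _ _
  rw [e3]; field_simp

end

structure TestPkg (α β EV : ℝ) (m : ℝ → ℝ) (c d ct cr dr : ℝ × ℝ → ℝ) : Prop where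
  hc : ∀ q, HasFDerivAt c (LL (ct q) (cr q)) q
  hd : ∀ q, HasFDerivAt d (LL (cr q) (dr q)) q
  cct : Continuous ct
  ccr : Continuous cr
  cdr : Continuous dr
  wave : ∀ q, q.2 ≠ 0 → ct q - dr q - (3/q.2) * d q = 0
  supp : ∀ t r, 0 ≤ r → r ≤ α + t → c (t,r) = 0 ∧ d (t,r) = 0
  cint : ∀ T r, 0 ≤ T → 0 < r → ∫ t in (0:ℝ)..T, |c (t,r)| ≤ Real.pi * (4 * β) / r
  d0 : ∀ r, 0 < r → d (0,r) * r^3 = ∫ x in (0:ℝ)..r, x^2 * m x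
  mcont : Continuous m
  mz : ∀ x, β ≤ x → m x = 0
  mub : ∃ M, ∀ r, α ≤ r → |∫ x in (0:ℝ)..r, x^2 * m x| ≤ M
  en0 : ∀ Λ, α ≤ Λ → ∫ r in α..Λ, (c (0,r) ^ 2 + d (0,r) ^ 2) * r^3 ≤ EV

lemma pkg_exists {α β : ℝ} {m1 m2 : ℝ → ℝ} (hα : 0 < α) (hαβ : α < β) (h1 : IsBump α β m1)
    (h2 : IsBump α β m2) : ∃ EV, 0 ≤ EV ∧ ∃ c d ct cr dr,
      TestPkg α β EV (fun x => m1 x - m2 x) c d ct cr dr := by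
  have hpi := Real.pi_pos
  obtain ⟨f1, f2, hf0, hf1, hf2⟩ := psi_derivs h1
  obtain ⟨g1, g2, hg0, hg1, hg2⟩ := psi_derivs h2
  obtain ⟨C, hC, hdec⟩ := psi_diff_decay hα hαβ h1 h2
  have hint := psi_diff_int hα hαβ h1 h2
  have hm1 := h1.cont
  have hm2 := h2.cont
  set ψ := fun s => psi m1 s - psi m2 s with hψ
  set ψ1 := fun s => f1 s - g1 s with hψ1
  set ψ2 := fun s => f2 s - g2 s with hψ2
  have d0 : ∀ x, HasDerivAt ψ (ψ1 x) x := fun x => (hf0 x).sub (hg0 x)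
  have d1 : ∀ x, HasDerivAt ψ1 (ψ2 x) x := fun x => (hf1 x).sub (hg1 x)
  have c2 : Continuous ψ2 := hf2.sub hg2
  have c1 : Continuous ψ1 := continuous_iff_continuousAt.2 fun x => (d1 x).continuousAt
  have c0 : Continuous ψ := continuous_iff_continuousAt.2 fun x => (d0 x).continuousAt
  have z0 : ∀ s, s ≤ α → ψ s = 0 := fun s hs => by
    simp [hψ, psi_zero hα h1 hs, psi_zero hα h2 hs]
  have z1 : ∀ s, s ≤ α → ψ1 s = 0 := by
    intro s hs
    have a := (d0 s).hasDerivWithinAt (s := Iic s)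
    have b : HasDerivWithinAt ψ 0 (Iic s) s := by
      refine (hasDerivWithinAt_const s (Iic s) (0:ℝ)).congr (fun x hx => z0 x (le_trans hx hs)) (z0 s hs)
    exact (uniqueDiffWithinAt_Iic s).eq_deriv _ a b
  set μ := fun r : ℝ => ∫ x in (0:ℝ)..r, x^2 * (m1 x - m2 x) with hμ
  have hμc : Continuous μ := by
    apply intervalIntegral.continuous_primitive
    intro a b; exact (by fun_prop : Continuous _).intervalIntegrable _ _
  have hd0 : ∀ r, 0 < r → (∫ θ in (0:ℝ)..Real.pi, ψ1 (r * Real.cos θ - 0) * (Real.cos θ * Real.sin θ ^ 2)) * r^3 = μ r := by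
    intro r hr
    have a := param_deriv ψ ψ1 (fun θ => Real.sin θ ^ 2) Real.cos Real.pi d0 c1 (by fun_prop) Real.continuous_cos r
    have key : ∀ x, 0 < x → (∫ θ in (0:ℝ)..Real.pi, ψ (x * Real.cos θ) * Real.sin θ ^ 2)
        = (1/2) * ((∫ y in (0:ℝ)..x, (m1 y - m2 y)) - μ x / x^2) := by
      intro x hx
      have p1 := psi_cont h1
      have p2 := psi_cont h2
      have e : (∫ θ in (0:ℝ)..Real.pi, ψ (x * Real.cos θ) * Real.sin θ ^ 2) =
          (∫ θ in (0:ℝ)..Real.pi, psi m1 (x * Real.cos θ) * Real.sin θ ^ 2) -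
          (∫ θ in (0:ℝ)..Real.pi, psi m2 (x * Real.cos θ) * Real.sin θ ^ 2) := by
        rw [← intervalIntegral.integral_sub]
        · congr 1; ext θ; simp only [hψ]; ring
        all_goals exact (by fun_prop : Continuous _).intervalIntegrable _ _
      have e2 : μ x = (∫ y in (0:ℝ)..x, y^2 * m1 y) - ∫ y in (0:ℝ)..x, y^2 * m2 y := by
        rw [← intervalIntegral.integral_sub]
        · simp only [hμ]; congr 1; ext θ; ring
        all_goals exact (by fun_prop : Continuous _).intervalIntegrable _ _
      have e3 : (∫ y in (0:ℝ)..x, (m1 y - m2 y)) = (∫ y in (0:ℝ)..x, m1 y) - ∫ y in (0:ℝ)..x, m2 y := by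
        rw [← intervalIntegral.integral_sub]
        all_goals exact (by fun_prop : Continuous _).intervalIntegrable _ _
      rw [e, V0 hα h1 x hx, V0 hα h2 x hx, e2, e3]; ring
    have i1 : HasDerivAt (fun x => ∫ y in (0:ℝ)..x, (m1 y - m2 y)) (m1 r - m2 r) r :=
      (hm1.sub hm2).integral_hasStrictDerivAt 0 r |>.hasDerivAt
    have i2 : HasDerivAt μ (r^2 * (m1 r - m2 r)) r :=
      ((by fun_prop : Continuous fun y : ℝ => y^2 * (m1 y - m2 y)).integral_hasStrictDerivAt 0 r).hasDerivAt
    have b := (i1.sub (i2.div (hasDerivAt_pow 2 r) (by positivity))).const_mul (1/2)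
    have ev : (fun x => ∫ θ in (0:ℝ)..Real.pi, ψ (x * Real.cos θ) * Real.sin θ ^ 2) =ᶠ[nhds r]
        fun x => (1/2) * ((∫ y in (0:ℝ)..x, (m1 y - m2 y)) - μ x / x^2) := by
      filter_upwards [lt_mem_nhds hr] with x hx using key x hx
    have := a.unique (b.congr_of_eventuallyEq ev)
    simp only [sub_zero]
    rw [this]
    field_simp
    simp; ring
  obtain ⟨Mμ, hMμ⟩ : ∃ M, ∀ r, α ≤ r → |μ r| ≤ M := by
    obtain ⟨M, hM⟩ := (isCompact_Icc (a := α) (b := β)).exists_bound_of_continuousOn hμc.continuousOn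
    refine ⟨M, fun r hr => ?_⟩
    rcases le_total r β with h | h
    · exact hM r ⟨hr, h⟩
    · have : μ r = μ β := by
        simp only [hμ]
        have cc : Continuous fun x => x^2 * (m1 x - m2 x) := by fun_prop
        rw [← intervalIntegral.integral_add_adjacent_intervals (cc.intervalIntegrable 0 β)
          (cc.intervalIntegrable β r)]
        have : ∫ x in β..r, x^2 * (m1 x - m2 x) = 0 := by
          rw [intervalIntegral.integral_congr (g := fun _ => (0:ℝ))]
          · simp
          · intro x hx; rw [uIcc_of_le h] at hx; simp [h1.right x hx.1, h2.right x hx.1]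
        rw [this, add_zero]
      rw [this]; exact hM β ⟨hαβ.le, le_rfl⟩
  set c := fun q : ℝ × ℝ => -∫ θ in (0:ℝ)..Real.pi, ψ1 (q.2 * Real.cos θ - q.1) * Real.sin θ ^ 2 with hcdef
  set d := fun q : ℝ × ℝ => ∫ θ in (0:ℝ)..Real.pi, ψ1 (q.2 * Real.cos θ - q.1) * (Real.cos θ * Real.sin θ ^ 2) with hddef
  set ct := fun q : ℝ × ℝ => ∫ θ in (0:ℝ)..Real.pi, ψ2 (q.2 * Real.cos θ - q.1) * Real.sin θ ^ 2 with hctdef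
  set cr := fun q : ℝ × ℝ => -∫ θ in (0:ℝ)..Real.pi, ψ2 (q.2 * Real.cos θ - q.1) * (Real.cos θ * Real.sin θ ^ 2) with hcrdef
  set dr := fun q : ℝ × ℝ => ∫ θ in (0:ℝ)..Real.pi, ψ2 (q.2 * Real.cos θ - q.1) * (Real.cos θ * (Real.cos θ * Real.sin θ ^ 2)) with hdrdef
  have Hc : ∀ q, HasFDerivAt c (LL (ct q) (cr q)) q := by
    intro q
    have := (param_fderiv ψ1 ψ2 (fun θ => Real.sin θ ^ 2) Real.cos Real.pi d1 c2 (by fun_prop) Real.continuous_cos q).neg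
    refine this.congr_fderiv ?_
    ext <;> simp [LL, hctdef, hcrdef]
  have Hd : ∀ q, HasFDerivAt d (LL (cr q) (dr q)) q := by
    intro q
    exact (param_fderiv ψ1 ψ2 (fun θ => Real.cos θ * Real.sin θ ^ 2) Real.cos Real.pi d1 c2 (by fun_prop) Real.continuous_cos q)
  have Hd0 : ∀ r, 0 < r → d (0,r) * r^3 = μ r := hd0
  have Cc : Continuous c := continuous_iff_continuousAt.2 fun x => (Hc x).continuousAt
  have Cd : Continuous d := continuous_iff_continuousAt.2 fun x => (Hd x).continuousAt
  refine ⟨16 * C^2 * (1/(2*α^2) + 1/α) + Mμ^2 * (1/(2*α^2)), by positivity, c, d, ct, cr, dr, ?_⟩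
  refine ⟨Hc, Hd, param_cont _ _ _ _ c2 (by fun_prop) Real.continuous_cos,
    (param_cont _ _ _ _ c2 (by fun_prop) Real.continuous_cos).neg,
    param_cont _ _ _ _ c2 (by fun_prop) Real.continuous_cos, ?_, ?_, ?_, ?_, hm1.sub hm2,
    fun x hx => by simp [h1.right x hx, h2.right x hx], ⟨Mμ, hMμ⟩, ?_⟩
  · intro q hq
    have w := wave_id d1 c2 q.1 q.2
    have e : ct q - dr q = ∫ θ in (0:ℝ)..Real.pi, ψ2 (q.2 * Real.cos θ - q.1) * Real.sin θ ^ 4 := by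
      simp only [hctdef, hdrdef]
      rw [← intervalIntegral.integral_sub]
      · congr 1; ext θ
        have := Real.sin_sq_add_cos_sq θ
        linear_combination (-(ψ2 (q.2 * Real.cos θ - q.1) * Real.sin θ ^ 2)) * this
      all_goals exact (by fun_prop : Continuous _).intervalIntegrable _ _
    rw [e]
    have w' : 3 * d q = q.2 * ∫ θ in (0:ℝ)..Real.pi, ψ2 (q.2 * Real.cos θ - q.1) * Real.sin θ ^ 4 := w
    have : 3 / q.2 * d q = (3 * d q) / q.2 := by ring
    rw [this, w']; field_simp; simp
  · intro t r hr hrt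
    have : ∀ θ, ψ1 (r * Real.cos θ - t) = 0 := fun θ => z1 _ (by
      have := Real.cos_le_one θ
      nlinarith)
    simp [hcdef, hddef, this]
  · intro T r hT hr
    exact c_bd d0 c1 (4*β) hint T r hT hr
  · intro r hr
    exact hd0 r hr
  · intro Λ hΛ
    have F : ∀ x ∈ uIcc α Λ, HasDerivAt (fun r : ℝ => -(16 * C^2 * (1/2 * (r⁻¹)^2 + r⁻¹) + Mμ^2 * (1/2 * (r⁻¹)^2)))
        (16 * C^2 * (1+x)/x^3 + Mμ^2/x^3) x := by
      intro x hx
      rw [uIcc_of_le hΛ] at hx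
      have hx0 : x ≠ 0 := (hα.trans_le hx.1).ne'
      have i := hasDerivAt_inv hx0
      refine ((((i.pow 2).const_mul (1/2)).add i).const_mul (16*C^2) |>.add
        (((i.pow 2).const_mul (1/2)).const_mul (Mμ^2))).neg.congr_deriv ?_
      norm_num
      field_simp
      ring
    have cF : ContinuousOn (fun x : ℝ => 16 * C^2 * (1+x)/x^3 + Mμ^2/x^3) (uIcc α Λ) := by
      intro x hx
      rw [uIcc_of_le hΛ] at hx
      have hx0 : 0 < x := (hα.trans_le hx.1)
      exact ContinuousAt.continuousWithinAt (by fun_prop (disch := positivity))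
    calc _ ≤ ∫ x in α..Λ, (16 * C^2 * (1+x)/x^3 + Mμ^2/x^3) := by
          apply intervalIntegral.integral_mono_on hΛ
            ((by fun_prop : Continuous _).intervalIntegrable _ _) cF.intervalIntegrable
          intro r hr
          have hr0 : 0 < r := hα.trans_le hr.1
          have a1 := c0_decay d0 c1 C hC (fun s hs => z0 s (hs.trans hα.le)) hdec r hr0
          have a2 : d (0,r) = μ r / r^3 := by rw [← Hd0 r hr0]; field_simp
          have a3 : d (0,r)^2 * r^3 ≤ Mμ^2 / r^3 := by
            rw [a2]
            have : μ r ^ 2 ≤ Mμ^2 := by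
              rw [← sq_abs (μ r)]; gcongr; exact hMμ r hr.1
            calc (μ r / r^3)^2 * r^3 = μ r ^ 2 / r^3 := by field_simp
              _ ≤ _ := by gcongr
          have a4 : c (0,r)^2 * r^3 ≤ 16 * C^2 * (1+r)/r^3 := by
            simpa [hcdef] using a1
          rw [add_mul]; exact add_le_add a4 a3
      _ ≤ _ := by
          rw [ftc_cont _ _ _ _ F cF]
          have hΛ0 : 0 < Λ := hα.trans_le hΛ
          have : 0 ≤ 16 * C^2 * (1/2 * (Λ⁻¹)^2 + Λ⁻¹) + Mμ^2 * (1/2 * (Λ⁻¹)^2) := by positivity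
          have e : 16 * C^2 * (1/(2*α^2) + 1/α) + Mμ^2 * (1/(2*α^2)) =
            16 * C^2 * (1/2 * (α⁻¹)^2 + α⁻¹) + Mμ^2 * (1/2 * (α⁻¹)^2) := by
            field_simp
          rw [e]; linarith

structure Sys (ρ : ℝ) (a b F a1 a2 b2 : ℝ × ℝ → ℝ) : Prop where
  ha : ∀ q : ℝ × ℝ, ρ + |q.1| < q.2 → HasFDerivAt a (LL (a1 q) (a2 q)) q
  hb : ∀ q : ℝ × ℝ, ρ + |q.1| < q.2 → HasFDerivAt b (LL (a2 q) (b2 q)) q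
  hF : ∀ q : ℝ × ℝ, ρ + |q.1| < q.2 → a1 q - b2 q - (3/q.2) * b q = F q
  cF : ContinuousOn F {q : ℝ × ℝ | ρ + |q.1| < q.2}

noncomputable def eta (L x : ℝ) : ℝ := (max 0 (1 - x/L))^2
noncomputable def eta' (L x : ℝ) : ℝ := -(2/L) * max 0 (1 - x/L)

lemma eta_deriv (L x : ℝ) : HasDerivAt (eta L) (eta' L x) x := by
  have h : ∀ y : ℝ, HasDerivAt (fun y : ℝ => (max 0 y)^2) (2 * max 0 y) y := by
    intro y
    rcases lt_trichotomy y 0 with hy | hy | hy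
    · rw [max_eq_left hy.le, mul_zero]
      apply (hasDerivAt_const y (0:ℝ)).congr_of_eventuallyEq
      filter_upwards [gt_mem_nhds hy] with z hz
      rw [max_eq_left hz.le]; simp
    · subst hy
      rw [hasDerivAt_iff_isLittleO]
      simp only [max_self, mul_zero, sub_zero, smul_zero]
      rw [Asymptotics.isLittleO_iff]
      intro c hc
      filter_upwards [Metric.ball_mem_nhds (0:ℝ) hc] with z hz
      rw [Metric.mem_ball, dist_zero_right, Real.norm_eq_abs] at hz
      simp only [Real.norm_eq_abs]
      have : |max 0 z| ≤ |z| := by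
        rcases le_total z 0 with h | h
        · simp [max_eq_left h]
        · simp [max_eq_right h]
      have e : |(max 0 z)^2 - 0^2| = |max 0 z| * |max 0 z| := by
        rw [← abs_mul]; congr 1; ring
      rw [e]
      nlinarith [abs_nonneg z, abs_nonneg (max 0 z)]
    · rw [max_eq_right hy.le]
      have := (hasDerivAt_pow 2 y)
      simp at this
      apply this.congr_of_eventuallyEq
      filter_upwards [lt_mem_nhds hy] with z hz
      rw [max_eq_right hz.le]
  have l : HasDerivAt (fun x : ℝ => 1 - x/L) (-(1/L)) x := ((hasDerivAt_id x).div_const L).const_sub 1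
  refine ((h _).comp x l).congr_deriv ?_
  unfold eta'; ring

lemma eta_cont (L : ℝ) : Continuous (eta L) := by unfold eta; fun_prop
lemma eta'_cont (L : ℝ) : Continuous (eta' L) := by unfold eta'; fun_prop
lemma eta_nonneg (L x : ℝ) : 0 ≤ eta L x := by unfold eta; positivity
lemma eta_le_one {L x : ℝ} (hL : 0 < L) (hx : 0 ≤ x) : eta L x ≤ 1 := by
  unfold eta
  have : 0 ≤ x / L := by positivity
  have h1 : max 0 (1 - x/L) ≤ 1 := max_le zero_le_one (by linarith)
  have h0 : 0 ≤ max 0 (1 - x/L) := le_max_left _ _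
  nlinarith
lemma eta_zero {L x : ℝ} (hL : 0 < L) (hx : L ≤ x) : eta L x = 0 := by
  unfold eta
  have : 1 ≤ x/L := by rw [le_div_iff₀ hL]; linarith
  rw [max_eq_left (by linarith)]; simp
lemma eta'_nonpos {L x : ℝ} (hL : 0 < L) : eta' L x ≤ 0 := by
  unfold eta'
  have h0 : 0 ≤ max 0 (1 - x/L) := le_max_left _ _
  have : 0 ≤ 2/L * max 0 (1 - x/L) := by positivity
  linarith
lemma eta'_abs {L x : ℝ} (hL : 0 < L) (hx : 0 ≤ x) : |eta' L x| ≤ 2/L := by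
  unfold eta'
  have : 0 ≤ x / L := by positivity
  have h1 : max 0 (1 - x/L) ≤ 1 := max_le zero_le_one (by linarith)
  have h0 : 0 ≤ max 0 (1 - x/L) := le_max_left _ _
  rw [abs_mul, abs_neg, abs_of_pos (by positivity), abs_of_nonneg h0]
  exact mul_le_of_le_one_right (by positivity) h1

section
variable {ρ α β EV : ℝ} {m : ℝ → ℝ} {c d ct cr dr a b F a1 a2 b2 : ℝ × ℝ → ℝ}

lemma isOpen_ext (ρ : ℝ) : IsOpen {q : ℝ × ℝ | ρ + |q.1| < q.2} :=
  isOpen_lt (by fun_prop) (by fun_prop)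

noncomputable def gf (L : ℝ) (a b c d : ℝ × ℝ → ℝ) (q : ℝ × ℝ) : ℝ :=
  (a q * c q + b q * d q) * (eta L (q.1 + q.2) * q.2 ^ 3)
noncomputable def gD (L : ℝ) (a b c d F : ℝ × ℝ → ℝ) (q : ℝ × ℝ) : ℝ :=
  eta L (q.1 + q.2) * q.2^3 * (c q * F q) + eta' L (q.1+q.2) * q.2^3 * ((a q - b q) * (c q - d q))

lemma ev_zero (hα : 0 < α) (hP : TestPkg α β EV m c d ct cr dr) (q : ℝ × ℝ)
    (h1 : α ≤ q.2) (h2 : q.2 < α + q.1) : ∀ᶠ z in nhds q, c z = 0 ∧ d z = 0 := by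
  have o1 : IsOpen {z : ℝ × ℝ | 0 < z.2} := isOpen_lt (by fun_prop) (by fun_prop)
  have o2 : IsOpen {z : ℝ × ℝ | z.2 < α + z.1} := isOpen_lt (by fun_prop) (by fun_prop)
  filter_upwards [o1.mem_nhds (show q ∈ {z : ℝ × ℝ | 0 < z.2} from by simp; linarith),
    o2.mem_nhds (show q ∈ {z : ℝ × ℝ | z.2 < α + z.1} from h2)] with z hz hz2
  exact hP.supp z.1 z.2 (le_of_lt hz) (le_of_lt hz2)

lemma TestPkg.contc (hP : TestPkg α β EV m c d ct cr dr) : Continuous c :=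
  continuous_iff_continuousAt.2 fun x => (hP.hc x).continuousAt
lemma TestPkg.contd (hP : TestPkg α β EV m c d ct cr dr) : Continuous d :=
  continuous_iff_continuousAt.2 fun x => (hP.hd x).continuousAt

lemma green_pt (hα : 0 < α) (hρ : 0 ≤ ρ) (hρα : ρ < α) (hP : TestPkg α β EV m c d ct cr dr)
    (hS : Sys ρ a b F a1 a2 b2) (L : ℝ) (q : ℝ × ℝ) (hq1 : 0 ≤ q.1) (hq2 : α ≤ q.2) :
    DifferentiableAt ℝ (gf L a b c d) q ∧
    DifferentiableAt ℝ (fun q => -gf L a b d c q) q ∧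
    fderiv ℝ (gf L a b c d) q (1,0) + fderiv ℝ (fun q => -gf L a b d c q) q (0,1) = gD L a b c d F q ∧
    ContinuousAt (gD L a b c d F) q := by
  rcases lt_or_ge q.2 (α + q.1) with h | h
  · have ez := ev_zero hα hP q hq2 h
    have e1 : gf L a b c d =ᶠ[nhds q] fun _ => 0 := by
      filter_upwards [ez] with z hz; simp [gf, hz.1, hz.2]
    have e2 : (fun q => -gf L a b d c q) =ᶠ[nhds q] fun _ => 0 := by
      filter_upwards [ez] with z hz; simp [gf, hz.1, hz.2]
    have e3 : gD L a b c d F =ᶠ[nhds q] fun _ => 0 := by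
      filter_upwards [ez] with z hz; simp [gD, hz.1, hz.2]
    refine ⟨(differentiableAt_const _).congr_of_eventuallyEq e1,
      (differentiableAt_const _).congr_of_eventuallyEq e2, ?_, continuousAt_const.congr e3.symm⟩
    rw [e1.fderiv_eq, e2.fderiv_eq, e3.eq_of_nhds]
    simp
  · have hΩ : ρ + |q.1| < q.2 := by rw [abs_of_nonneg hq1]; linarith
    have r0 : 0 < q.2 := by linarith
    have Ha := hS.ha q hΩ
    have Hb := hS.hb q hΩ
    have Hc := hP.hc q
    have Hd := hP.hd q
    have He : HasFDerivAt (fun q : ℝ × ℝ => eta L (q.1 + q.2) * q.2^3)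
        (LL (eta' L (q.1+q.2) * q.2^3) (eta' L (q.1+q.2) * q.2^3 + eta L (q.1+q.2) * (3 * q.2^2))) q := by
      have s : HasFDerivAt (fun q : ℝ × ℝ => q.1 + q.2) (ContinuousLinearMap.fst ℝ ℝ ℝ + ContinuousLinearMap.snd ℝ ℝ ℝ) q :=
        hasFDerivAt_fst.add hasFDerivAt_snd
      have s1 := (eta_deriv L (q.1+q.2)).comp_hasFDerivAt q s
      have s2 : HasFDerivAt (fun q : ℝ × ℝ => q.2^3) _ q := (hasFDerivAt_snd (𝕜 := ℝ) (p := q)).pow 3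
      refine (s1.mul s2).congr_fderiv ?_
      ext <;> simp [LL] <;> ring
    have Hf : HasFDerivAt (gf L a b c d) _ q := ((Ha.mul Hc).add (Hb.mul Hd)).mul He
    have Hg : HasFDerivAt (fun q => -gf L a b d c q) _ q := (((Ha.mul Hd).add (Hb.mul Hc)).mul He).neg
    refine ⟨Hf.differentiableAt, Hg.differentiableAt, ?_, ?_⟩
    · rw [Hf.fderiv, Hg.fderiv]
      have w := hP.wave q r0.ne'
      have w2 := hS.hF q hΩ
      simp only [gD, ← w2]
      have w3 : ct q = dr q + 3/q.2 * d q := by linarith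
      simp [LL, w3]
      field_simp
      ring
    · have i1 := (isOpen_ext ρ).mem_nhds hΩ
      have cF := hS.cF.continuousAt i1
      have cc := Hc.continuousAt
      have cd := Hd.continuousAt
      have ca := Ha.continuousAt
      have cb := Hb.continuousAt
      have ce := (eta_cont L)
      have ce' := (eta'_cont L)
      unfold gD
      have k1 : ContinuousAt (fun q : ℝ × ℝ => eta L (q.1+q.2) * q.2^3) q := (by fun_prop : Continuous _).continuousAt
      have k2 : ContinuousAt (fun q : ℝ × ℝ => eta' L (q.1+q.2) * q.2^3) q := (by fun_prop : Continuous _).continuousAt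
      exact (k1.mul (cc.mul cF)).add (k2.mul ((ca.sub cb).mul (cc.sub cd)))

lemma green (hα : 0 < α) (hρ : 0 ≤ ρ) (hρα : ρ < α) (hP : TestPkg α β EV m c d ct cr dr)
    (hS : Sys ρ a b F a1 a2 b2) (L T : ℝ) (hL : α ≤ L) (hT : 0 ≤ T) :
    ∫ t in (0:ℝ)..T, ∫ r in α..L, gD L a b c d F (t, r) =
      (∫ r in α..L, gf L a b c d (T, r)) - ∫ r in α..L, gf L a b c d (0, r) := by
  have key := fun (q : ℝ × ℝ) (hq : q ∈ uIcc 0 T ×ˢ uIcc α L) => green_pt hα hρ hρα hP hS L q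
    (by rw [uIcc_of_le hT, uIcc_of_le hL] at hq; exact hq.1.1)
    (by rw [uIcc_of_le hT, uIcc_of_le hL] at hq; exact hq.2.1)
  have sub : ∀ x ∈ Ioo (min 0 T) (max 0 T) ×ˢ Ioo (min α L) (max α L) \ (∅ : Set (ℝ × ℝ)), x ∈ uIcc 0 T ×ˢ uIcc α L := by
    intro x hx
    exact ⟨Ioo_subset_Icc_self hx.1.1, Ioo_subset_Icc_self hx.1.2⟩
  have eqD : ∀ x ∈ uIcc 0 T ×ˢ uIcc α L, fderiv ℝ (gf L a b c d) x (1,0) +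
      fderiv ℝ (fun q => -gf L a b d c q) x (0,1) = gD L a b c d F x := fun x hx => (key x hx).2.2.1
  have cD : ContinuousOn (gD L a b c d F) (uIcc 0 T ×ˢ uIcc α L) := fun x hx =>
    (key x hx).2.2.2.continuousWithinAt
  have main := integral2_divergence_prod_of_hasFDerivAt_off_countable (gf L a b c d)
    (fun q => -gf L a b d c q) (fderiv ℝ (gf L a b c d)) (fderiv ℝ (fun q => -gf L a b d c q))
    0 α T L ∅ countable_empty
    (fun x hx => (key x hx).1.continuousAt.continuousWithinAt)
    (fun x hx => (key x hx).2.1.continuousAt.continuousWithinAt)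
    (fun x hx => (key x (sub x hx)).1.hasFDerivAt)
    (fun x hx => (key x (sub x hx)).2.1.hasFDerivAt)
    ((cD.congr eqD).integrableOn_compact (isCompact_uIcc.prod isCompact_uIcc))
  have e0 : ∫ t in (0:ℝ)..T, ∫ r in α..L, gD L a b c d F (t, r) = ∫ x in (0:ℝ)..T, ∫ y in α..L,
      (fderiv ℝ (gf L a b c d)) (x, y) (1, 0) + (fderiv ℝ (fun q => -gf L a b d c q)) (x, y) (0, 1) := by
    apply intervalIntegral.integral_congr
    intro t ht
    apply intervalIntegral.integral_congr
    intro r hr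
    exact (eqD (t,r) ⟨ht, hr⟩).symm
  rw [e0, main]
  have z1 : ∫ x in (0:ℝ)..T, -gf L a b d c (x, L) = 0 := by
    rw [intervalIntegral.integral_congr (g := fun _ => (0:ℝ))]
    · simp
    · intro t ht; rw [uIcc_of_le hT] at ht
      have := eta_zero (x := t + L) (by linarith : 0 < L) (by linarith [ht.1])
      simp [gf, this]
  have z2 : ∫ x in (0:ℝ)..T, -gf L a b d c (x, α) = 0 := by
    rw [intervalIntegral.integral_congr (g := fun _ => (0:ℝ))]
    · simp
    · intro t ht; rw [uIcc_of_le hT] at ht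
      have := hP.supp t α hα.le (by linarith [ht.1])
      simp [gf, this.1, this.2]
  rw [z1, z2]; ring

lemma pkg_sys (hρ : 0 ≤ ρ) (hP : TestPkg α β EV m c d ct cr dr) : Sys ρ c d (fun _ => 0) ct cr dr :=
  ⟨fun q _ => hP.hc q, fun q _ => hP.hd q, fun q hq => hP.wave q (by
    have := abs_nonneg q.1
    linarith), continuousOn_const⟩

lemma pkg_energy (hα : 0 < α) (hP : TestPkg α β EV m c d ct cr dr) (T Λ : ℝ) (hT : 0 ≤ T)
    (hΛ : α ≤ Λ) : ∫ r in α..Λ, (c (T,r)^2 + d (T,r)^2) * r^3 ≤ EV := by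
  have cc := hP.contc
  have cd := hP.contd
  have ce := eta_cont
  set X := ∫ r in α..Λ, (c (T,r)^2 + d (T,r)^2) * r^3 with hX
  have hL : ∀ L, T + Λ < L → (1 - (T+Λ)/L)^2 * X ≤ EV := by
    intro L hL
    have hL0 : 0 < L := by linarith
    have hαL : α ≤ L := by linarith
    have g := green hα le_rfl hα hP (pkg_sys le_rfl hP) L T hαL hT
    have ce := eta_cont L
    have neg : ∫ t in (0:ℝ)..T, ∫ r in α..L, gD L c d c d (fun _ => 0) (t, r) ≤ 0 := by
      have : ∀ t ∈ Icc 0 T, ∫ r in α..L, gD L c d c d (fun _ => 0) (t, r) ≤ 0 := by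
        intro t _
        have : 0 ≤ ∫ r in α..L, -gD L c d c d (fun _ => 0) (t, r) := by
          apply intervalIntegral.integral_nonneg hαL
          intro r hr
          have h1 := eta'_nonpos (x := t + r) hL0
          have h2 : 0 < r := by linarith [hr.1]
          simp only [gD, mul_zero, zero_add]
          rw [Left.nonneg_neg_iff]
          apply mul_nonpos_of_nonpos_of_nonneg
          · exact mul_nonpos_of_nonpos_of_nonneg h1 (by positivity)
          · exact mul_self_nonneg _
        rw [intervalIntegral.integral_neg] at this
        linarith
      have h := intervalIntegral.integral_nonneg (μ := volume) hT (f := fun t => -∫ r in α..L, gD L c d c d (fun _ => 0) (t, r))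
        (fun t ht => by have := this t ht; linarith)
      rw [intervalIntegral.integral_neg] at h
      linarith
    have up : ∫ r in α..L, gf L c d c d (0, r) ≤ EV := by
      refine le_trans ?_ (hP.en0 L hαL)
      apply intervalIntegral.integral_mono_on hαL
        ((by unfold gf; fun_prop : Continuous _).intervalIntegrable _ _)
        ((by fun_prop : Continuous _).intervalIntegrable _ _)
      intro r hr
      have h2 : 0 < r := by linarith [hr.1]
      have h3 := eta_le_one (x := 0 + r) hL0 (by linarith)
      have h4 := eta_nonneg L (0 + r)
      simp only [gf]
      have : c (0,r) * c (0,r) + d (0,r) * d (0,r) = c (0,r)^2 + d (0,r)^2 := by ring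
      rw [this]
      gcongr
      exact mul_le_of_le_one_left (by positivity) h3
    have lo : (1 - (T+Λ)/L)^2 * X ≤ ∫ r in α..L, gf L c d c d (T, r) := by
      have cgf : Continuous fun r => gf L c d c d (T, r) := by unfold gf; fun_prop
      calc _ = ∫ r in α..Λ, (1 - (T+Λ)/L)^2 * ((c (T,r)^2 + d (T,r)^2) * r^3) := by
            rw [intervalIntegral.integral_const_mul]
        _ ≤ ∫ r in α..Λ, gf L c d c d (T, r) := by
            apply intervalIntegral.integral_mono_on hΛ
              ((by fun_prop : Continuous _).intervalIntegrable _ _)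
              (cgf.intervalIntegrable _ _)
            intro r hr
            have h2 : 0 < r := by linarith [hr.1]
            have q1 : (T+Λ)/L ≤ 1 := by rw [div_le_one hL0]; exact hL.le
            have q2 : (T+r)/L ≤ (T+Λ)/L := by gcongr; exact hr.2
            have : (1 - (T+Λ)/L)^2 ≤ eta L (T + r) := by
              unfold eta
              have : 0 ≤ 1 - (T+Λ)/L := by linarith
              gcongr
              exact le_max_of_le_right (by linarith)
            simp only [gf]
            calc _ ≤ eta L (T+r) * ((c (T,r)^2 + d (T,r)^2) * r^3) := by gcongr
              _ = _ := by ring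
        _ ≤ _ := by
            apply intervalIntegral.integral_mono_interval le_rfl hΛ (by linarith)
            · refine (ae_restrict_mem measurableSet_Ioc).mono fun r hr => ?_
              have h2 : 0 < r := by linarith [hr.1]
              have h4 := eta_nonneg L (T + r)
              simp only [gf, Pi.zero_apply]
              have := mul_self_nonneg (c (T,r))
              have := mul_self_nonneg (d (T,r))
              positivity
            · exact cgf.intervalIntegrable _ _
    linarith
  have lim : Tendsto (fun L : ℝ => (1 - (T+Λ)/L)^2 * X) atTop (nhds ((1 - 0)^2 * X)) := by
    apply Tendsto.mul_const
    apply Tendsto.pow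
    apply Tendsto.const_sub
    exact Tendsto.const_div_atTop tendsto_id _
  have := le_of_tendsto lim (by filter_upwards [eventually_gt_atTop (T+Λ)] with L h using hL L h)
  simpa using this

end

structure LinHyp (ρ E K Φ : ℝ) (a b F : ℝ × ℝ → ℝ) (U : ℝ → ℝ) : Prop where
  Fb : ∀ q : ℝ × ℝ, ρ + |q.1| < q.2 → |F q| ≤ Φ / q.2^5
  a0 : ∀ r, ρ < r → a (0, r) = 0
  hU : ∀ r, ρ < r → HasDerivAt U (b (0,r)) r
  Ub : ∀ r, ρ < r → |U r| ≤ K / r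
  en : ∀ t x Λ, 0 ≤ t → ρ + t < x → x ≤ Λ → ∫ r in x..Λ, (a (t,r)^2 + b (t,r)^2) * r^3 ≤ E
  van : ∀ ε, 0 < ε → ∃ T, 0 < T ∧ ∀ x Λ, ρ + T < x → x ≤ Λ →
    ∫ r in x..Λ, (a (T,r)^2 + b (T,r)^2) * r^3 ≤ ε

lemma abs_int_le {f g : ℝ → ℝ} {a b : ℝ} (hab : a ≤ b) (h : ∀ x ∈ Ioc a b, |f x| ≤ g x)
    (hg : IntervalIntegrable g volume a b) : |∫ x in a..b, f x| ≤ ∫ x in a..b, g x := by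
  rw [← Real.norm_eq_abs]
  exact intervalIntegral.norm_integral_le_of_norm_le hab (Eventually.of_forall h) hg

section
variable {ρ α β EV E K Φ : ℝ} {m U : ℝ → ℝ} {c d ct cr dr a b F a1 a2 b2 : ℝ × ℝ → ℝ}

lemma Sys.slice_a (hS : Sys ρ a b F a1 a2 b2) {t x y : ℝ} (ht : 0 ≤ t) (hx : ρ + t < x) :
    ContinuousOn (fun r => a (t, r)) (Icc x y) := by
  intro r hr
  have := (hS.ha (t,r) (by simp [abs_of_nonneg ht]; linarith [hr.1])).continuousAt
  exact (this.comp (f := fun r => (t, r)) (by fun_prop)).continuousWithinAt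

lemma Sys.slice_b (hS : Sys ρ a b F a1 a2 b2) {t x y : ℝ} (ht : 0 ≤ t) (hx : ρ + t < x) :
    ContinuousOn (fun r => b (t, r)) (Icc x y) := by
  intro r hr
  have := (hS.hb (t,r) (by simp [abs_of_nonneg ht]; linarith [hr.1])).continuousAt
  exact (this.comp (f := fun r => (t, r)) (by fun_prop)).continuousWithinAt

/- energy-type bound on part of slice -/
lemma slice_int (hS : Sys ρ a b F a1 a2 b2) (hP : TestPkg α β EV m c d ct cr dr)
    {t x y : ℝ} (ht : 0 ≤ t) (hx : ρ + t < x) :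
    ContinuousOn (fun r => (a (t,r)^2 + b (t,r)^2) * r^3) (Icc x y) := by
  have ca := hS.slice_a (y := y) ht hx
  have cb := hS.slice_b (y := y) ht hx
  exact ((ca.pow 2).add (cb.pow 2)).mul (by fun_prop)

lemma pkg_energy' (hα : 0 < α) (hP : TestPkg α β EV m c d ct cr dr) (T x Λ : ℝ) (hT : 0 ≤ T)
    (hx : α ≤ x) (hΛ : x ≤ Λ) : ∫ r in x..Λ, (c (T,r)^2 + d (T,r)^2) * r^3 ≤ EV := by
  have cc := hP.contc
  have cd := hP.contd
  refine le_trans ?_ (pkg_energy hα hP T Λ hT (hx.trans hΛ))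
  apply intervalIntegral.integral_mono_interval hx hΛ le_rfl
  · refine (ae_restrict_mem measurableSet_Ioc).mono fun r hr => ?_
    have h2 : 0 < r := by linarith [hr.1]
    simp only [Pi.zero_apply]
    positivity
  · exact (by fun_prop : Continuous _).intervalIntegrable _ _

/- bound on the final slice -/
lemma gf_T (hα : 0 < α) (hρ : 0 ≤ ρ) (hρα : ρ < α) (hP : TestPkg α β EV m c d ct cr dr)
    (hS : Sys ρ a b F a1 a2 b2) (L T : ℝ) (hT : 0 ≤ T) (hL : α + T < L) (κ ε : ℝ) (hκ : 0 < κ)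
    (hε : ∀ x Λ, ρ + T < x → x ≤ Λ → ∫ r in x..Λ, (a (T,r)^2 + b (T,r)^2) * r^3 ≤ ε) :
    |∫ r in α..L, gf L a b c d (T, r)| ≤ (1/(2*κ)) * ε + (κ/2) * EV := by
  have hL0 : 0 < L := by linarith
  have cgf : ContinuousOn (fun r => gf L a b c d (T, r)) (Icc α L) := by
    intro r hr
    have := (green_pt hα hρ hρα hP hS L (T,r) hT hr.1).1.continuousAt
    exact (this.comp (f := fun r => (T, r)) (by fun_prop)).continuousWithinAt
  have i1 : IntervalIntegrable (fun r => gf L a b c d (T, r)) volume α (α+T) := by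
    apply ContinuousOn.intervalIntegrable
    rw [uIcc_of_le (by linarith)]
    exact cgf.mono (Icc_subset_Icc_right hL.le)
  have i2 : IntervalIntegrable (fun r => gf L a b c d (T, r)) volume (α+T) L := by
    apply ContinuousOn.intervalIntegrable
    rw [uIcc_of_le (by linarith)]
    exact cgf.mono (Icc_subset_Icc_left (by linarith))
  have z : ∫ r in α..(α+T), gf L a b c d (T, r) = 0 := by
    rw [intervalIntegral.integral_congr (g := fun _ => (0:ℝ))]
    · simp
    · intro r hr
      rw [uIcc_of_le (by linarith)] at hr
      have := hP.supp T r (by linarith [hr.1]) hr.2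
      simp [gf, this.1, this.2]
  rw [← intervalIntegral.integral_add_adjacent_intervals i1 i2, z, zero_add]
  have cc := hP.contc
  have cd := hP.contd
  have s1 := slice_int (y := L) hS hP hT (by linarith : ρ + T < α + T)
  have j1 : IntervalIntegrable (fun r => (a (T,r)^2 + b (T,r)^2) * r^3) volume (α+T) L := by
    apply ContinuousOn.intervalIntegrable
    rwa [uIcc_of_le hL.le]
  have j2 : IntervalIntegrable (fun r => (c (T,r)^2 + d (T,r)^2) * r^3) volume (α+T) L :=
    (by fun_prop : Continuous _).intervalIntegrable _ _
  calc |∫ r in (α+T)..L, gf L a b c d (T, r)| ≤ ∫ r in (α+T)..L,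
      ((1/(2*κ)) * ((a (T,r)^2 + b (T,r)^2) * r^3) + (κ/2) * ((c (T,r)^2 + d (T,r)^2) * r^3)) := by
        apply abs_int_le hL.le
        · refine fun r hr => ?_
          have h2 : 0 < r := by linarith [hr.1]
          have h3 := eta_le_one (x := T + r) hL0 (by linarith)
          have h4 := eta_nonneg L (T + r)
          simp only [gf]
          rw [abs_mul, abs_of_nonneg (by positivity : 0 ≤ eta L (T+r) * r^3)]
          have am : ∀ x y : ℝ, |x*y| ≤ (1/(2*κ)) * x^2 + (κ/2) * y^2 := by
            intro x y
            have : (1/(2*κ)) * x^2 + (κ/2) * y^2 - x*y = (1/(2*κ)) * (x - κ*y)^2 := by field_simp; ring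
            have : (1/(2*κ)) * x^2 + (κ/2) * y^2 + x*y = (1/(2*κ)) * (x + κ*y)^2 := by field_simp; ring
            have : 0 ≤ (1/(2*κ)) * (x - κ*y)^2 := by positivity
            have : 0 ≤ (1/(2*κ)) * (x + κ*y)^2 := by positivity
            rw [abs_le]; constructor <;> linarith
          have e1 : |a (T,r) * c (T,r) + b (T,r) * d (T,r)| ≤
            (1/(2*κ)) * (a (T,r)^2 + b (T,r)^2) + (κ/2) * (c (T,r)^2 + d (T,r)^2) := by
            refine (abs_add_le _ _).trans ?_
            have := am (a (T,r)) (c (T,r))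
            have := am (b (T,r)) (d (T,r))
            linarith
          calc _ ≤ ((1/(2*κ)) * (a (T,r)^2 + b (T,r)^2) + (κ/2) * (c (T,r)^2 + d (T,r)^2)) * (1 * r^3) := by
                gcongr
            _ = _ := by ring
        · exact (j1.const_mul _).add (j2.const_mul _)
    _ = (1/(2*κ)) * (∫ r in (α+T)..L, (a (T,r)^2 + b (T,r)^2) * r^3) +
        (κ/2) * ∫ r in (α+T)..L, (c (T,r)^2 + d (T,r)^2) * r^3 := by
        rw [intervalIntegral.integral_add (j1.const_mul _) (j2.const_mul _),
          intervalIntegral.integral_const_mul, intervalIntegral.integral_const_mul]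
    _ ≤ _ := by
        gcongr
        · exact hε _ _ (by linarith) hL.le
        · exact pkg_energy' hα hP T _ _ hT (by linarith) hL.le

lemma gD_slice (hα : 0 < α) (hρ : 0 ≤ ρ) (hρα : ρ < α) (hP : TestPkg α β EV m c d ct cr dr)
    (hS : Sys ρ a b F a1 a2 b2) (hΦ : 0 ≤ Φ) (hE : 0 ≤ E) (hEV : 0 ≤ EV) (hH : LinHyp ρ E K Φ a b F U) (L t : ℝ)
    (ht : 0 ≤ t) (hL : α < L) :
    |∫ r in α..L, gD L a b c d F (t, r)| ≤
      (∫ r in α..L, Φ / (max α r)^2 * |c (t,r)|) + (2/L) * (E + EV) := by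
  have hL0 : 0 < L := by linarith
  have cc := hP.contc
  have cd := hP.contd
  have cm : Continuous fun r => Φ / (max α r)^2 * |c (t,r)| := by
    refine (Continuous.div continuous_const (by fun_prop) fun r => ?_).mul (by fun_prop)
    have : 0 < max α r := lt_max_of_lt_left hα
    positivity
  have nn : ∀ r, 0 ≤ Φ / (max α r)^2 * |c (t,r)| := fun r => by positivity
  have zero : ∀ r, α ≤ r → r ≤ α + t → gD L a b c d F (t, r) = 0 := by
    intro r h1 h2
    have := hP.supp t r (by linarith) h2
    simp [gD, this.1, this.2]
  rcases le_or_gt L (α + t) with h | h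
  · have z : ∫ r in α..L, gD L a b c d F (t, r) = 0 := by
      rw [intervalIntegral.integral_congr (g := fun _ => (0:ℝ))]
      · simp
      · intro r hr
        rw [uIcc_of_le hL.le] at hr
        exact zero r hr.1 (hr.2.trans h)
    rw [z, abs_zero]
    have := intervalIntegral.integral_nonneg (μ := volume) hL.le fun r _ => nn r
    positivity
  · have cD : ContinuousOn (fun r => gD L a b c d F (t, r)) (Icc α L) := by
      intro r hr
      have := (green_pt hα hρ hρα hP hS L (t,r) ht hr.1).2.2.2
      exact (this.comp (f := fun r => (t, r)) (by fun_prop)).continuousWithinAt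
    have i1 : IntervalIntegrable (fun r => gD L a b c d F (t, r)) volume α (α+t) := by
      apply ContinuousOn.intervalIntegrable
      rw [uIcc_of_le (by linarith)]
      exact cD.mono (Icc_subset_Icc_right h.le)
    have i2 : IntervalIntegrable (fun r => gD L a b c d F (t, r)) volume (α+t) L := by
      apply ContinuousOn.intervalIntegrable
      rw [uIcc_of_le (by linarith)]
      exact cD.mono (Icc_subset_Icc_left (by linarith))
    have z : ∫ r in α..(α+t), gD L a b c d F (t, r) = 0 := by
      rw [intervalIntegral.integral_congr (g := fun _ => (0:ℝ))]
      · simp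
      · intro r hr
        rw [uIcc_of_le (by linarith)] at hr
        exact zero r hr.1 hr.2
    rw [← intervalIntegral.integral_add_adjacent_intervals i1 i2, z, zero_add]
    have s1 := slice_int (y := L) hS hP ht (by linarith : ρ + t < α + t)
    have j1 : IntervalIntegrable (fun r => (a (t,r)^2 + b (t,r)^2) * r^3) volume (α+t) L := by
      apply ContinuousOn.intervalIntegrable
      rwa [uIcc_of_le h.le]
    have j2 : IntervalIntegrable (fun r => (c (t,r)^2 + d (t,r)^2) * r^3) volume (α+t) L :=
      (by fun_prop : Continuous _).intervalIntegrable _ _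
    calc |∫ r in (α+t)..L, gD L a b c d F (t, r)| ≤ ∫ r in (α+t)..L,
        (Φ / (max α r)^2 * |c (t,r)| + (2/L) * ((a (t,r)^2 + b (t,r)^2) * r^3 + (c (t,r)^2 + d (t,r)^2) * r^3)) := by
          apply abs_int_le h.le
          · refine fun r hr => ?_
            have hαr : α ≤ r := by linarith [hr.1]
            have h2 : 0 < r := by linarith [hr.1]
            have h3 := eta_le_one (x := t + r) hL0 (by linarith)
            have h4 := eta_nonneg L (t + r)
            have h5 := eta'_abs (x := t + r) hL0 (by linarith)
            have h6 := hH.Fb (t,r) (by simp [abs_of_nonneg ht]; linarith [hr.1])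
            simp only at h6
            simp only [gD]
            refine (abs_add_le _ _).trans (add_le_add ?_ ?_)
            · rw [max_eq_right hαr, abs_mul, abs_of_nonneg (by positivity), abs_mul]
              calc _ ≤ 1 * r^3 * (|c (t,r)| * (Φ / r^5)) := by gcongr
                _ = _ := by field_simp
            · rw [abs_mul, abs_mul, abs_of_pos (by positivity : 0 < r^3)]
              have : |(a (t,r) - b (t,r)) * (c (t,r) - d (t,r))| ≤
                  a (t,r)^2 + b (t,r)^2 + (c (t,r)^2 + d (t,r)^2) := by
                rw [abs_le]; constructor <;>
                nlinarith [sq_nonneg (a (t,r) - b (t,r) + (c (t,r) - d (t,r))),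
                  sq_nonneg (a (t,r) - b (t,r) - (c (t,r) - d (t,r))),
                  sq_nonneg (a (t,r) + b (t,r)), sq_nonneg (c (t,r) + d (t,r))]
              calc _ ≤ 2/L * r^3 * (a (t,r)^2 + b (t,r)^2 + (c (t,r)^2 + d (t,r)^2)) := by gcongr
                _ = _ := by ring
          · exact (cm.intervalIntegrable _ _).add ((j1.add j2).const_mul _)
      _ = (∫ r in (α+t)..L, Φ / (max α r)^2 * |c (t,r)|) + (2/L) * ((∫ r in (α+t)..L, (a (t,r)^2 + b (t,r)^2) * r^3) +
          ∫ r in (α+t)..L, (c (t,r)^2 + d (t,r)^2) * r^3) := by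
          rw [intervalIntegral.integral_add (cm.intervalIntegrable _ _) ((j1.add j2).const_mul _),
            intervalIntegral.integral_const_mul, intervalIntegral.integral_add j1 j2]
      _ ≤ _ := by
          gcongr
          · apply intervalIntegral.integral_mono_interval (by linarith) h.le le_rfl
            · exact Eventually.of_forall fun r => nn r
            · exact cm.intervalIntegrable _ _
          · exact hH.en _ _ _ ht (by linarith) h.le
          · exact pkg_energy' hα hP t _ _ ht (by linarith) h.le

lemma gD_total (hα : 0 < α) (hβ : 0 ≤ β) (hρ : 0 ≤ ρ) (hρα : ρ < α) (hP : TestPkg α β EV m c d ct cr dr)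
    (hS : Sys ρ a b F a1 a2 b2) (hΦ : 0 ≤ Φ) (hE : 0 ≤ E) (hEV : 0 ≤ EV) (hH : LinHyp ρ E K Φ a b F U) (L T : ℝ)
    (hT : 0 ≤ T) (hL : α < L) :
    |∫ t in (0:ℝ)..T, ∫ r in α..L, gD L a b c d F (t, r)| ≤
      2 * Real.pi * Φ * β / α^2 + T * ((2/L) * (E + EV)) := by
  have hpi := Real.pi_pos
  have cc := hP.contc
  have cm : Continuous fun q : ℝ × ℝ => Φ / (max α q.2)^2 * |c (q.1,q.2)| := by
    refine (Continuous.div continuous_const (by fun_prop) fun r => ?_).mul (by fun_prop)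
    have : 0 < max α r.2 := lt_max_of_lt_left hα
    positivity
  have cI : Continuous fun t : ℝ => ∫ r in α..L, Φ / (max α r)^2 * |c (t,r)| := by
    apply intervalIntegral.continuous_parametric_intervalIntegral_of_continuous'
    exact cm
  have cJ : Continuous fun r : ℝ => ∫ t in (0:ℝ)..T, Φ / (max α r)^2 * |c (t,r)| := by
    apply intervalIntegral.continuous_parametric_intervalIntegral_of_continuous'
    exact cm.comp continuous_swap
  calc _ ≤ ∫ t in (0:ℝ)..T, ((∫ r in α..L, Φ / (max α r)^2 * |c (t,r)|) + (2/L) * (E + EV)) := by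
        apply abs_int_le hT
        · exact fun t ht => gD_slice hα hρ hρα hP hS hΦ hE hEV hH L t ht.1.le hL
        · exact (by fun_prop : Continuous _).intervalIntegrable _ _
    _ = (∫ r in α..L, ∫ t in (0:ℝ)..T, Φ / (max α r)^2 * |c (t,r)|) + T * ((2/L) * (E + EV)) := by
        rw [intervalIntegral.integral_add (cI.intervalIntegrable _ _) (continuous_const.intervalIntegrable _ _),
          swap_cont _ _ _ _ _ cm]
        simp only [intervalIntegral.integral_const, smul_eq_mul, sub_zero]
    _ ≤ _ := by
        gcongr
        have F : ∀ x ∈ uIcc α L, HasDerivAt (fun r : ℝ => -(2 * Real.pi * Φ * β * (r⁻¹)^2))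
            (Φ * (Real.pi * (4 * β)) / x^3) x := by
          intro x hx
          rw [uIcc_of_le hL.le] at hx
          have hx0 : x ≠ 0 := (hα.trans_le hx.1).ne'
          refine ((((hasDerivAt_inv hx0).pow 2).const_mul _)).neg.congr_deriv ?_
          norm_num
          field_simp
          ring
        have cF : ContinuousOn (fun x : ℝ => Φ * (Real.pi * (4 * β)) / x^3) (uIcc α L) := by
          intro x hx
          rw [uIcc_of_le hL.le] at hx
          have hx0 : 0 < x := (hα.trans_le hx.1)
          exact ContinuousAt.continuousWithinAt (by fun_prop (disch := positivity))
        calc _ ≤ ∫ x in α..L, Φ * (Real.pi * (4 * β)) / x^3 := by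
              apply intervalIntegral.integral_mono_on hL.le (cJ.intervalIntegrable _ _) cF.intervalIntegrable
              intro r hr
              have hr0 : 0 < r := hα.trans_le hr.1
              rw [intervalIntegral.integral_const_mul, max_eq_right hr.1]
              calc _ ≤ Φ / r^2 * (Real.pi * (4 * β) / r) := by
                    gcongr; exact hP.cint T r hT hr0
                _ = _ := by field_simp
          _ ≤ _ := by
              rw [ftc_cont _ _ _ _ F cF]
              have hL0 : 0 < L := by linarith
              have : 0 ≤ 2 * Real.pi * Φ * β * (L⁻¹)^2 := by positivity
              have e : 2 * Real.pi * Φ * β / α^2 = 2 * Real.pi * Φ * β * (α⁻¹)^2 := by field_simp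
              rw [e]; linarith

end

section
variable {ρ α β EV E K Φ : ℝ} {m U : ℝ → ℝ} {c d ct cr dr a b F a1 a2 b2 : ℝ × ℝ → ℝ}

lemma data_term (hα : 0 < α) (hαβ : α < β) (hK : 0 ≤ K) (hρα : ρ < α) (hρ : 0 ≤ ρ) (hP : TestPkg α β EV m c d ct cr dr)
    (hS : Sys ρ a b F a1 a2 b2) (hH : LinHyp ρ E K Φ a b F U) (M : ℝ)
    (hM : ∀ r, α ≤ r → |∫ x in (0:ℝ)..r, x^2 * m x| ≤ M) (L : ℝ) (hL : β < L) :
    |(∫ r in α..L, gf L a b c d (0, r)) + ∫ r in α..β, U r * (r^2 * m r)| ≤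
      (2/L) * K * M * Real.log (L/α) + (2*β/L) * ∫ r in α..β, |U r * (r^2 * m r)| := by
  have hL0 : 0 < L := by linarith
  have hαL : α ≤ L := by linarith
  have hm := hP.mcont
  have hM0 : 0 ≤ M := (abs_nonneg _).trans (hM α le_rfl)
  set μ := fun r : ℝ => ∫ x in (0:ℝ)..r, x^2 * m x with hμ
  have hμd : ∀ r, HasDerivAt μ (r^2 * m r) r := fun r =>
    ((by fun_prop : Continuous fun y : ℝ => y^2 * m y).integral_hasStrictDerivAt 0 r).hasDerivAt
  have hμc : Continuous μ := continuous_iff_continuousAt.2 fun x => (hμd x).continuousAt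
  have hμα : μ α = 0 := by
    have h1 := hP.d0 α hα
    rw [(hP.supp 0 α hα.le (by simp)).2] at h1
    simp only [hμ]; linarith
  have cU : ContinuousOn U (Icc α L) := fun r hr =>
    (hH.hU r (by linarith [hr.1])).continuousAt.continuousWithinAt
  have cb : ContinuousOn (fun r => b (0,r)) (Icc α L) := hS.slice_b le_rfl (by linarith)
  have ce := eta_cont L
  have ce' := eta'_cont L
  have e0 : ∫ r in α..L, gf L a b c d (0, r) = ∫ r in α..L, b (0,r) * (μ r * eta L r) := by
    apply intervalIntegral.integral_congr
    intro r hr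
    rw [uIcc_of_le hαL] at hr
    have h1 := hP.d0 r (by linarith [hr.1])
    have h2 := hH.a0 r (by linarith [hr.1])
    simp only [gf, h2, zero_add, hμ]
    rw [← h1]; ring
  have k1 : ContinuousOn (fun r => b (0,r) * (μ r * eta L r)) (Icc α L) := cb.mul (by fun_prop)
  have k2 : ContinuousOn (fun r => U r * (r^2 * m r) * eta L r) (Icc α L) := (cU.mul (by fun_prop)).mul (by fun_prop)
  have k3 : ContinuousOn (fun r => U r * (μ r * eta' L r)) (Icc α L) := cU.mul (by fun_prop)
  have k4 : ContinuousOn (fun r => U r * (r^2 * m r)) (Icc α L) := (cU.mul (by fun_prop))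
  have ii : ∀ {f : ℝ → ℝ}, ContinuousOn f (Icc α L) → IntervalIntegrable f volume α L := by
    intro f hf; apply ContinuousOn.intervalIntegrable; rwa [uIcc_of_le hαL]
  have hft := ftc_cont (fun r => b (0,r) * (μ r * eta L r) + U r * (r^2 * m r) * eta L r + U r * (μ r * eta' L r))
    (fun r => U r * (μ r * eta L r)) α L (by
      intro r hr
      rw [uIcc_of_le hαL] at hr
      refine ((hH.hU r (by linarith [hr.1])).mul ((hμd r).mul (eta_deriv L r))).congr_deriv ?_
      simp only [Pi.mul_apply]
      ring)
    (by rw [uIcc_of_le hαL]; exact (k1.add k2).add k3)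
  rw [intervalIntegral.integral_add ((ii k1).add (ii k2)) (ii k3),
    intervalIntegral.integral_add (ii k1) (ii k2), eta_zero hL0 le_rfl, hμα] at hft
  have sub1 : IntervalIntegrable (fun r => U r * (r^2 * m r) * eta L r) volume α β := by
    apply ContinuousOn.intervalIntegrable; rw [uIcc_of_le hαβ.le]; exact k2.mono (Icc_subset_Icc_right hL.le)
  have sub2 : IntervalIntegrable (fun r => U r * (r^2 * m r) * eta L r) volume β L := by
    apply ContinuousOn.intervalIntegrable; rw [uIcc_of_le hL.le]; exact k2.mono (Icc_subset_Icc_left hαβ.le)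
  have sub3 : IntervalIntegrable (fun r => U r * (r^2 * m r)) volume α β := by
    apply ContinuousOn.intervalIntegrable; rw [uIcc_of_le hαβ.le]; exact k4.mono (Icc_subset_Icc_right hL.le)
  have zz : ∫ r in β..L, U r * (r^2 * m r) * eta L r = 0 := by
    rw [intervalIntegral.integral_congr (g := fun _ => (0:ℝ))]
    · simp
    · intro r hr; rw [uIcc_of_le hL.le] at hr; simp [hP.mz r hr.1]
  rw [← intervalIntegral.integral_add_adjacent_intervals sub1 sub2, zz] at hft
  have p1 : |∫ r in α..L, U r * (μ r * eta' L r)| ≤ (2/L) * K * M * Real.log (L/α) := by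
    have hd : ∀ x ∈ uIcc α L, HasDerivAt (fun r => (2/L) * K * M * Real.log r) ((2/L)*K*M*x⁻¹) x := by
      intro x hx
      rw [uIcc_of_le hαL] at hx
      exact (Real.hasDerivAt_log (by linarith [hx.1])).const_mul _
    have hcd : ContinuousOn (fun x : ℝ => (2/L)*K*M*x⁻¹) (uIcc α L) := by
      intro x hx
      rw [uIcc_of_le hαL] at hx
      have : x ≠ 0 := by linarith [hx.1]
      exact ContinuousAt.continuousWithinAt (by fun_prop (disch := assumption))
    have := ftc_cont _ _ _ _ hd hcd
    rw [Real.log_div hL0.ne' hα.ne', mul_sub, ← this]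
    apply abs_int_le hαL _ hcd.intervalIntegrable
    intro r hr
    have hr0 : 0 < r := by linarith [hr.1]
    have h1 := hH.Ub r (by linarith [hr.1])
    have h2 := hM r hr.1.le
    have h3 := eta'_abs (x := r) hL0 hr0.le
    rw [abs_mul, abs_mul]
    calc _ ≤ (K/r) * (M * (2/L)) := by gcongr
      _ = _ := by field_simp
  have p2 : |(∫ r in α..β, U r * (r^2 * m r)) - ∫ r in α..β, U r * (r^2 * m r) * eta L r| ≤
      (2*β/L) * ∫ r in α..β, |U r * (r^2 * m r)| := by
    rw [← intervalIntegral.integral_sub sub3 sub1, ← intervalIntegral.integral_const_mul]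
    apply abs_int_le hαβ.le _ (sub3.abs.const_mul _)
    intro r hr
    have hr0 : 0 < r := by linarith [hr.1]
    have : U r * (r^2 * m r) - U r * (r^2 * m r) * eta L r = (1 - eta L r) * (U r * (r^2 * m r)) := by ring
    rw [this, abs_mul]
    gcongr
    have h1 := eta_le_one (x := r) hL0 hr0.le
    rw [abs_of_nonneg (by linarith)]
    have h2 : r / L ≤ β / L := by gcongr; exact hr.2
    have h3 : β / L ≤ 1 := by rw [div_le_one hL0]; exact hL.le
    have h4 : 0 ≤ r / L := by positivity
    unfold eta
    rw [max_eq_right (by linarith)]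
    have : 2 * β / L = 2 * (β / L) := by ring
    nlinarith
  rw [e0]
  have : (∫ r in α..L, b (0,r) * (μ r * eta L r)) + ∫ r in α..β, U r * (r^2 * m r) =
      -(∫ r in α..L, U r * (μ r * eta' L r)) + ((∫ r in α..β, U r * (r^2 * m r)) - ∫ r in α..β, U r * (r^2 * m r) * eta L r) := by
    linarith
  rw [this]
  refine (abs_add_le _ _).trans (add_le_add ?_ p2)
  rw [abs_neg]; exact p1

lemma lin_core (hα : 0 < α) (hαβ : α < β) (hK : 0 ≤ K) (hΦ : 0 ≤ Φ) (hE : 0 ≤ E) (hEV : 0 ≤ EV) (hρα : ρ < α)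
    (hρ : 0 ≤ ρ) (hP : TestPkg α β EV m c d ct cr dr)
    (hS : Sys ρ a b F a1 a2 b2) (hH : LinHyp ρ E K Φ a b F U) :
    |∫ r in α..β, U r * (r^2 * m r)| ≤ 2 * Real.pi * Φ * β / α^2 := by
  obtain ⟨M, hM⟩ := hP.mub
  set X := ∫ r in α..β, U r * (r^2 * m r) with hX
  set N := ∫ r in α..β, |U r * (r^2 * m r)| with hN
  apply le_of_forall_pos_le_add
  intro τ hτ
  set κ := 2 * τ / (1 + EV) with hκd
  have hκ : 0 < κ := by positivity
  obtain ⟨T, hT, hTε⟩ := hH.van (κ^2) (by positivity)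
  have bound : ∀ L, β + T < L → |X| ≤ τ + 2 * Real.pi * Φ * β / α^2 + T * ((2/L) * (E + EV)) +
      ((2/L) * K * M * Real.log (L/α) + (2*β/L) * N) := by
    intro L hL
    have g := green hα hρ hρα hP hS L T (by linarith) hT.le
    have g1 := gD_total hα (by linarith) hρ hρα hP hS hΦ hE hEV hH L T hT.le (by linarith)
    have g2 := gf_T hα hρ hρα hP hS L T hT.le (by linarith) κ (κ^2) hκ hTε
    have g3 := data_term hα hαβ hK hρα hρ hP hS hH M hM L (by linarith)
    have e : (1/(2*κ)) * κ^2 + (κ/2) * EV = τ := by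
      have : (1/(2*κ)) * κ^2 + (κ/2) * EV = κ * (1 + EV) / 2 := by field_simp
      rw [this, hκd]; field_simp
    rw [e] at g2
    rw [abs_le] at g1 g2 g3 ⊢
    constructor <;> linarith [g1.1, g1.2, g2.1, g2.2, g3.1, g3.2]
  have lim0 : Tendsto (fun L : ℝ => L⁻¹) atTop (nhds 0) := tendsto_inv_atTop_zero
  have lim1 : Tendsto (fun L : ℝ => Real.log L / L) atTop (nhds 0) := by
    have := Real.isLittleO_log_id_atTop.tendsto_div_nhds_zero
    simpa using this
  have lim : Tendsto (fun L : ℝ => τ + 2 * Real.pi * Φ * β / α^2 + (T * 2 * (E + EV) * L⁻¹ +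
      (2 * K * M * (Real.log L / L) - 2 * K * M * Real.log α * L⁻¹ + 2*β * N * L⁻¹))) atTop
      (nhds (τ + 2 * Real.pi * Φ * β / α^2 + (T * 2 * (E + EV) * 0 +
      (2 * K * M * 0 - 2 * K * M * Real.log α * 0 + 2*β * N * 0)))) := by
    apply Tendsto.const_add
    exact (lim0.const_mul _).add (((lim1.const_mul _).sub (lim0.const_mul _)).add (lim0.const_mul _))
  have := ge_of_tendsto lim (b := |X|) (by
    filter_upwards [eventually_gt_atTop (β + T)] with L hL
    refine (bound L hL).trans (le_of_eq ?_)
    have hL0 : 0 < L := by linarith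
    rw [Real.log_div hL0.ne' hα.ne']
    ring)
  linarith

end

lemma bump_exists {α β x0 δ : ℝ} (hδ : 0 < δ) (h1 : α ≤ x0 - δ) (h2 : x0 + δ ≤ β) :
    ∃ g, IsBump α β g ∧ ∀ x, δ ≤ |x - x0| → g x = 0 := by
  let f : ContDiffBump x0 := ⟨δ/2, δ, by positivity, by linarith⟩
  have hs := f.support_normed_eq (μ := volume)
  have hz : ∀ x, δ ≤ |x - x0| → f.normed volume x = 0 := by
    intro x hx
    by_contra hne
    have : x ∈ Function.support (f.normed volume) := hne
    rw [hs, Metric.mem_ball, Real.dist_eq] at this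
    exact absurd this (not_lt.2 hx)
  refine ⟨f.normed volume, ⟨f.contDiff_normed, fun x => f.nonneg_normed x, ?_, ?_, ?_⟩, hz⟩
  · intro x hx; apply hz; rw [abs_of_nonpos (by linarith)]; linarith
  · intro x hx; apply hz; rw [abs_of_nonneg (by linarith)]; linarith
  · rw [intervalIntegral.integral_eq_integral_of_support_subset, f.integral_normed]
    rw [hs]
    intro x hx
    rw [Metric.mem_ball, Real.dist_eq, abs_lt] at hx
    change -δ < x - x0 ∧ x - x0 < δ at hx
    constructor <;> linarith [hx.1, hx.2]

lemma bump_conc {α β x0 δ ε : ℝ} {g h : ℝ → ℝ} (hαβ : α ≤ β) (hg : IsBump α β g)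
    (hz : ∀ x, δ ≤ |x - x0| → g x = 0) (hh : ContinuousOn h (Icc α β))
    (hε : ∀ x ∈ Icc α β, |x - x0| < δ → |h x - h x0| ≤ ε) :
    |(∫ x in α..β, h x * g x) - h x0| ≤ ε := by
  have gc := hg.cont
  have i1 : IntervalIntegrable (fun x => h x * g x) volume α β := by
    apply ContinuousOn.intervalIntegrable; rw [uIcc_of_le hαβ]; exact hh.mul gc.continuousOn
  have i2 : IntervalIntegrable (fun x => h x0 * g x) volume α β :=
    (by fun_prop : Continuous _).intervalIntegrable _ _
  have e1 : h x0 = ∫ x in α..β, h x0 * g x := by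
    rw [intervalIntegral.integral_const_mul, hg.int_one, mul_one]
  have e2 : ε = ∫ x in α..β, ε * g x := by
    rw [intervalIntegral.integral_const_mul, hg.int_one, mul_one]
  have : (∫ x in α..β, h x * g x) - h x0 = ∫ x in α..β, (h x * g x - h x0 * g x) := by
    rw [intervalIntegral.integral_sub i1 i2, ← e1]
  rw [this]
  conv_rhs => rw [e2]
  apply abs_int_le hαβ _ ((by fun_prop : Continuous _).intervalIntegrable _ _)
  intro x hx
  rw [← sub_mul, abs_mul, abs_of_nonneg (hg.nonneg x)]
  rcases lt_or_ge (|x - x0|) δ with hl | hl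
  · exact mul_le_mul_of_nonneg_right (hε x ⟨hx.1.le, hx.2⟩ hl) (hg.nonneg x)
  · simp [hz x hl]

theorem lin_est {ρ E K Φ : ℝ} {a b F a1 a2 b2 : ℝ × ℝ → ℝ} {U : ℝ → ℝ} (hρ : 0 ≤ ρ) (hE : 0 ≤ E)
    (hK : 0 ≤ K) (hΦ : 0 ≤ Φ) (hS : Sys ρ a b F a1 a2 b2) (hH : LinHyp ρ E K Φ a b F U)
    (r1 r2 : ℝ) (h1 : ρ < r1) (h12 : r1 ≤ r2) (h2 : r2 ≤ 2 * r1) :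
    |r1^2 * U r1 - r2^2 * U r2| ≤ 100 * Φ / r1 := by
  have hr1 : 0 < r1 := by linarith
  set h := fun r => U r * r^2 with hh
  have ch : ∀ r, ρ < r → ContinuousAt h r := fun r hr =>
    (hH.hU r hr).continuousAt.mul (by fun_prop)
  apply le_of_forall_pos_le_add
  intro ε hε
  obtain ⟨δ1, hδ1, hd1⟩ := Metric.continuousAt_iff.1 (ch r1 h1) (ε/2) (by positivity)
  obtain ⟨δ2, hδ2, hd2⟩ := Metric.continuousAt_iff.1 (ch r2 (by linarith)) (ε/2) (by positivity)
  set δ := min (min δ1 δ2) ((r1 - ρ)/2) with hδ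
  have hδ0 : 0 < δ := by
    apply lt_min (lt_min hδ1 hδ2); linarith
  have l1 : δ ≤ δ1 := (min_le_left _ _).trans (min_le_left _ _)
  have l2 : δ ≤ δ2 := (min_le_left _ _).trans (min_le_right _ _)
  have l3 : δ ≤ (r1 - ρ)/2 := min_le_right _ _
  set α := r1 - δ with hα
  set β := r2 + δ with hβ
  have hα0 : 0 < α := by linarith
  have hαβ : α < β := by linarith
  have hρα : ρ < α := by linarith
  obtain ⟨g1, hg1, z1⟩ := bump_exists (α := α) (β := β) (x0 := r1) hδ0 le_rfl (by linarith)
  obtain ⟨g2, hg2, z2⟩ := bump_exists (α := α) (β := β) (x0 := r2) hδ0 (by linarith) le_rfl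
  obtain ⟨EV, hEV, c, d, ct, cr, dr, hP⟩ := pkg_exists hα0 hαβ hg1 hg2
  have core := lin_core hα0 hαβ hK hΦ hE hEV hρα hρ hP hS hH
  have chI : ContinuousOn h (Icc α β) := fun x hx => (ch x (by linarith [hx.1])).continuousWithinAt
  have b1 := bump_conc hαβ.le hg1 z1 chI (ε := ε/2) (fun x _ hx => by
    have := hd1 (x := x) (by rw [Real.dist_eq]; linarith)
    rw [Real.dist_eq] at this; exact this.le)
  have b2 := bump_conc hαβ.le hg2 z2 chI (ε := ε/2) (fun x _ hx => by
    have := hd2 (x := x) (by rw [Real.dist_eq]; linarith)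
    rw [Real.dist_eq] at this; exact this.le)
  have e : ∫ r in α..β, U r * (r^2 * (g1 r - g2 r)) = (∫ r in α..β, h r * g1 r) - ∫ r in α..β, h r * g2 r := by
    have c1 := hg1.cont
    have c2 := hg2.cont
    rw [← intervalIntegral.integral_sub]
    · congr 1; ext r; simp only [hh]; ring
    · apply ContinuousOn.intervalIntegrable; rw [uIcc_of_le hαβ.le]; exact chI.mul c1.continuousOn
    · apply ContinuousOn.intervalIntegrable; rw [uIcc_of_le hαβ.le]; exact chI.mul c2.continuousOn
  rw [e] at core
  have cst : 2 * Real.pi * Φ * β / α^2 ≤ 100 * Φ / r1 := by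
    have hα2 : r1/2 ≤ α := by linarith
    have hβ2 : β ≤ 3 * r1 := by linarith
    have hpi := Real.pi_lt_d2
    have hpi0 := Real.pi_pos
    have hβ0 : 0 ≤ β := by linarith
    calc _ ≤ 2 * 3.15 * Φ * (3 * r1) / (r1/2)^2 := by gcongr
      _ = 75.6 * Φ / r1 := by field_simp; norm_num; ring
      _ ≤ _ := by gcongr; norm_num
  have f1 : h r1 = r1^2 * U r1 := by simp only [hh]; ring
  have f2 : h r2 = r2^2 * U r2 := by simp only [hh]; ring
  rw [← f1, ← f2]
  rw [abs_le] at core b1 b2 ⊢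
  constructor <;> linarith [core.1, core.2, b1.1, b1.2, b2.1, b2.2]

structure Good (p : ℕ) (R K : ℝ) (u : ℝ → ℝ → ℝ) (ut ur utt utr urr : ℝ × ℝ → ℝ) : Prop where
  hu : ∀ q : ℝ × ℝ, R + |q.1| < q.2 → HasFDerivAt (fun q : ℝ × ℝ => u q.1 q.2) (LL (ut q) (ur q)) q
  hut : ∀ q : ℝ × ℝ, R + |q.1| < q.2 → HasFDerivAt ut (LL (utt q) (utr q)) q
  hur : ∀ q : ℝ × ℝ, R + |q.1| < q.2 → HasFDerivAt ur (LL (utr q) (urr q)) q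
  eq : ∀ q : ℝ × ℝ, R + |q.1| < q.2 → utt q - urr q - (3 / q.2) * ur q = |u q.1 q.2| ^ (p-1) * u q.1 q.2
  en : ∀ t x Λ, R + |t| < x → x ≤ Λ → ∫ r in x..Λ, ((ut (t, r))^2 + (ur (t, r))^2) * r^3 ≤ K^2
  van : ∀ ε > 0, ∃ T0, ∀ t, T0 ≤ |t| → ∀ x Λ, R + |t| < x → x ≤ Λ →
    ∫ r in x..Λ, ((ut (t, r))^2 + (ur (t, r))^2) * r^3 ≤ ε
  ub : ∀ t r, R + |t| < r → |u t r| ≤ K / r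

lemma LL_eq (L : ℝ × ℝ →L[ℝ] ℝ) : L = LL (L (1,0)) (L (0,1)) := by
  ext
  · simp [LL_apply]
  · simp [LL_apply]

lemma slice_t {f : ℝ × ℝ → ℝ} {x y t r : ℝ} (h : HasFDerivAt f (LL x y) (t, r)) :
    HasDerivAt (fun s => f (s, r)) x t := by
  have h2 : HasDerivAt (fun s : ℝ => (s, r)) ((1:ℝ), (0:ℝ)) t := (hasDerivAt_id t).prodMk (hasDerivAt_const t r)
  have := h.comp_hasDerivAt t h2
  rw [show LL x y ((1:ℝ), (0:ℝ)) = x by simp [LL_apply]] at this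
  exact this

lemma slice_r {f : ℝ × ℝ → ℝ} {x y t r : ℝ} (h : HasFDerivAt f (LL x y) (t, r)) :
    HasDerivAt (fun s => f (t, s)) y r := by
  have h2 : HasDerivAt (fun s : ℝ => (t, s)) ((0:ℝ), (1:ℝ)) r := (hasDerivAt_const r t).prodMk (hasDerivAt_id r)
  have := h.comp_hasDerivAt r h2
  rw [show LL x y ((0:ℝ), (1:ℝ)) = y by simp [LL_apply]] at this
  exact this

lemma c2_facts {p : ℕ} {R : ℝ} {u : ℝ → ℝ → ℝ} (h : IsExtSol p 2 R u) :
    ∃ ut ur utt utr urr : ℝ × ℝ → ℝ,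
    (∀ q : ℝ × ℝ, R + |q.1| < q.2 → HasFDerivAt (fun q : ℝ × ℝ => u q.1 q.2) (LL (ut q) (ur q)) q) ∧
    (∀ q : ℝ × ℝ, R + |q.1| < q.2 → HasFDerivAt ut (LL (utt q) (utr q)) q) ∧
    (∀ q : ℝ × ℝ, R + |q.1| < q.2 → HasFDerivAt ur (LL (utr q) (urr q)) q) ∧
    (∀ q : ℝ × ℝ, R + |q.1| < q.2 → utt q - urr q - (3 / q.2) * ur q = |u q.1 q.2| ^ (p-1) * u q.1 q.2) ∧
    (∀ t r, R + |t| < r → dtu u t r = ut (t, r) ∧ deriv (u t) r = ur (t, r)) := by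
  obtain ⟨h1, h2⟩ := h
  set f := fun q : ℝ × ℝ => u q.1 q.2 with hf
  have hS := isOpen_ext R
  have cd : ∀ q : ℝ × ℝ, R + |q.1| < q.2 → ContDiffAt ℝ 2 f q := fun q hq =>
    (h1.contDiffAt (hS.mem_nhds hq))
  have d1 : ∀ q : ℝ × ℝ, R + |q.1| < q.2 → HasFDerivAt f (fderiv ℝ f q) q := fun q hq =>
    ((cd q hq).differentiableAt (by norm_num)).hasFDerivAt
  have d2 : ∀ q : ℝ × ℝ, R + |q.1| < q.2 → HasFDerivAt (fderiv ℝ f) (fderiv ℝ (fderiv ℝ f) q) q := fun q hq =>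
    (((cd q hq).fderiv_right (m := 1) (by norm_num)).differentiableAt (by norm_num)).hasFDerivAt
  have sy : ∀ q : ℝ × ℝ, R + |q.1| < q.2 → ∀ v w, fderiv ℝ (fderiv ℝ f) q v w = fderiv ℝ (fderiv ℝ f) q w v := 
    fun q hq v w => (cd q hq).isSymmSndFDerivAt (by simp) v w
  have d3 : ∀ q : ℝ × ℝ, R + |q.1| < q.2 → ∀ v, HasFDerivAt (fun q => fderiv ℝ f q v) 
      (LL (fderiv ℝ (fderiv ℝ f) q (1,0) v) (fderiv ℝ (fderiv ℝ f) q (0,1) v)) q := by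
    intro q hq v
    have := (d2 q hq).clm_apply (hasFDerivAt_const v q)
    rw [LL_eq (ContinuousLinearMap.comp _ _ + _)] at this
    simpa using this
  have A : ∀ q : ℝ × ℝ, R + |q.1| < q.2 → HasFDerivAt f (LL (fderiv ℝ f q (1,0)) (fderiv ℝ f q (0,1))) q := by
    intro q hq; rw [← LL_eq]; exact d1 q hq
  have e : ∀ t r, R + |t| < r → dtu u t r = fderiv ℝ f (t,r) (1,0) ∧ deriv (u t) r = fderiv ℝ f (t,r) (0,1) := by
    intro t r hr
    exact ⟨(slice_t (A (t,r) hr)).deriv, (slice_r (A (t,r) hr)).deriv⟩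
  refine ⟨fun q => fderiv ℝ f q (1,0), fun q => fderiv ℝ f q (0,1), 
    fun q => fderiv ℝ (fderiv ℝ f) q (1,0) (1,0), fun q => fderiv ℝ (fderiv ℝ f) q (0,1) (1,0), 
    fun q => fderiv ℝ (fderiv ℝ f) q (0,1) (0,1), A, fun q hq => d3 q hq _, ?_, ?_, e⟩
  · intro q hq
    show HasFDerivAt _ (LL (fderiv ℝ (fderiv ℝ f) q (0,1) (1,0)) _) q
    rw [sy q hq]
    exact d3 q hq (0,1)
  · rintro ⟨t, r⟩ hq
    have hq' : R + |t| < r := hq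
    have := h2 t r hq
    have e1 : deriv (fun s => dtu u s r) t = fderiv ℝ (fderiv ℝ f) (t,r) (1,0) (1,0) := by
      have : (fun s => dtu u s r) =ᶠ[nhds t] fun s => fderiv ℝ f (s,r) (1,0) := by
        have : ∀ᶠ s in nhds t, R + |s| < r := 
          (continuous_const.add continuous_abs).continuousAt.eventually_lt continuousAt_const hq'
        filter_upwards [this] with s hs using (e s r hs).1
      rw [this.deriv_eq]
      exact (slice_t (d3 (t,r) hq (1,0))).deriv
    have e2 : deriv (deriv (u t)) r = fderiv ℝ (fderiv ℝ f) (t,r) (0,1) (0,1) := by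
      have : (deriv (u t)) =ᶠ[nhds r] fun s => fderiv ℝ f (t,s) (0,1) := by
        filter_upwards [lt_mem_nhds hq'] with s hs using (e t s hs).2
      rw [this.deriv_eq]
      exact (slice_r (d3 (t,r) hq (0,1))).deriv
    rw [e1, e2, (e t r hq).2] at this
    exact this

lemma en_facts {R K : ℝ} {u : ℝ → ℝ → ℝ} {ut ur : ℝ × ℝ → ℝ} (hR : 0 < R) (hK : 0 < K)
    (cut : ContinuousOn ut {q : ℝ × ℝ | R + |q.1| < q.2})
    (cur : ContinuousOn ur {q : ℝ × ℝ | R + |q.1| < q.2})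
    (he : ∀ t r, R + |t| < r → dtu u t r = ut (t, r) ∧ deriv (u t) r = ur (t, r))
    (hs : supH R u ≤ ENNReal.ofReal K) (t : ℝ) :
    IntegrableOn (fun r => ((ut (t, r))^2 + (ur (t, r))^2) * r^3) (Ioi (R + |t|)) ∧
    ∫ r in Ioi (R + |t|), ((ut (t, r))^2 + (ur (t, r))^2) * r^3 ≤ K^2 := by
  have h1 : eH (R + |t|) (u t) (fun r => dtu u t r) ≤ ENNReal.ofReal K :=
    (le_iSup (fun t : ℝ => eH (R + |t|) (u t) (fun r => dtu u t r)) t).trans hs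
  unfold eH at h1
  have c1 : ContinuousOn (fun r => ut (t, r)) (Ioi (R + |t|)) :=
    cut.comp (by fun_prop) (fun r hr => hr)
  have c2 : ContinuousOn (fun r => ur (t, r)) (Ioi (R + |t|)) :=
    cur.comp (by fun_prop) (fun r hr => hr)
  have h2 : (∫⁻ r in Ioi (R + |t|), ENNReal.ofReal ((deriv (u t) r) ^ 2 * r ^ 3)) +
      ∫⁻ r in Ioi (R + |t|), ENNReal.ofReal ((dtu u t r) ^ 2 * r ^ 3) ≤ ENNReal.ofReal (K^2) := by
    have := ENNReal.rpow_le_rpow h1 (z := 2) (by norm_num)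
    rw [← ENNReal.rpow_mul] at this
    norm_num at this
    rw [ENNReal.ofReal_pow hK.le]
    simpa using this
  have cG : ContinuousOn (fun r => ((ut (t, r))^2 + (ur (t, r))^2) * r^3) (Ioi (R + |t|)) :=
    ((c1.pow 2).add (c2.pow 2)).mul (by fun_prop)
  have mG := cG.aestronglyMeasurable (μ := volume) measurableSet_Ioi
  have nn : ∀ r ∈ Ioi (R + |t|), 0 < r := fun r hr => by
    have : R + |t| < r := hr
    linarith [abs_nonneg t]
  have h3 : ∫⁻ r in Ioi (R + |t|), ENNReal.ofReal (((ut (t, r))^2 + (ur (t, r))^2) * r^3) ≤ ENNReal.ofReal (K^2) := by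
    refine le_trans (le_of_eq ?_) h2
    rw [← lintegral_add_left']
    · apply setLIntegral_congr_fun measurableSet_Ioi
      intro r hr
      have := nn r hr
      simp only []
      rw [← ENNReal.ofReal_add (by positivity) (by positivity), (he t r hr).1, (he t r hr).2]
      congr 1; ring
    · apply ENNReal.measurable_ofReal.comp_aemeasurable
      apply AEMeasurable.mul
      · apply AEMeasurable.pow_const
        exact (measurable_deriv _).aemeasurable
      · fun_prop
  have n0 : 0 ≤ᵐ[volume.restrict (Ioi (R + |t|))] (fun r => ((ut (t, r))^2 + (ur (t, r))^2) * r^3) := by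
    filter_upwards [ae_restrict_mem measurableSet_Ioi] with r hr
    have := nn r hr
    show 0 ≤ _
    positivity
  constructor
  · refine ⟨mG, ?_⟩
    rw [hasFiniteIntegral_iff_ofReal n0]
    exact h3.trans_lt ENNReal.ofReal_lt_top
  · rw [integral_eq_lintegral_of_nonneg_ae n0 mG]
    exact ENNReal.toReal_le_of_le_ofReal (by positivity) h3

lemma sub_int {ρ x Λ : ℝ} {G : ℝ → ℝ} (hI : IntegrableOn G (Ioi ρ)) (hG : ∀ r, ρ < r → 0 ≤ G r)
    (hx : ρ < x) (hΛ : x ≤ Λ) : ∫ r in x..Λ, G r ≤ ∫ r in Ioi ρ, G r := by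
  rw [intervalIntegral.integral_of_le hΛ]
  apply setIntegral_mono_set hI
  · filter_upwards [ae_restrict_mem measurableSet_Ioi] with r hr using hG r hr
  · exact Eventually.of_forall (fun r hr => hx.trans hr.1)

lemma ub_osc {ρ x y K : ℝ} {U U' : ℝ → ℝ} (hρ : 0 ≤ ρ) (hK : 0 < K) (hx : ρ < x) (hxy : x ≤ y)
    (hU : ∀ r, ρ < r → HasDerivAt U (U' r) r) (cU : ContinuousOn U' (Ioi ρ))
    (en : ∫ r in x..y, (U' r)^2 * r^3 ≤ K^2) : |U y - U x| ≤ 3/4 * (K / x) := by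
  have hx0 : 0 < x := by linarith
  have hsub : Icc x y ⊆ Ioi ρ := fun r hr => lt_of_lt_of_le hx hr.1
  have cI : ContinuousOn U' (Icc x y) := cU.mono hsub
  have c3 : ContinuousOn (fun r : ℝ => 1/r^3) (Icc x y) := by
    apply ContinuousOn.div (by fun_prop) (by fun_prop)
    intro r hr; have := lt_of_lt_of_le hx0 hr.1; positivity
  rw [← ftc_cont U' U x y (by rw [uIcc_of_le hxy]; exact fun r hr => hU r (hsub hr)) (by rw [uIcc_of_le hxy]; exact cI)]
  have i1 : IntervalIntegrable (fun r => (U' r)^2 * r^3) volume x y := by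
    apply ContinuousOn.intervalIntegrable; rw [uIcc_of_le hxy]; fun_prop
  have i2 : IntervalIntegrable (fun r : ℝ => 1 / r^3) volume x y := by
    apply ContinuousOn.intervalIntegrable; rw [uIcc_of_le hxy]; fun_prop
  have key := abs_int_le hxy (f := U') (g := fun r => (1/(2*K*x)) * ((U' r)^2 * r^3) + (K*x/2) * (1/r^3))
    (by
      intro r hr
      have hr0 : 0 < r := lt_trans hx0 hr.1
      have hs : 0 ≤ (|U' r| * r^3 - K * x)^2 / (2*K*x*r^3) := by positivity
      have e : (|U' r| * r^3 - K * x)^2 / (2*K*x*r^3) = (1/(2*K*x)) * ((|U' r|)^2 * r^3) + (K*x/2) * (1/r^3) - |U' r| := by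
        field_simp; ring
      rw [e, sq_abs] at hs
      linarith)
    ((i1.const_mul _).add (i2.const_mul _))
  rw [intervalIntegral.integral_add (i1.const_mul _) (i2.const_mul _), intervalIntegral.integral_const_mul,
    intervalIntegral.integral_const_mul] at key
  have e3 : ∫ r in x..y, 1/r^3 ≤ 1/(2*x^2) := by
    rw [ftc_cont (fun r => 1/r^3) (fun r => -1/(2*r^2)) x y _ (by rw [uIcc_of_le hxy]; exact c3)]
    · have : 0 < y := by linarith
      have : 0 ≤ 1/(2*y^2) := by positivity
      have e1 : -1/(2*y^2) = -(1/(2*y^2)) := by ring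
      have e2 : -1/(2*x^2) = -(1/(2*x^2)) := by ring
      linarith
    · rw [uIcc_of_le hxy]
      intro r hr
      have hr0 : 0 < r := lt_of_lt_of_le hx0 hr.1
      have := (hasDerivAt_const r (-1:ℝ)).div (((hasDerivAt_id r).pow 2).const_mul 2) (by simp; positivity)
      have e4 : (0 * (2 * (id ^ 2) r) - -1 * (2 * (((2:ℕ):ℝ) * id r ^ (2 - 1) * 1))) / (2 * (id ^ 2) r) ^ 2 = 1/r^3 := by
        simp
        field_simp
      rw [e4] at this
      exact this
  calc _ ≤ _ := key
    _ ≤ (1/(2*K*x)) * K^2 + (K*x/2) * (1/(2*x^2)) := by gcongr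
    _ = _ := by field_simp; norm_num

lemma good_exists {p : ℕ} {R K : ℝ} {u : ℝ → ℝ → ℝ} (hR : 0 < R) (hK : 0 < K) (h : IsExtSol p 2 R u)
    (hs : supH R u ≤ ENNReal.ofReal K) (hL : eLL 3 6 R u ≤ ENNReal.ofReal K) (hv : ExtEnergyVanishes R u) :
    ∃ ut ur utt utr urr, Good p R K u ut ur utt utr urr := by
  obtain ⟨ut, ur, utt, utr, urr, h1, h2, h3, h4, he⟩ := c2_facts h
  have cut : ContinuousOn ut {q : ℝ × ℝ | R + |q.1| < q.2} := fun q hq => (h2 q hq).continuousAt.continuousWithinAt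
  have cur : ContinuousOn ur {q : ℝ × ℝ | R + |q.1| < q.2} := fun q hq => (h3 q hq).continuousAt.continuousWithinAt
  have cu : ContinuousOn (fun q : ℝ × ℝ => u q.1 q.2) {q : ℝ × ℝ | R + |q.1| < q.2} :=
    fun q hq => (h1 q hq).continuousAt.continuousWithinAt
  have ef := en_facts hR hK cut cur he hs
  have pos : ∀ t r, R + |t| < r → 0 < r := fun t r hr => by linarith [abs_nonneg t]
  have nG : ∀ t r, R + |t| < r → 0 ≤ ((ut (t, r))^2 + (ur (t, r))^2) * r^3 := fun t r hr => by
    have := pos t r hr; positivity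
  have en : ∀ t x Λ, R + |t| < x → x ≤ Λ → ∫ r in x..Λ, ((ut (t, r))^2 + (ur (t, r))^2) * r^3 ≤ K^2 :=
    fun t x Λ hx hΛ => (sub_int (ef t).1 (nG t) hx hΛ).trans (ef t).2
  have eqI : (fun t : ℝ => ∫ r in Ioi (R + |t|), ((dtu u t r) ^ 2 + (deriv (u t) r) ^ 2) * r ^ 3) =
      fun t => ∫ r in Ioi (R + |t|), ((ut (t, r))^2 + (ur (t, r))^2) * r^3 := by
    ext t
    apply setIntegral_congr_fun measurableSet_Ioi
    intro r hr
    simp only [(he t r hr).1, (he t r hr).2]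
  refine ⟨ut, ur, utt, utr, urr, h1, h2, h3, h4, en, ?_, ?_⟩
  · intro ε hε
    obtain ⟨v1, v2⟩ := hv
    rw [eqI] at v1 v2
    obtain ⟨T1, hT1⟩ := eventually_atTop.1 (v1.eventually (gt_mem_nhds hε))
    obtain ⟨T2, hT2⟩ := eventually_atBot.1 (v2.eventually (gt_mem_nhds hε))
    refine ⟨max T1 (-T2), fun t ht x Λ hx hΛ => (sub_int (ef t).1 (nG t) hx hΛ).trans ?_⟩
    rcases le_total 0 t with h0 | h0
    · rw [abs_of_nonneg h0] at ht
      exact (hT1 t ((le_max_left _ _).trans ht)).le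
    · rw [abs_of_nonpos h0] at ht
      exact (hT2 t (by linarith [(le_max_right T1 (-T2)).trans ht])).le
  · intro t r hr
    by_contra hcon
    push Not at hcon
    have hr0 := pos t r hr
    have inf : ∀ s, R + |s| < r → K / r < |u s r| →
        ∫⁻ x in Ioi (R + |s|), ENNReal.ofReal (|u s x| ^ (6:ℝ) * x ^ 3) = ⊤ := by
      intro s hsr hsu
      set δ := |u s r| - K/r with hδ
      have hδ0 : 0 < δ := by linarith
      have lb : ∀ y ∈ Ioi r, δ ≤ |u s y| := by
        intro y hy
        have hy' : r < y := hy
        have c2 : ContinuousOn (fun r => ur (s, r)) (Ioi (R + |s|)) :=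
          cur.comp (by fun_prop) (fun r hr => hr)
        have c1 : ContinuousOn (fun r => ut (s, r)) (Ioi (R + |s|)) :=
          cut.comp (by fun_prop) (fun r hr => hr)
        have hsub : Icc r y ⊆ Ioi (R + |s|) := fun z hz => lt_of_lt_of_le hsr hz.1
        have c1' := c1.mono hsub
        have c2' := c2.mono hsub
        have := ub_osc (ρ := R + |s|) (x := r) (y := y) (K := K) (U := u s) (U' := fun r => ur (s, r))
          (by positivity) hK hsr hy'.le (fun z hz => slice_r (h1 (s, z) hz)) c2 (by
            refine le_trans ?_ (en s r y hsr hy'.le)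
            apply intervalIntegral.integral_mono_on hy'.le
            · apply ContinuousOn.intervalIntegrable; rw [uIcc_of_le hy'.le]; exact (c2'.pow 2).mul (by fun_prop)
            · apply ContinuousOn.intervalIntegrable; rw [uIcc_of_le hy'.le]; exact ((c1'.pow 2).add (c2'.pow 2)).mul (by fun_prop)
            · intro z hz
              have : 0 < z := lt_of_lt_of_le hr0 hz.1
              gcongr
              nlinarith [sq_nonneg (ut (s, z))])
        have kp : 0 < K / r := by positivity
        have := abs_sub_abs_le_abs_sub (u s r) (u s y)
        rw [abs_sub_comm] at this
        linarith
      rw [eq_top_iff]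
      calc ⊤ = ∫⁻ x in Ioi r, ENNReal.ofReal (δ ^ (6:ℝ) * r ^ 3) := by
            rw [setLIntegral_const, Real.volume_Ioi, ENNReal.mul_top]
            simp only [ne_eq, ENNReal.ofReal_eq_zero, not_le]
            positivity
        _ ≤ ∫⁻ x in Ioi r, ENNReal.ofReal (|u s x| ^ (6:ℝ) * x ^ 3) := by
            apply setLIntegral_mono' measurableSet_Ioi
            intro x hx
            have hx' : r < x := hx
            have := lb x hx
            gcongr
        _ ≤ _ := lintegral_mono_set (Ioi_subset_Ioi hsr.le)
    have nb : ∀ᶠ s in nhds t, R + |s| < r ∧ K / r < |u s r| := by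
      apply Filter.Eventually.and
      · exact (continuous_const.add continuous_abs).continuousAt.eventually_lt continuousAt_const hr
      · have : ContinuousAt (fun s => u s r) t := (slice_t (h1 (t, r) hr)).continuousAt
        exact (this.abs).eventually (lt_mem_nhds hcon)
    obtain ⟨V, hV, hVo, htV⟩ := mem_nhds_iff.1 nb
    have top : (∫⁻ t : ℝ, (∫⁻ r in Ioi (R + |t|), ENNReal.ofReal (|u t r| ^ (6:ℝ) * r ^ 3)) ^ ((3:ℝ) / 6)) = ⊤ := by
      rw [eq_top_iff]
      calc ⊤ = ∫⁻ s in V, ⊤ := by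
            rw [setLIntegral_const, ENNReal.top_mul]
            exact (hVo.measure_pos volume ⟨t, htV⟩).ne'
        _ = ∫⁻ s in V, (∫⁻ r in Ioi (R + |s|), ENNReal.ofReal (|u s r| ^ (6:ℝ) * r ^ 3)) ^ ((3:ℝ) / 6) := by
            apply setLIntegral_congr_fun hVo.measurableSet
            intro s hsV
            simp only []
            rw [inf s (hV hsV).1 (hV hsV).2, ENNReal.top_rpow_of_pos (by norm_num)]
        _ ≤ _ := setLIntegral_le_lintegral _ _
    unfold eLL at hL
    rw [top, ENNReal.top_rpow_of_pos (by norm_num)] at hL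
    exact absurd hL (by simp)

lemma comp_pm {f : ℝ × ℝ → ℝ} {x y t0 σ : ℝ} {q : ℝ × ℝ} (h : HasFDerivAt f (LL x y) (t0 + σ * q.1, q.2)) :
    HasFDerivAt (fun q : ℝ × ℝ => f (t0 + σ * q.1, q.2)) (LL (σ * x) y) q := by
  have h2 : HasFDerivAt (fun q : ℝ × ℝ => (t0 + σ * q.1, q.2))
      ((σ • ContinuousLinearMap.fst ℝ ℝ ℝ).prod (ContinuousLinearMap.snd ℝ ℝ ℝ)) q := by
    apply HasFDerivAt.prodMk
    · exact (hasFDerivAt_fst.const_mul σ).const_add t0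
    · exact hasFDerivAt_snd
  have := HasFDerivAt.comp q h h2
  have e : (LL x y).comp ((σ • ContinuousLinearMap.fst ℝ ℝ ℝ).prod (ContinuousLinearMap.snd ℝ ℝ ℝ)) = LL (σ * x) y := by
    rw [LL_eq (ContinuousLinearMap.comp _ _)]
    simp [LL_apply, mul_comm]
  rw [e] at this
  exact this

lemma LL_add (x y z w : ℝ) : LL x y + LL z w = LL (x + z) (y + w) := by
  rw [LL_eq (LL x y + LL z w)]; simp [LL_apply]
lemma LL_sub (x y z w : ℝ) : LL x y - LL z w = LL (x - z) (y - w) := by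
  rw [LL_eq (LL x y - LL z w)]; simp [LL_apply]
lemma LL_smul (c x y : ℝ) : c • LL x y = LL (c * x) (c * y) := by
  rw [LL_eq (c • LL x y)]; simp [LL_apply]

lemma P_est {p : ℕ} {R K : ℝ} {u : ℝ → ℝ → ℝ} {ut ur utt utr urr : ℝ × ℝ → ℝ} (hp : 1 ≤ p) (hR : 0 < R) (hK : 0 < K)
    (hG : Good p R K u ut ur utt utr urr) {t0 ρ Φ : ℝ} (hρ : R + |t0| ≤ ρ) (hΦ : 0 ≤ Φ)
    (hb : ∀ t r, ρ + |t - t0| < r → |u t r|^p ≤ Φ / r^5) (r1 r2 : ℝ) (h1 : ρ < r1) (h12 : r1 ≤ r2)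
    (h2 : r2 ≤ 2 * r1) : |r1^2 * u t0 r1 - r2^2 * u t0 r2| ≤ 100 * Φ / r1 := by
  have hρ0 : 0 ≤ ρ := by linarith [abs_nonneg t0]
  have rp : ∀ q : ℝ × ℝ, ρ + |q.1| < q.2 → R + |(t0 + 1 * q.1, q.2).1| < (t0 + 1 * q.1, q.2).2 := by
    intro q hq
    have := abs_add_le t0 (1 * q.1)
    rw [one_mul] at this
    simp only [one_mul]; linarith
  have rm : ∀ q : ℝ × ℝ, ρ + |q.1| < q.2 → R + |(t0 + (-1) * q.1, q.2).1| < (t0 + (-1) * q.1, q.2).2 := by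
    intro q hq
    have := abs_add_le t0 ((-1) * q.1)
    rw [neg_one_mul, abs_neg] at this
    simp only [neg_one_mul]; linarith
  have cu : ∀ σ : ℝ, (∀ q : ℝ × ℝ, ρ + |q.1| < q.2 → R + |(t0 + σ * q.1, q.2).1| < (t0 + σ * q.1, q.2).2) →
      ContinuousOn (fun q : ℝ × ℝ => |u (t0 + σ * q.1) q.2|^(p-1) * u (t0 + σ * q.1) q.2) {q | ρ + |q.1| < q.2} := by
    intro σ h
    have : ContinuousOn (fun q : ℝ × ℝ => u (t0 + σ * q.1) q.2) {q | ρ + |q.1| < q.2} := fun q hq =>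
      (comp_pm (f := fun q : ℝ × ℝ => u q.1 q.2) (hG.hu _ (h q hq))).continuousAt.continuousWithinAt
    exact (this.abs.pow _).mul this
  set a := fun q : ℝ × ℝ => (1/2 : ℝ) * (ut (t0 + 1 * q.1, q.2) - ut (t0 + (-1) * q.1, q.2)) with ha
  set b := fun q : ℝ × ℝ => (1/2 : ℝ) * (ur (t0 + 1 * q.1, q.2) + ur (t0 + (-1) * q.1, q.2)) with hbb
  set F := fun q : ℝ × ℝ => (1/2 : ℝ) * (|u (t0 + 1 * q.1) q.2|^(p-1) * u (t0 + 1 * q.1) q.2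
    + |u (t0 + (-1) * q.1) q.2|^(p-1) * u (t0 + (-1) * q.1) q.2) with hF
  have hS : Sys ρ a b F (fun q => (1/2 : ℝ) * (utt (t0 + 1 * q.1, q.2) + utt (t0 + (-1) * q.1, q.2)))
      (fun q => (1/2 : ℝ) * (utr (t0 + 1 * q.1, q.2) - utr (t0 + (-1) * q.1, q.2)))
      (fun q => (1/2 : ℝ) * (urr (t0 + 1 * q.1, q.2) + urr (t0 + (-1) * q.1, q.2))) := by
    constructor
    · intro q hq
      have := ((comp_pm (hG.hut _ (rp q hq))).sub (comp_pm (hG.hut _ (rm q hq)))).const_mul (1/2:ℝ)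
      rw [LL_sub, LL_smul, one_mul (utt _), neg_one_mul (utt _), sub_neg_eq_add] at this
      exact this
    · intro q hq
      have := ((comp_pm (hG.hur _ (rp q hq))).add (comp_pm (hG.hur _ (rm q hq)))).const_mul (1/2:ℝ)
      rw [LL_add, LL_smul, one_mul (utr _), neg_one_mul (utr _), ← sub_eq_add_neg] at this
      exact this
    · intro q hq
      have e1 := hG.eq _ (rp q hq)
      have e2 := hG.eq _ (rm q hq)
      simp only [hbb, hF]
      simp only [] at e1 e2
      linear_combination (1/2)*e1 + (1/2)*e2
    · exact ((cu 1 rp).add (cu (-1) rm)).const_mul _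
  have cs : ∀ t x Λ, R + |t| < x → x ≤ Λ →
      IntervalIntegrable (fun r => ((ut (t, r))^2 + (ur (t, r))^2) * r^3) volume x Λ := by
    intro t x Λ hx hΛ
    apply ContinuousOn.intervalIntegrable
    rw [uIcc_of_le hΛ]
    have c1 : ContinuousOn (fun r => ut (t, r)) (Icc x Λ) := fun r hr =>
      (slice_r (hG.hut (t, r) (lt_of_lt_of_le hx hr.1))).continuousAt.continuousWithinAt
    have c2 : ContinuousOn (fun r => ur (t, r)) (Icc x Λ) := fun r hr =>
      (slice_r (hG.hur (t, r) (lt_of_lt_of_le hx hr.1))).continuousAt.continuousWithinAt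
    exact ((c1.pow 2).add (c2.pow 2)).mul (by fun_prop)
  have avg : ∀ t x Λ e, 0 ≤ t → ρ + t < x → x ≤ Λ →
      (∫ r in x..Λ, ((ut (t0 + 1 * t, r))^2 + (ur (t0 + 1 * t, r))^2) * r^3) ≤ e →
      (∫ r in x..Λ, ((ut (t0 + (-1) * t, r))^2 + (ur (t0 + (-1) * t, r))^2) * r^3) ≤ e →
      ∫ r in x..Λ, ((a (t, r))^2 + (b (t, r))^2) * r^3 ≤ e := by
    intro t x Λ e ht hx hΛ e1 e2
    have hq : ρ + |((t, x) : ℝ × ℝ).1| < ((t, x) : ℝ × ℝ).2 := by simpa [abs_of_nonneg ht] using hx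
    have i1 := cs (t0 + 1 * t) x Λ (rp (t, x) hq) hΛ
    have i2 := cs (t0 + (-1) * t) x Λ (rm (t, x) hq) hΛ
    have : ∫ r in x..Λ, ((a (t, r))^2 + (b (t, r))^2) * r^3 ≤ 
        ∫ r in x..Λ, ((1/2:ℝ) * (((ut (t0 + 1 * t, r))^2 + (ur (t0 + 1 * t, r))^2) * r^3)
          + (1/2:ℝ) * (((ut (t0 + (-1) * t, r))^2 + (ur (t0 + (-1) * t, r))^2) * r^3)) := by
      apply intervalIntegral.integral_mono_on hΛ
      · apply ContinuousOn.intervalIntegrable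
        rw [uIcc_of_le hΛ]
        have hm : ∀ r ∈ Icc x Λ, ρ + |((t, r) : ℝ × ℝ).1| < ((t, r) : ℝ × ℝ).2 := fun r hr => lt_of_lt_of_le hq hr.1
        have c1 : ContinuousOn (fun r => a (t, r)) (Icc x Λ) := fun r hr =>
          (slice_r (hS.ha (t, r) (hm r hr))).continuousAt.continuousWithinAt
        have c2 : ContinuousOn (fun r => b (t, r)) (Icc x Λ) := fun r hr =>
          (slice_r (hS.hb (t, r) (hm r hr))).continuousAt.continuousWithinAt
        exact ((c1.pow 2).add (c2.pow 2)).mul (by fun_prop)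
      · exact (i1.const_mul _).add (i2.const_mul _)
      · intro r hr
        have hr0 : 0 < r := by linarith [hr.1]
        have h3 : 0 ≤ r^3 := by positivity
        simp only [ha, hbb]
        rw [← mul_assoc, ← mul_assoc, ← add_mul]
        apply mul_le_mul_of_nonneg_right _ h3
        nlinarith [sq_nonneg (ut (t0 + 1 * t, r) + ut (t0 + (-1) * t, r)), sq_nonneg (ur (t0 + 1 * t, r) - ur (t0 + (-1) * t, r))]
    rw [intervalIntegral.integral_add (i1.const_mul _) (i2.const_mul _), intervalIntegral.integral_const_mul,
      intervalIntegral.integral_const_mul] at this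
    linarith
  have hH : LinHyp ρ (K^2) K Φ a b F (u t0) := by
    constructor
    · intro q hq
      have b1 := hb (t0 + 1 * q.1) q.2 (by simpa using hq)
      have b2 := hb (t0 + (-1) * q.1) q.2 (by simpa using hq)
      have ee : ∀ x : ℝ, |(|x|^(p-1) * x)| = |x|^p := by
        intro x
        rw [abs_mul, abs_pow, abs_abs, ← pow_succ, Nat.sub_add_cancel hp]
      rw [← ee] at b1 b2
      simp only [hF]
      rw [abs_mul, abs_of_pos (by norm_num : (0:ℝ) < 1/2)]
      have := abs_add_le (|u (t0 + 1 * q.1) q.2|^(p-1) * u (t0 + 1 * q.1) q.2) (|u (t0 + (-1) * q.1) q.2|^(p-1) * u (t0 + (-1) * q.1) q.2)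
      linarith
    · intro r hr; simp [ha]
    · intro r hr
      have : HasDerivAt (u t0) (ur (t0, r)) r := slice_r (f := fun q : ℝ × ℝ => u q.1 q.2) (hG.hu (t0, r) (lt_of_le_of_lt hρ hr))
      have e : b (0, r) = ur (t0, r) := by simp [hbb]; ring
      rw [e]; exact this
    · intro r hr; exact hG.ub t0 r (lt_of_le_of_lt hρ hr)
    · intro t x Λ ht hx hΛ
      have hq : ρ + |((t, x) : ℝ × ℝ).1| < ((t, x) : ℝ × ℝ).2 := by simpa [abs_of_nonneg ht] using hx
      exact avg t x Λ _ ht hx hΛ (hG.en _ x Λ (rp (t, x) hq) hΛ) (hG.en _ x Λ (rm (t, x) hq) hΛ)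
    · intro ε hε
      obtain ⟨T0, hT0⟩ := hG.van ε hε
      refine ⟨|T0| + |t0| + 1, by positivity, fun x Λ hx hΛ => ?_⟩
      have hT : 0 ≤ |T0| + |t0| + 1 := by positivity
      have hq : ρ + |((|T0| + |t0| + 1, x) : ℝ × ℝ).1| < ((|T0| + |t0| + 1, x) : ℝ × ℝ).2 := by
        simpa [abs_of_nonneg hT] using hx
      have l1 := le_abs_self T0
      have l2 := neg_abs_le t0
      have l3 := le_abs_self t0
      refine avg _ x Λ _ hT hx hΛ (hT0 _ ?_ x Λ (rp _ hq) hΛ) (hT0 _ ?_ x Λ (rm _ hq) hΛ)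
      · exact le_trans (by linarith) (le_abs_self _)
      · exact le_trans (by linarith) (neg_le_abs _)
  exact lin_est hρ0 (by positivity) hK.le hΦ hS hH r1 r2 h1 h12 h2

lemma dyad {h : ℝ → ℝ} {ρ Φ : ℝ} (hρ : 0 ≤ ρ) (hΦ : 0 ≤ Φ)
    (hd : ∀ r1 r2, ρ < r1 → r1 ≤ r2 → r2 ≤ 2 * r1 → |h r1 - h r2| ≤ 100 * Φ / r1) :
    ∀ r1 r2, ρ < r1 → r1 ≤ r2 → |h r1 - h r2| ≤ 200 * Φ / r1 := by
  have : ∀ n : ℕ, ∀ r1 r2, ρ < r1 → r1 ≤ r2 → r2 ≤ 2^n * r1 → |h r1 - h r2| ≤ 200 * Φ / r1 := by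
    intro n
    induction n with
    | zero =>
      intro r1 r2 h1 h2 h3
      have : r2 = r1 := by simp at h3; linarith
      subst this
      have : 0 < r2 := by linarith
      simp; positivity
    | succ n ih =>
      intro r1 r2 h1 h2 h3
      have h0 : 0 < r1 := by linarith
      rcases le_total r2 (2 * r1) with h4 | h4
      · refine (hd r1 r2 h1 h2 h4).trans ?_
        gcongr; norm_num
      · have e1 := hd r1 (2*r1) h1 (by linarith) le_rfl
        have e2 := ih (2*r1) r2 (by linarith) h4 (by rw [pow_succ] at h3; linarith)
        have e3 : 200 * Φ / (2 * r1) = 100 * Φ / r1 := by field_simp; ring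
        have e4 : 200 * Φ / r1 = 100 * Φ / r1 + 100 * Φ / r1 := by ring
        have := abs_sub_le (h r1) (h (2*r1)) (h r2)
        linarith
  intro r1 r2 h1 h2
  have h0 : 0 < r1 := by linarith
  obtain ⟨n, hn⟩ := pow_unbounded_of_one_lt (r2/r1) (by norm_num : (1:ℝ) < 2)
  exact this n r1 r2 h1 h2 ((div_le_iff₀ h0).1 hn.le)

lemma dyad_lim {h : ℝ → ℝ} {ρ Φ : ℝ} (hρ : 0 ≤ ρ) (hΦ : 0 ≤ Φ)
    (hd : ∀ r1 r2, ρ < r1 → r1 ≤ r2 → r2 ≤ 2 * r1 → |h r1 - h r2| ≤ 100 * Φ / r1) :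
    ∃ ℓ, Tendsto h atTop (nhds ℓ) := by
  have D := dyad hρ hΦ hd
  apply cauchySeq_tendsto_of_complete
  rw [Metric.cauchySeq_iff']
  intro ε hε
  set N := ρ + 1 + 200 * Φ / ε with hN
  have : 0 ≤ 200 * Φ / ε := by positivity
  have hN0 : 0 < N := by linarith
  refine ⟨N, fun r hr => ?_⟩
  have := D N r (by linarith) hr
  rw [dist_comm, Real.dist_eq]
  refine this.trans_lt ?_
  rw [div_lt_iff₀ hN0]
  have : 200 * Φ / ε < N := by linarith
  rw [div_lt_iff₀ hε] at this
  linarith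

lemma dyad_bd {h : ℝ → ℝ} {ρ Φ ℓ : ℝ} (hρ : 0 ≤ ρ) (hΦ : 0 ≤ Φ) (hl : Tendsto h atTop (nhds ℓ))
    (hd : ∀ r1 r2, ρ < r1 → r1 ≤ r2 → r2 ≤ 2 * r1 → |h r1 - h r2| ≤ 100 * Φ / r1) (r : ℝ) (hr : ρ < r) :
    |h r - ℓ| ≤ 200 * Φ / r := by
  have D := dyad hρ hΦ hd
  apply le_of_tendsto ((tendsto_const_nhds.sub hl).abs)
  filter_upwards [eventually_ge_atTop r] with s hs using D r s hr hs

lemma slab {p : ℕ} {R K : ℝ} {u : ℝ → ℝ → ℝ} {ut ur utt utr urr : ℝ × ℝ → ℝ} (hR : 0 < R)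
    (hG : Good p R K u ut ur utt utr urr) {t x Λ μ : ℝ} (hx : R + |t| < x) (hΛ : x ≤ Λ) (hμ : 0 < μ) :
    |∫ r in x..Λ, (u t r - u 0 r) * r| ≤ (μ/2 * K^2 + 1/(2*μ) * Real.log (Λ/x)) * |t| := by
  have hx0 : 0 < x := by linarith [abs_nonneg t]
  set κ : ℝ → ℝ := fun s => max (-|t|) (min s |t|) with hκ
  set τ : ℝ → ℝ := fun r => max x r with hτ
  have cκ : Continuous κ := by fun_prop
  have cτ : Continuous τ := by fun_prop
  have ka : ∀ s, |κ s| ≤ |t| := fun s => by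
    rw [abs_le]
    exact ⟨le_max_left _ _, max_le (by linarith [abs_nonneg t]) (min_le_right _ _)⟩
  have ke : ∀ s ∈ uIcc 0 t, κ s = s ∧ |s| ≤ |t| := by
    intro s hs
    have : |s| ≤ |t| := by
      have := abs_sub_left_of_mem_uIcc hs
      simpa using this
    refine ⟨?_, this⟩
    rw [abs_le] at this
    simp only [hκ]
    rw [min_eq_left this.2, max_eq_right this.1]
  have te : ∀ r ∈ uIcc x Λ, τ r = r := by
    intro r hr
    rw [uIcc_of_le hΛ] at hr
    exact max_eq_right hr.1
  have reg : ∀ s r, R + |κ s| < τ r := fun s r => by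
    have : x ≤ τ r := le_max_left _ _
    linarith [ka s]
  have cont : Continuous (fun q : ℝ × ℝ => ut (κ q.1, τ q.2) * q.2) := by
    apply Continuous.mul _ continuous_snd
    rw [continuous_iff_continuousAt]
    intro q
    exact ContinuousAt.comp (f := fun q : ℝ × ℝ => (κ q.1, τ q.2)) (hG.hut (κ q.1, τ q.2) (reg _ _)).continuousAt 
      (by fun_prop)
  have sw := swap_cont (fun s r => ut (κ s, τ r) * r) 0 t x Λ cont
  have e1 : ∫ r in x..Λ, (u t r - u 0 r) * r = ∫ r in x..Λ, ∫ s in (0:ℝ)..t, ut (κ s, τ r) * r := by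
    apply intervalIntegral.integral_congr
    intro r hr
    simp only []
    rw [intervalIntegral.integral_mul_const]
    congr 1
    symm
    have hrx : x ≤ r := by rw [uIcc_of_le hΛ] at hr; exact hr.1
    apply ftc_cont _ (fun s => u s r)
    · intro s hs
      rw [(ke s hs).1, te r hr]
      exact slice_t (f := fun q : ℝ × ℝ => u q.1 q.2) (hG.hu (s, r) (by 
        have := (ke s hs).2
        show R + |s| < r
        linarith))
    · apply Continuous.continuousOn
      rw [continuous_iff_continuousAt]
      intro s
      exact ContinuousAt.comp (f := fun s : ℝ => (κ s, τ r)) (hG.hut (κ s, τ r) (reg _ _)).continuousAt 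
        (by fun_prop)
  have e2 : |∫ s in (0:ℝ)..t, ∫ r in x..Λ, ut (κ s, τ r) * r| ≤ (μ/2 * K^2 + 1/(2*μ) * Real.log (Λ/x)) * |t - 0| := by
    rw [← Real.norm_eq_abs]
    apply intervalIntegral.norm_integral_le_of_norm_le_const
    intro s hs
    rw [Real.norm_eq_abs]
    have hsr : R + |κ s| < x := by linarith [ka s]
    have c1 : ContinuousOn (fun r => ut (κ s, r)) (Icc x Λ) := fun r hr =>
      (slice_r (hG.hut (κ s, r) (lt_of_lt_of_le hsr hr.1))).continuousAt.continuousWithinAt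
    have c2 : ContinuousOn (fun r => ur (κ s, r)) (Icc x Λ) := fun r hr =>
      (slice_r (hG.hur (κ s, r) (lt_of_lt_of_le hsr hr.1))).continuousAt.continuousWithinAt
    have i1 : IntervalIntegrable (fun r => ((ut (κ s, r))^2 + (ur (κ s, r))^2) * r^3) volume x Λ := by
      apply ContinuousOn.intervalIntegrable; rw [uIcc_of_le hΛ]
      exact ((c1.pow 2).add (c2.pow 2)).mul (by fun_prop)
    have i2 : IntervalIntegrable (fun r : ℝ => 1/r) volume x Λ := by
      apply ContinuousOn.intervalIntegrable; rw [uIcc_of_le hΛ]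
      apply ContinuousOn.div (by fun_prop) (by fun_prop)
      intro r hr; have := lt_of_lt_of_le hx0 hr.1; positivity
    have key := abs_int_le hΛ (f := fun r => ut (κ s, τ r) * r) 
      (g := fun r => (μ/2) * (((ut (κ s, r))^2 + (ur (κ s, r))^2) * r^3) + (1/(2*μ)) * (1/r)) (by
        intro r hr
        have hr0 : 0 < r := lt_trans hx0 hr.1
        rw [te r (by rw [uIcc_of_le hΛ]; exact ⟨hr.1.le, hr.2⟩)]
        have hs : 0 ≤ (μ * (|ut (κ s, r)| * r) * r - 1)^2 / (2*μ*r) := by positivity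
        have e : (μ * (|ut (κ s, r)| * r) * r - 1)^2 / (2*μ*r) = (μ/2) * (|ut (κ s, r)|^2 * r^3) + (1/(2*μ)) * (1/r) - |ut (κ s, r)| * r := by
          field_simp; ring
        rw [e, sq_abs] at hs
        rw [abs_mul, abs_of_pos hr0]
        have : 0 ≤ (μ/2) * ((ur (κ s, r))^2 * r^3) := by positivity
        have e' : (μ/2) * (((ut (κ s, r))^2 + (ur (κ s, r))^2) * r^3) = (μ/2) * (ut (κ s, r)^2 * r^3) + (μ/2) * (ur (κ s, r)^2 * r^3) := by ring
        linarith) ((i1.const_mul _).add (i2.const_mul _))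
    rw [intervalIntegral.integral_add (i1.const_mul _) (i2.const_mul _), intervalIntegral.integral_const_mul,
      intervalIntegral.integral_const_mul, integral_one_div_of_pos hx0 (by linarith)] at key
    have := hG.en (κ s) x Λ hsr hΛ
    refine key.trans ?_
    gcongr
  rw [e1, ← sw]
  simpa using e2

lemma ell_const {p : ℕ} {R K : ℝ} {u : ℝ → ℝ → ℝ} {ut ur utt utr urr : ℝ × ℝ → ℝ} (hR : 0 < R)
    (hG : Good p R K u ut ur utt utr urr) {t ℓ ℓ0 : ℝ} (h1 : Tendsto (fun r => r^2 * u t r) atTop (nhds ℓ))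
    (h0 : Tendsto (fun r => r^2 * u 0 r) atTop (nhds ℓ0)) : ℓ = ℓ0 := by
  by_contra hne
  set δ := |ℓ - ℓ0| with hδ
  have hδ0 : 0 < δ := abs_pos.2 (sub_ne_zero.2 hne)
  have ht : 0 < |t| := by
    rw [abs_pos]
    rintro rfl
    exact hne (tendsto_nhds_unique h1 h0)
  have h2 := h1.sub h0
  have h3 : ∀ᶠ r in atTop, |(r^2 * u t r - r^2 * u 0 r) - (ℓ - ℓ0)| < δ/2 := by
    filter_upwards [Metric.tendsto_nhds.1 h2 (δ/2) (by positivity)] with r hr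
    rwa [Real.dist_eq] at hr
  obtain ⟨x, hx⟩ := eventually_atTop.1 h3
  set y := max x (R + |t| + 1) with hy
  have hyR : R + |t| < y := lt_of_lt_of_le (by linarith) (le_max_right _ _)
  have hy0 : 0 < y := by linarith [abs_nonneg t]
  set L := 4 * t^2 * K^2 / δ^2 + 1 with hL
  have hL0 : 0 < L := by positivity
  set Λ := y * Real.exp L with hΛ
  have hyΛ : y ≤ Λ := by
    have : 1 ≤ Real.exp L := Real.one_le_exp hL0.le
    nlinarith
  have hlog : Real.log (Λ/y) = L := by
    rw [hΛ, mul_div_cancel_left₀ _ hy0.ne', Real.log_exp]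
  have s1 := slab hR hG hyR hyΛ (μ := 2*|t|/δ) (by positivity)
  rw [hlog] at s1
  have cu : ∀ s, |s| ≤ |t| → ContinuousOn (fun r => u s r) (Icc y Λ) := fun s hs r hr =>
    (slice_r (f := fun q : ℝ × ℝ => u q.1 q.2) (hG.hu (s, r) (by
      show R + |s| < r
      linarith [hr.1]))).continuousAt.continuousWithinAt
  have i1 : IntervalIntegrable (fun r => (u t r - u 0 r) * r) volume y Λ := by
    apply ContinuousOn.intervalIntegrable; rw [uIcc_of_le hyΛ]
    exact ((cu t le_rfl).sub (cu 0 (by simp))).mul (by fun_prop)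
  have i2 : IntervalIntegrable (fun r : ℝ => 1/r) volume y Λ := by
    apply ContinuousOn.intervalIntegrable; rw [uIcc_of_le hyΛ]
    apply ContinuousOn.div (by fun_prop) (by fun_prop)
    intro r hr; have := lt_of_lt_of_le hy0 hr.1; positivity
  have key := abs_int_le hyΛ (f := fun r => (u t r - u 0 r) * r - (ℓ - ℓ0) * (1/r)) (g := fun r => (δ/2) * (1/r)) (by
      intro r hr
      have hr0 : 0 < r := lt_trans hy0 hr.1
      have := hx r ((le_max_left _ _).trans hr.1.le)
      have e : (u t r - u 0 r) * r - (ℓ - ℓ0) * (1/r) = ((r^2 * u t r - r^2 * u 0 r) - (ℓ - ℓ0)) * (1/r) := by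
        field_simp
      rw [e, abs_mul, abs_of_pos (by positivity : 0 < 1/r)]
      gcongr) (i2.const_mul _)
  rw [intervalIntegral.integral_sub i1 (i2.const_mul _), intervalIntegral.integral_const_mul,
      intervalIntegral.integral_const_mul, integral_one_div_of_pos hy0 (by linarith), hlog] at key
  have t1 : |(ℓ - ℓ0) * L| = δ * L := by rw [abs_mul, abs_of_pos hL0]
  have t2 := abs_sub_abs_le_abs_sub ((ℓ - ℓ0) * L) (∫ r in y..Λ, (u t r - u 0 r) * r)
  rw [abs_sub_comm, t1] at t2
  have t3 : (2 * |t| / δ / 2 * K ^ 2 + 1 / (2 * (2 * |t| / δ)) * L) * |t| = t^2 * K^2 / δ + δ * L / 4 := by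
    rw [← sq_abs t]; field_simp; ring
  rw [t3] at s1
  have t4 : δ * L = 4 * (t^2 * K^2 / δ) + δ := by
    rw [hL]; field_simp
  linarith

lemma good_main {m : ℕ} {R K A : ℝ} {u : ℝ → ℝ → ℝ} {ut ur utt utr urr : ℝ × ℝ → ℝ} (hR : 0 < R) (hK : 0 < K)
    (hK1 : K ≤ 1) (hA : A = 2 * R + 400 / (R * R^m)) (hA1 : K * A ≤ 1) (hA2 : 800 * (K * A) ≤ R^(2*m+6))
    (hG : Good (m+5) R K u ut ur utt utr urr) (hn : ∃ t r, R + |t| < r ∧ u t r ≠ 0) :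
    ∃ ℓ : ℝ, ℓ ≠ 0 ∧ (∀ t r, R + |t| < r → |r^2 * u t r - ℓ| ≤ |ℓ|/3) ∧
      ∀ t r, R + |t| < r → |r^2 * u t r - ℓ| ≤ 3200 / R^(2*m+4) * r^4 * |u t r|^3 := by
  have hp1 : 1 ≤ m + 5 := by omega
  have regR : ∀ t r, R + |t| < r → R < r := fun t r h => by linarith [abs_nonneg t]
  have sub : ∀ t0 t r ρ : ℝ, R + |t0| ≤ ρ → ρ + |t - t0| < r → R + |t| < r := by
    intro t0 t r ρ h1 h2
    have := abs_add_le t0 (t - t0)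
    rw [add_sub_cancel] at this
    linarith
  -- step 1
  set Φ1 := K^(m+5) / R^m with hΦ1
  have hΦ10 : 0 ≤ Φ1 := by positivity
  have b1 : ∀ t r, R + |t| < r → |u t r|^(m+5) ≤ Φ1 / r^5 := by
    intro t r h
    have hr := regR t r h
    have hr0 : 0 < r := by linarith
    calc |u t r|^(m+5) ≤ (K/r)^(m+5) := by gcongr; exact hG.ub t r h
      _ = K^(m+5) / r^m / r^5 := by rw [div_pow, pow_add r]; field_simp
      _ ≤ _ := by rw [hΦ1]; gcongr
  have d1 : ∀ t r1 r2, R + |t| < r1 → r1 ≤ r2 → r2 ≤ 2 * r1 → |r1^2 * u t r1 - r2^2 * u t r2| ≤ 100 * Φ1 / r1 := 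
    fun t r1 r2 h1 h2 h3 => P_est hp1 hR hK hG (t0 := t) le_rfl hΦ10 
      (fun s r hs => b1 s r (sub t s r _ le_rfl hs)) r1 r2 h1 h2 h3
  have hρ0 : ∀ t : ℝ, 0 ≤ R + |t| := fun t => by positivity
  have lim : ∀ t, ∃ ℓ, Tendsto (fun r => r^2 * u t r) atTop (nhds ℓ) := fun t => dyad_lim (hρ0 t) hΦ10 (d1 t)
  obtain ⟨ℓ, hℓ0⟩ := lim 0
  have hℓ : ∀ t, Tendsto (fun r => r^2 * u t r) atTop (nhds ℓ) := by
    intro t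
    obtain ⟨ℓ', h'⟩ := lim t
    rwa [ell_const hR hG h' hℓ0] at h'
  have f1 : ∀ t r, R + |t| < r → |r^2 * u t r - ℓ| ≤ 200 * Φ1 / R := by
    intro t r h
    refine (dyad_bd (hρ0 t) hΦ10 (hℓ t) (d1 t) r h).trans ?_
    have := regR t r h
    gcongr
  have hℓb : |ℓ| ≤ 2 * R * K + 200 * Φ1 / R := by
    have h2 : R + |(0:ℝ)| < 2 * R := by simp; linarith
    have e1 := f1 0 (2*R) h2
    have e2 := hG.ub 0 (2*R) h2
    have e3 : |(2*R)^2 * u 0 (2*R)| ≤ 2 * R * K := by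
      rw [abs_mul, abs_of_pos (by positivity : 0 < (2*R)^2)]
      calc _ ≤ (2*R)^2 * (K / (2*R)) := by gcongr
        _ = _ := by field_simp
    have := abs_sub_abs_le_abs_sub ℓ ((2*R)^2 * u 0 (2*R))
    rw [abs_sub_comm] at this
    linarith
  have M0 : ∀ t r, R + |t| < r → r^2 * |u t r| ≤ K * A := by
    intro t r h
    have e1 := f1 t r h
    have hr0 : 0 < r := hR.trans (regR t r h)
    have := abs_sub_abs_le_abs_sub (r^2 * u t r) ℓ
    rw [abs_mul, abs_of_pos (by positivity : 0 < r^2)] at this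
    have e2 : Φ1 ≤ K / R^m := by
      rw [hΦ1]; gcongr
      exact pow_le_of_le_one hK.le hK1 (by omega)
    have e3 : 400 * Φ1 / R ≤ K * (400 / (R * R^m)) := by
      calc _ ≤ 400 * (K / R^m) / R := by gcongr
        _ = _ := by field_simp
    have e4 : 400 * Φ1 / R = 200 * Φ1 / R + 200 * Φ1 / R := by ring
    rw [hA, mul_add]
    linarith
  -- step 2
  set S := {z : ℝ | ∃ t r, R + |t| < r ∧ z = r^2 * |u t r|} with hS
  have Sbdd : BddAbove S := ⟨K * A, by rintro z ⟨t, r, h, rfl⟩; exact M0 t r h⟩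
  set M := sSup S with hM
  have leM : ∀ t r, R + |t| < r → r^2 * |u t r| ≤ M := fun t r h => le_csSup Sbdd ⟨t, r, h, rfl⟩
  have Sne : S.Nonempty := ⟨_, 0, 2*R, by simp; linarith, rfl⟩
  have MleA : M ≤ K * A := csSup_le Sne (by rintro z ⟨t, r, h, rfl⟩; exact M0 t r h)
  have M0' : 0 < M := by
    obtain ⟨t, r, h, hu⟩ := hn
    have hr0 : 0 < r := hR.trans (regR t r h)
    have : 0 < |u t r| := abs_pos.2 hu
    exact lt_of_lt_of_le (by positivity) (leM t r h)
  have M1 : M ≤ 1 := MleA.trans hA1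
  have bM : ∀ t r, R + |t| < r → |u t r|^(m+5) ≤ M^(m+5) / (r^5 * r * r^(2*m+4)) := by
    intro t r h
    have hr0 : 0 < r := hR.trans (regR t r h)
    rw [le_div_iff₀ (by positivity)]
    calc _ = (r^2 * |u t r|)^(m+5) := by ring
      _ ≤ _ := by gcongr; exact leM t r h
  have f2 : ∀ t r, R + |t| < r → |r^2 * u t r - ℓ| ≤ M/4 := by
    intro t r h
    set Φ2 := M^(m+5) / (R * R^(2*m+4)) with hΦ2
    have hΦ20 : 0 ≤ Φ2 := by positivity
    have := dyad_bd (hρ0 t) hΦ20 (hℓ t) (fun r1 r2 h1 h2 h3 => P_est hp1 hR hK hG (t0 := t) le_rfl hΦ20 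
      (fun s r hs => by
        have hr := sub t s r _ le_rfl hs
        have hRr := regR _ _ hr
        have hr0 : 0 < r := by linarith
        refine (bM s r hr).trans ?_
        rw [hΦ2, div_div, show r^5 * r * r^(2*m+4) = r * r^(2*m+4) * r^5 by ring]
        gcongr) r1 r2 h1 h2 h3) r h
    have hRr := regR _ _ h
    refine this.trans ?_
    calc 200 * Φ2 / r ≤ 200 * Φ2 / R := by gcongr
      _ = M^(m+5) * (200 / R^(2*m+6)) := by rw [hΦ2]; field_simp; ring
      _ ≤ M * M * (200 / R^(2*m+6)) := by
        gcongr
        calc M^(m+5) ≤ M^2 := pow_le_pow_of_le_one M0'.le M1 (by omega)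
          _ = M * M := by ring
      _ ≤ M * (K * A) * (200 / R^(2*m+6)) := by gcongr
      _ = M / 4 * ((800 * (K * A)) / R^(2*m+6)) := by ring
      _ ≤ M / 4 * 1 := by
        gcongr
        exact (div_le_one (by positivity)).2 hA2
      _ = _ := by ring
  have Mℓ : M ≤ 4/3 * |ℓ| := by
    have : M ≤ |ℓ| + M/4 := by
      apply csSup_le Sne
      rintro z ⟨t, r, h, rfl⟩
      have e1 := f2 t r h
      have hr0 : 0 < r := hR.trans (regR t r h)
      have := abs_sub_abs_le_abs_sub (r^2 * u t r) ℓ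
      rw [abs_mul, abs_of_pos (by positivity : 0 < r^2)] at this
      linarith
    linarith
  have ℓpos : 0 < |ℓ| := by linarith
  have f3 : ∀ t r, R + |t| < r → |r^2 * u t r - ℓ| ≤ |ℓ|/3 := fun t r h => (f2 t r h).trans (by linarith)
  refine ⟨ℓ, abs_pos.1 ℓpos, f3, fun t r h => ?_⟩
  have hRr := regR t r h
  have hr0 : 0 < r := hR.trans hRr
  have lb : M ≤ 2 * (r^2 * |u t r|) := by
    have e1 := f3 t r h
    have := abs_sub_abs_le_abs_sub ℓ (r^2 * u t r)
    rw [abs_sub_comm, abs_mul, abs_of_pos (by positivity : 0 < r^2)] at this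
    linarith
  set ρ := (R + |t| + r)/2 with hρ
  have hρ1 : R + |t| ≤ ρ := by linarith
  have hρ2 : ρ < r := by linarith
  have hρ3 : r/2 ≤ ρ := by linarith [abs_nonneg t]
  have hρp : 0 < ρ := by linarith
  set Φ3 := M^(m+5) / (ρ * R^(2*m+4)) with hΦ3
  have hΦ30 : 0 ≤ Φ3 := by positivity
  have := dyad_bd hρp.le hΦ30 (hℓ t) (fun r1 r2 h1 h2 h3 => P_est hp1 hR hK hG (t0 := t) hρ1 hΦ30 
      (fun s r hs => by
        have hr := sub t s r _ hρ1 hs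
        have hRr := regR _ _ hr
        have hr0 : 0 < r := by linarith
        have hρr : ρ ≤ r := by linarith [abs_nonneg (s - t)]
        refine (bM s r hr).trans ?_
        rw [hΦ3, div_div, show r^5 * r * r^(2*m+4) = r * r^(2*m+4) * r^5 by ring]
        gcongr) r1 r2 h1 h2 h3) r hρ2
  refine this.trans ?_
  have M3 : M^(m+5) ≤ (2 * (r^2 * |u t r|))^3 := by
    calc M^(m+5) ≤ M^3 := pow_le_pow_of_le_one M0'.le M1 (by omega)
      _ ≤ _ := by gcongr
  calc 200 * Φ3 / r ≤ 200 * ((2 * (r^2 * |u t r|))^3 / (r/2 * R^(2*m+4))) / r := by rw [hΦ3]; gcongr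
    _ = _ := by field_simp; ring

/-- small non-radiative exterior solutions that are nowhere eventually
trivial have a constant sign on `{r > R + |t|}` and satisfy
`|r²u(t,r) - ℓ(t)| ≤ C r⁴ |u(t,r)|³` for some `ℓ(t) ≠ 0`. -/
theorem stmt7 (p : ℕ) (hodd : Odd p) (hp5 : 5 ≤ p) (R C₀ : ℝ) (hR : 0 < R) (hC₀ : 0 < C₀) :
    ∃ ε₀ > (0:ℝ), ∃ C > (0:ℝ), ∀ u : ℝ → ℝ → ℝ,
      IsExtSol p 2 R u →
      eH R (u 0) (fun r => dtu u 0 r) ≤ ENNReal.ofReal ε₀ →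
      (∀ ρ : ℝ, R ≤ ρ →
        eLL 2 8 ρ u + eLL 3 6 ρ u + supH ρ u
          ≤ ENNReal.ofReal C₀ * eH ρ (u 0) (fun r => dtu u 0 r)) →
      ExtEnergyVanishes R u →
      (∀ t : ℝ, ∃ r : ℝ, R + |t| < r ∧ u t r ≠ 0) →
      ((∀ t r : ℝ, R + |t| < r → 0 < u t r) ∨ (∀ t r : ℝ, R + |t| < r → u t r < 0)) ∧
      (∀ t : ℝ, ∃ ℓ : ℝ, ℓ ≠ 0 ∧ ∀ r : ℝ, R + |t| < r →
        |r ^ 2 * u t r - ℓ| ≤ C * r ^ 4 * |u t r| ^ 3) := by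
  obtain ⟨m, rfl⟩ : ∃ m, p = m + 5 := ⟨p - 5, by omega⟩
  set A := 2 * R + 400 / (R * R^m) with hA
  have hA0 : 0 < A := by positivity
  set K := min 1 (min (1/A) (R^(2*m+6) / 800 / A)) with hK
  have hK0 : 0 < K := lt_min (by norm_num) (lt_min (by positivity) (by positivity))
  have hK1 : K ≤ 1 := min_le_left _ _
  have hK2 : K * A ≤ 1 := by
    rw [← le_div_iff₀ hA0]
    exact (min_le_right _ _).trans (min_le_left _ _)
  have hK3 : 800 * (K * A) ≤ R^(2*m+6) := by
    have : K * A ≤ R^(2*m+6) / 800 := by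
      rw [← le_div_iff₀ hA0]
      exact (min_le_right _ _).trans (min_le_right _ _)
    linarith
  refine ⟨K / C₀, by positivity, 3200 / R^(2*m+4), by positivity, ?_⟩
  intro u hsol hsm hst hvan hnt
  have hb : eLL 2 8 R u + eLL 3 6 R u + supH R u ≤ ENNReal.ofReal K := by
    refine (hst R le_rfl).trans ?_
    calc _ ≤ ENNReal.ofReal C₀ * ENNReal.ofReal (K / C₀) := by gcongr
      _ = ENNReal.ofReal K := by
        rw [← ENNReal.ofReal_mul hC₀.le]
        congr 1
        field_simp
  have hs : supH R u ≤ ENNReal.ofReal K := le_trans le_add_self hb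
  have hL : eLL 3 6 R u ≤ ENNReal.ofReal K := le_trans (le_trans le_add_self le_self_add) hb
  obtain ⟨ut, ur, utt, utr, urr, hG⟩ := good_exists hR hK0 hsol hs hL hvan
  obtain ⟨ℓ, hℓ, f1, f2⟩ := good_main hR hK0 hK1 hA hK2 hK3 hG ⟨0, hnt 0⟩
  refine ⟨?_, fun t => ⟨ℓ, hℓ, fun r hr => f2 t r hr⟩⟩
  rcases lt_or_gt_of_ne hℓ with h | h
  · right
    intro t r hr
    have e := f1 t r hr
    rw [abs_of_neg h, abs_le] at e
    have : r^2 * u t r < 0 := by linarith [e.2]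
    by_contra hc
    push Not at hc
    have : 0 ≤ r^2 * u t r := by positivity
    linarith
  · left
    intro t r hr
    have e := f1 t r hr
    rw [abs_of_pos h, abs_le] at e
    have h3 : 0 < r^2 * u t r := by linarith [e.1]
    by_contra hc
    push Not at hc
    have : r^2 * u t r ≤ 0 := mul_nonpos_of_nonneg_of_nonpos (by positivity) hc
    linarith
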